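/- arXiv:2106.05821 — 2 statements merged into one kernel-verified Lean document; each statement's English description precedes it below -/
import Mathlib

section
/- (Classical Hanna Neumann conjecture.) For any nontrivial finitely generated subgroups A and B of a free group F, one has rank(A ∩ B) − 1 ≤ (rank(A) − 1) · (rank(B) − 1). -/
/-- The rank of a group `H` (as an element of `ℕ∞`): the minimal cardinality of a finite
generating set of `H`, or `⊤` if `H` is not finitely generated. -/
noncomputable def grank (H : Type*) [Group H] : ℕ∞ :=
  sInf {n : ℕ∞ | ∃ s : Finset H, Subgroup.closure (s : Set H) = ⊤ ∧ n = s.card}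

/-!
Choose a linear order on the edges of the Cayley tree of the free group, invariant under
translations. Call an edge `e` a bridge of a subgroup `A` if from both of its ends one can reach,
along edges smaller than `e`, two distinct vertices of the same `A`-orbit. A bridge of `A ⊓ B` is a
bridge of `A` and of `B`, and since translations act freely on the edges, an `(A ⊓ B)`-orbit of
bridges is determined by the `A`-orbit and the `B`-orbit containing it. So it is enough that `A`
has exactly `rank A - 1` orbits of bridges.

Collapsing the components of the complement of the bridges gives a tree on which `A` acts with
trivial edge stabilizers, and the rank, which is the dimension of `Hom(A, ℚ)`, can be read off this
action once the vertex stabilizers are known to be infinite cyclic. They are nontrivial: if the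
stabilizer of a component is trivial, its boundary is finite, and what the least boundary edge
reaches along smaller edges lies in the component, where it must contain two vertices of one orbit
all the same. They are cyclic: two independent elements have axes along which the edges decrease in
one direction, and far out in these directions the greatest edge between the axes is a bridge.

This is the argument of Mineyev, in the form given to it by Dicks.
-/

namespace HannaNeumann

open MulAction

/-! ### A left-invariant linear order on a free group -/

section Order

open FreeGroup

variable {α : Type*}

/-- The letter `x⁻¹` for a letter `x`, the letters being encoded as in `FreeGroup`. -/
def inverseLetter (a : α × Bool) : α × Bool := (a.1, !a.2)

lemma inverseLetter_involutive : Function.Involutive (inverseLetter (α := α)) := by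
  simp [Function.Involutive, inverseLetter]

lemma invRev_cons_eq (a : α × Bool) (L : List (α × Bool)) :
    invRev (a :: L) = invRev L ++ [inverseLetter a] := by
  simp [invRev, inverseLetter]

lemma eq_inverseLetter_of_fst_eq_of_ne {a b : α × Bool} (hfst : a.1 = b.1) (hne : a ≠ b) :
    a = inverseLetter b := by
  rcases a with ⟨x, _ | _⟩ <;> rcases b with ⟨y, _ | _⟩ <;> simp_all [inverseLetter]

lemma exists_cancellation {A B : List (α × Bool)} (hA : IsReduced A) (hB : IsReduced B) :
    ∃ A' B' C, A = A' ++ C ∧ B = invRev C ++ B' ∧ IsReduced (A' ++ B') := by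
  induction B generalizing A with
  | nil => exact ⟨A, [], [], by simp, by simp, by simpa⟩
  | cons b B ih =>
    by_cases hlast : inverseLetter b ∈ A.getLast?
    · obtain ⟨A₁, rfl⟩ := List.getLast?_eq_some_iff.1 hlast
      obtain ⟨A', B', C, rfl, rfl, hred⟩ :=
        ih (List.IsChain.left_of_append hA) (List.IsChain.tail hB)
      refine ⟨A', B', C ++ [inverseLetter b], by simp, ?_, hred⟩
      simp [invRev_append, invRev_cons_eq, inverseLetter_involutive b]
    · refine ⟨A, b :: B, [], by simp, by simp, List.isChain_append.2 ⟨hA, hB, ?_⟩⟩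
      rintro a ha b' hb' hfst
      obtain rfl : b = b' := by simpa using hb'
      by_contra hne
      exact hlast (eq_inverseLetter_of_fst_eq_of_ne hfst (fun h => hne (congrArg Prod.snd h)) ▸ ha)

lemma exists_toWord_mul [DecidableEq α] (g h : FreeGroup α) :
    ∃ A B C, g.toWord = A ++ C ∧ h.toWord = invRev C ++ B ∧ (g * h).toWord = A ++ B := by
  obtain ⟨A, B, C, hg, hh, hred⟩ :=
    exists_cancellation (isReduced_toWord (x := g)) (isReduced_toWord (x := h))
  refine ⟨A, B, C, hg, hh, ?_⟩
  rw [← hred.reduce_eq, ← toWord_mk, ← mk_toWord (x := g), ← mk_toWord (x := h), hg, hh,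
    ← mul_mk, ← mul_mk, ← mul_mk, ← inv_mk, mul_assoc, mul_inv_cancel_left]

/-- The comparison of two elements, as a sign. -/
def orderSign {β : Type*} [LinearOrder β] (a b : β) : ℤ :=
  if a < b then 1 else if a = b then 0 else -1

section OrderSign

variable {β : Type*} [LinearOrder β] (a b c : β)

lemma orderSign_swap : orderSign b a = -orderSign a b := by
  grind [orderSign]

lemma abs_orderSign_le : |orderSign a b| ≤ 1 := by
  unfold orderSign; split_ifs <;> simp

lemma abs_orderSign_cycle_le :
    |orderSign a b + orderSign b c - orderSign a c| ≤ 1 := by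
  grind [orderSign]

variable {a b} in
lemma odd_orderSign (h : a ≠ b) : Odd (orderSign a b) := by
  unfold orderSign; split_ifs <;> simp_all

end OrderSign

/-- The exponent of a letter. -/
def exponentSign (a : α × Bool) : ℤ := if a.2 then 1 else -1

lemma odd_exponentSign (a : α × Bool) : Odd (exponentSign a) := by
  unfold exponentSign; split_ifs <;> simp

lemma exponentSign_inverseLetter (a : α × Bool) :
    exponentSign (inverseLetter a) = -exponentSign a := by
  rcases a with ⟨a, _ | _⟩ <;> simp [exponentSign, inverseLetter]

variable [LinearOrder α]

/-- The sign of the turn that a path in the Cayley tree makes between two words: the comparison,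
among the directions at the turning vertex, of the one it comes from with the one it leaves by. -/
def turn (A B : List (α × Bool)) : ℤ :=
  match A.getLast?, B.head? with
  | some a, some b => orderSign (toLex (inverseLetter a)) (toLex b)
  | _, _ => 0

/-- The sum of all exponents and all turns of a word. On reduced words it is a quasimorphism, whose
sign will order the free group. -/
def weight : List (α × Bool) → ℤ
  | [] => 0
  | a :: L => exponentSign a + turn [a] L + weight L

lemma weight_cons (a : α × Bool) (L : List (α × Bool)) :
    weight (a :: L) = exponentSign a + turn [a] L + weight L := rfl

lemma weight_append (A B : List (α × Bool)) :
    weight (A ++ B) = weight A + turn A B + weight B := by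
  induction A with
  | nil => simp [weight, turn]
  | cons a A ih =>
    cases A with
    | nil => simp [weight, turn]
    | cons a' A =>
      have hlast : turn (a :: a' :: A) B = turn (a' :: A) B := by simp [turn]
      have hhead : turn [a] (a' :: A ++ B) = turn [a] (a' :: A) := by simp [turn]
      rw [List.cons_append, weight, ih, weight_cons a (a' :: A), hlast, hhead]
      ring

lemma turn_invRev (A B : List (α × Bool)) : turn (invRev B) (invRev A) = -turn A B := by
  have hlast : (invRev B).getLast? = B.head?.map inverseLetter := by
    cases B <;> simp [invRev_cons_eq]
  have hhead : (invRev A).head? = A.getLast?.map inverseLetter := by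
    simp [invRev, ← inverseLetter.eq_def]
  unfold turn
  rw [hlast, hhead]
  rcases A.getLast? with _ | a <;> rcases B.head? with _ | b <;>
    simp [inverseLetter_involutive _, ← orderSign_swap]

lemma weight_invRev (L : List (α × Bool)) : weight (invRev L) = -weight L := by
  induction L with
  | nil => simp [weight]
  | cons a L ih =>
    have hturn : turn (invRev L) [inverseLetter a] = -turn [a] L := turn_invRev [a] L
    have hsingle : weight [inverseLetter a] = -exponentSign a := by
      simp [weight, turn, exponentSign_inverseLetter]
    rw [invRev_cons_eq, weight_append, ih, hturn, hsingle, weight_cons]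
    ring

lemma odd_weight {L : List (α × Bool)} (h : IsReduced L) (hL : L ≠ []) : Odd (weight L) := by
  induction L with
  | nil => contradiction
  | cons a L ih =>
    cases L with
    | nil => simpa [weight, turn] using odd_exponentSign a
    | cons b L =>
      have hab : inverseLetter a ≠ b := by
        rintro rfl
        simpa [inverseLetter] using (List.isChain_cons_cons.1 h).1
      have hturn : Odd (turn [a] (b :: L)) := odd_orderSign (toLex.injective.ne hab)
      exact ((odd_exponentSign a).add_odd hturn).add_odd
        (ih (List.IsChain.tail h) (List.cons_ne_nil b L))

-- The word `A ++ B` replaces the turns at the two ends of the cancelled piece by a single one.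
lemma weight_toWord_mul_ge (g h : FreeGroup α) :
    weight g.toWord + weight h.toWord - 1 ≤ weight (g * h).toWord := by
  obtain ⟨A, B, C, hg, hh, hgh⟩ := exists_toWord_mul g h
  have hlast : (invRev C).getLast? = C.head?.map inverseLetter := by
    cases C <;> simp [invRev_cons_eq]
  have hturns : |turn A C + turn (invRev C) B - turn A B| ≤ 1 := by
    unfold turn
    rw [hlast]
    rcases A.getLast? with _ | a <;> rcases C.head? with _ | c <;> rcases B.head? with _ | b <;>
      simp [inverseLetter_involutive _, abs_orderSign_le, abs_orderSign_cycle_le]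
  rw [hgh, hg, hh, weight_append, weight_append, weight_append, weight_invRev]
  linarith [le_of_abs_le hturns]

end Order

lemma exists_leftInvariant_order (α : Type*) :
    ∃ o : LinearOrder (FreeGroup α), ∀ a b c : FreeGroup α, o.lt b c → o.lt (a * b) (a * c) := by
  classical
  let : LinearOrder α := linearOrderOfSTO WellOrderingRel
  let pos (g : FreeGroup α) : Prop := 0 < weight g.toWord
  have not_pos_one : ¬ pos 1 := by simp [pos, weight]
  have pos_mul (g h) (hg : pos g) (hh : pos h) : pos (g * h) := by
    have := weight_toWord_mul_ge g h
    simp only [pos] at *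
    lia
  have pos_or_pos_inv (g) (hg : g ≠ 1) : pos g ∨ pos g⁻¹ := by
    have hodd := odd_weight (FreeGroup.isReduced_toWord (x := g)) (by simpa using hg)
    simp only [pos, FreeGroup.toWord_inv, weight_invRev]
    grind
  let r (g h : FreeGroup α) : Prop := pos (g⁻¹ * h)
  have : IsStrictTotalOrder (FreeGroup α) r :=
    { irrefl := fun g => by simpa [r] using not_pos_one
      trans := fun g h k hgh hhk => by simpa [r, mul_assoc] using pos_mul _ _ hgh hhk
      trichotomous := fun g h hgh hhg => by
        by_contra hne
        rcases pos_or_pos_inv (g⁻¹ * h) (by rwa [ne_eq, inv_mul_eq_one]) with h | h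
        · exact hgh h
        · exact hhg (by simpa [r] using h) }
  refine ⟨linearOrderOfSTO r, fun a b c (h : pos (b⁻¹ * c)) => show pos _ from ?_⟩
  simpa [mul_assoc] using h

/-! ### The Cayley tree of a free group -/

section Tree

open FreeGroup

variable {α : Type*}

/-- An edge of the Cayley tree of `FreeGroup α`, going from `src` to `src * of label`. -/
@[ext] structure Edge (α : Type*) where
  /-- The initial vertex. -/
  src : FreeGroup α
  /-- The generator labelling the edge. -/
  label : α

/-- The terminal vertex of an edge. -/
def Edge.tgt (e : Edge α) : FreeGroup α := e.src * of e.label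

instance : MulAction (FreeGroup α) (Edge α) where
  smul g e := ⟨g * e.src, e.label⟩
  one_smul e := by ext <;> simp [HSMul.hSMul]
  mul_smul g h e := by ext <;> simp [HSMul.hSMul, mul_assoc]

@[simp] lemma smul_src (g : FreeGroup α) (e : Edge α) : (g • e).src = g * e.src := rfl

@[simp] lemma smul_label (g : FreeGroup α) (e : Edge α) : (g • e).label = e.label := rfl

@[simp] lemma smul_tgt (g : FreeGroup α) (e : Edge α) : (g • e).tgt = g * e.tgt := by
  simp [Edge.tgt, mul_assoc]

lemma smul_edge_cancel {g h : FreeGroup α} {e : Edge α} (H : g • e = h • e) : g = h := by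
  simpa using congrArg Edge.src H

lemma smul_edge_ne_self {g : FreeGroup α} (hg : g ≠ 1) (e : Edge α) : g • e ≠ e :=
  fun h => hg (smul_edge_cancel (h.trans (one_smul _ e).symm))

/-- The edge `e` joins the vertices `g` and `h`, in either direction. -/
def Edge.Joins (e : Edge α) (g h : FreeGroup α) : Prop :=
  (e.src = g ∧ e.tgt = h) ∨ (e.src = h ∧ e.tgt = g)

lemma Edge.joins_src_tgt (e : Edge α) : e.Joins e.src e.tgt := Or.inl ⟨rfl, rfl⟩

lemma Edge.Joins.symm {e : Edge α} {g h : FreeGroup α} (H : e.Joins g h) : e.Joins h g :=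
  Or.symm H

lemma Edge.Joins.smul {e : Edge α} {g h : FreeGroup α} (H : e.Joins g h) (k : FreeGroup α) :
    (k • e).Joins (k * g) (k * h) := by
  rcases H with ⟨rfl, rfl⟩ | ⟨rfl, rfl⟩ <;> simp [Edge.Joins]

lemma joins_mul_inv (g : FreeGroup α) (x : α) :
    Edge.Joins ⟨g * (of x)⁻¹, x⟩ g (g * (of x)⁻¹) :=
  Or.inr ⟨rfl, inv_mul_cancel_right g (of x)⟩

lemma edge_induction {P : FreeGroup α → Prop} (one : P 1)
    (step : ∀ (e : Edge α) (g h : FreeGroup α), e.Joins g h → P g → P h) (g : FreeGroup α) :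
    P g := by
  suffices ∀ k, P k → P (k * g) by simpa using this 1 one
  induction g using FreeGroup.induction_on with
  | C1 => simp
  | of x => exact fun k hk => step ⟨k, x⟩ _ _ (Edge.joins_src_tgt _) hk
  | inv_of x _ => exact fun k hk => step _ k _ (joins_mul_inv k x) hk
  | mul x y hx hy => exact fun k hk => mul_assoc k x y ▸ hy _ (hx _ hk)

variable [DecidableEq α]

/-- The vertices separated from `e.src` by the edge `e`: those whose reduced word, read from
`e.src`, starts with `e`. -/
def Edge.farSide (e : Edge α) : Set (FreeGroup α) :=
  {g | (e.src⁻¹ * g).toWord.head? = some (e.label, true)}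

/-- The edges of the geodesic joining two vertices, that is, the edges separating them. -/
def geodesic (g h : FreeGroup α) : Set (Edge α) :=
  {e | ¬(g ∈ e.farSide ↔ h ∈ e.farSide)}

lemma smul_mem_farSide (g h : FreeGroup α) (e : Edge α) :
    g * h ∈ (g • e).farSide ↔ h ∈ e.farSide := by
  simp [Edge.farSide, mul_assoc]

lemma src_notMem_farSide (e : Edge α) : e.src ∉ e.farSide := by simp [Edge.farSide]

lemma tgt_mem_farSide (e : Edge α) : e.tgt ∈ e.farSide := by simp [Edge.farSide, Edge.tgt]

@[simp] lemma geodesic_self (g : FreeGroup α) : geodesic g g = ∅ := by simp [geodesic]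

lemma geodesic_comm (g h : FreeGroup α) : geodesic g h = geodesic h g := by
  ext e; simp only [geodesic, Set.mem_ofPred_eq]; tauto

lemma smul_mem_geodesic {g a b : FreeGroup α} {e : Edge α} :
    g • e ∈ geodesic (g * a) (g * b) ↔ e ∈ geodesic a b := by
  simp [geodesic, smul_mem_farSide]

lemma mem_geodesic_mul_left {g a b : FreeGroup α} {e : Edge α} :
    e ∈ geodesic (g * a) (g * b) ↔ g⁻¹ • e ∈ geodesic a b := by
  rw [← smul_mem_geodesic (g := g) (e := g⁻¹ • e), smul_inv_smul]

lemma disjoint_geodesic_mul_left {a b c d : FreeGroup α} (g : FreeGroup α)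
    (h : Disjoint (geodesic a b) (geodesic c d)) :
    Disjoint (geodesic (g * a) (g * b)) (geodesic (g * c) (g * d)) := by
  rw [Set.disjoint_left] at h ⊢
  simp only [mem_geodesic_mul_left]
  exact fun _ he => h he

lemma mem_geodesic_iff_xor (a b c : FreeGroup α) (e : Edge α) :
    e ∈ geodesic a c ↔
      e ∈ geodesic a b ∧ e ∉ geodesic b c ∨ e ∈ geodesic b c ∧ e ∉ geodesic a b := by
  simp only [geodesic, Set.mem_ofPred_eq]; tauto

lemma geodesic_subset_union (a b c : FreeGroup α) :
    geodesic a c ⊆ geodesic a b ∪ geodesic b c := fun e he =>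
  ((mem_geodesic_iff_xor a b c e).1 he).imp And.left And.left

lemma toWord_mul_of (g : FreeGroup α) (x : α) :
    (g * of x).toWord = g.toWord ++ [(x, true)] ∨
      g.toWord = (g * of x).toWord ++ [(x, false)] := by
  obtain ⟨A, B, C, hg, hx, hgx⟩ := exists_toWord_mul g (of x)
  rw [toWord_of] at hx
  rcases List.singleton_eq_append_iff.1 hx with ⟨hC, rfl⟩ | ⟨hC, rfl⟩
  · left
    obtain rfl : C = [] := by simpa using congrArg invRev hC
    simp [hgx, hg]
  · right
    obtain rfl : C = [(x, false)] := by simpa [invRev] using congrArg invRev hC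
    simp [hgx, hg]

@[simp] lemma geodesic_src_tgt (e : Edge α) : geodesic e.src e.tgt = {e} := by
  ext e'
  have htgt : e'.src⁻¹ * e.tgt = e'.src⁻¹ * e.src * of e.label := by simp [Edge.tgt, mul_assoc]
  have hnil : (e'.src⁻¹ * e.src).toWord = [] ↔ e'.src = e.src := by
    rw [toWord_eq_nil_iff, inv_mul_eq_one]
  simp only [geodesic, Edge.farSide, Set.mem_ofPred_eq, Set.mem_singleton_iff, Edge.ext_iff, htgt,
    ← hnil]
  rcases toWord_mul_of (e'.src⁻¹ * e.src) e.label with h | h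
  · rw [h]
    cases (e'.src⁻¹ * e.src).toWord <;> simp [eq_comm]
  · rw [h]
    cases (e'.src⁻¹ * e.src * of e.label).toWord <;> simp

lemma Edge.Joins.geodesic_eq {e : Edge α} {g h : FreeGroup α} (H : e.Joins g h) :
    geodesic g h = {e} := by
  rcases H with ⟨rfl, rfl⟩ | ⟨rfl, rfl⟩
  · exact geodesic_src_tgt e
  · rw [geodesic_comm, geodesic_src_tgt]

lemma Edge.Joins.self_mem_geodesic_iff {e : Edge α} {g h k : FreeGroup α} (H : e.Joins g h) :
    e ∈ geodesic g k ↔ e ∉ geodesic h k := by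
  simp [mem_geodesic_iff_xor g h k, H.geodesic_eq]

lemma Edge.Joins.geodesic_eq_sdiff {e : Edge α} {g z h : FreeGroup α} (H : e.Joins g z)
    (he : e ∈ geodesic g h) : geodesic z h = geodesic g h \ {e} := by
  ext e'
  rw [mem_geodesic_iff_xor z g h, H.symm.geodesic_eq]
  by_cases hee : e' = e
  · simp [hee, he]
  · simp [hee]

lemma Edge.Joins.eq_of_notMem_geodesic {e : Edge α} {u u' w w' : FreeGroup α} (hu : e.Joins u u')
    (hw : e.Joins w w') (h : e ∉ geodesic u w) : u = w := by
  have hsep : e ∈ geodesic e.src e.tgt := by simp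
  rcases hu with ⟨rfl, rfl⟩ | ⟨rfl, rfl⟩ <;> rcases hw with ⟨rfl, rfl⟩ | ⟨rfl, rfl⟩
  · rfl
  · exact absurd hsep h
  · exact absurd (geodesic_comm e.src e.tgt ▸ hsep) h
  · rfl

lemma exists_joins_mem_geodesic {g h : FreeGroup α} (hne : g ≠ h) :
    ∃ e z, Edge.Joins e g z ∧ e ∈ geodesic g h := by
  have hword : (g⁻¹ * h).toWord ≠ [] := by rwa [ne_eq, toWord_eq_nil_iff, inv_mul_eq_one]
  obtain ⟨⟨x, b⟩, L, hL⟩ := List.exists_cons_of_ne_nil hword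
  cases b with
  | true => exact ⟨⟨g, x⟩, _, Edge.joins_src_tgt _, by simp [geodesic, Edge.farSide, hL]⟩
  | false =>
    refine ⟨_, _, joins_mul_inv g x, ?_⟩
    have hred : IsReduced ((x, false) :: L) := hL ▸ isReduced_toWord
    have htail : (of x * (g⁻¹ * h)).toWord = L := by
      have hmk : of x * (g⁻¹ * h) = mk L := by
        rw [← mk_toWord (x := g⁻¹ * h), hL]
        exact mul_inv_cancel_left (of x) (mk L)
      rw [hmk, toWord_mk]
      exact IsReduced.reduce_eq (List.IsChain.tail hred)
    have hhead : L.head? ≠ some (x, true) := fun H => by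
      obtain ⟨L', rfl⟩ := List.head?_eq_some_iff.1 H
      simpa using (List.isChain_cons_cons.1 hred).1
    simp [geodesic, Edge.farSide, mul_assoc, htail, hhead]

lemma finite_geodesic (g h : FreeGroup α) : (geodesic g h).Finite := by
  suffices ∀ k : FreeGroup α, (geodesic 1 k).Finite from
    ((geodesic_comm 1 g ▸ this g).union (this h)).subset (geodesic_subset_union g 1 h)
  intro k
  induction k using edge_induction with
  | one => simp
  | step e a b hab ha =>
    exact (ha.union (hab.geodesic_eq ▸ Set.finite_singleton e)).subset (geodesic_subset_union 1 a b)

@[elab_as_elim]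
lemma geodesic_induction (h : FreeGroup α) {P : FreeGroup α → Prop} (base : P h)
    (step : ∀ (e : Edge α) (g z : FreeGroup α), e.Joins g z → e ∈ geodesic g h → P z → P g)
    (g : FreeGroup α) : P g := by
  induction hn : (geodesic g h).ncard using Nat.strong_induction_on generalizing g with
  | _ n ih =>
    by_cases hgh : g = h
    · exact hgh ▸ base
    obtain ⟨e, z, hj, he⟩ := exists_joins_mem_geodesic hgh
    refine step e g z hj he (ih _ ?_ z rfl)
    rw [← hn, hj.geodesic_eq_sdiff he]
    exact Set.ncard_sdiff_singleton_lt_of_mem he (finite_geodesic g h)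

lemma apply_eq_of_geodesic {β : Type*} {f : FreeGroup α → β} {g h : FreeGroup α}
    (H : ∀ e ∈ geodesic g h, f e.src = f e.tgt) : f g = f h := by
  induction g using geodesic_induction h with
  | base => rfl
  | step e g z hj he ih =>
    have hz : f z = f h := ih fun e' he' => H e' ((hj.geodesic_eq_sdiff he).subset he').1
    rcases hj with ⟨rfl, rfl⟩ | ⟨rfl, rfl⟩
    · exact (H e he).trans hz
    · exact (H e he).symm.trans hz

lemma exists_first_mem_geodesic {g h : FreeGroup α} {S : Set (Edge α)}
    (hS : ¬Disjoint (geodesic g h) S) :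
    ∃ e ∈ geodesic g h, e ∈ S ∧ ∃ u u', e.Joins u u' ∧ geodesic g u ⊆ geodesic g h \ S ∧
      geodesic u' h ⊆ geodesic g h \ {e} := by
  induction g using geodesic_induction h with
  | base => simp at hS
  | step e₁ g z hj he₁ ih =>
    have hz := hj.geodesic_eq_sdiff he₁
    by_cases h₁ : e₁ ∈ S
    · exact ⟨e₁, he₁, h₁, g, z, hj, by simp, hz.subset⟩
    have hS' : ¬Disjoint (geodesic z h) S := by
      rw [Set.not_disjoint_iff] at hS ⊢
      obtain ⟨e, he, heS⟩ := hS
      exact ⟨e, hz ▸ ⟨he, fun h => h₁ (h ▸ heS)⟩, heS⟩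
    obtain ⟨e, he, heS, u, u', hu, hbefore, hafter⟩ := ih hS'
    have hzg : geodesic z h ⊆ geodesic g h := hz.subset.trans Set.sdiff_subset
    refine ⟨e, hzg he, heS, u, u', hu, fun e' he' => ?_,
      hafter.trans (Set.sdiff_subset_sdiff_left hzg)⟩
    rcases geodesic_subset_union g z u he' with h' | h'
    · rw [hj.geodesic_eq] at h'
      exact h' ▸ ⟨he₁, h₁⟩
    · exact ⟨hzg (hbefore h').1, (hbefore h').2⟩

lemma exists_joins_of_mem_geodesic {g h : FreeGroup α} {e : Edge α} (he : e ∈ geodesic g h) :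
    ∃ u u', e.Joins u u' ∧ geodesic g u ⊆ geodesic g h \ {e} ∧
      geodesic u' h ⊆ geodesic g h \ {e} := by
  obtain ⟨e', -, rfl, H⟩ := exists_first_mem_geodesic (S := {e}) (by simpa using he)
  exact H

lemma exists_joins_mem_geodesic_inter {a c d : FreeGroup α}
    (h : ¬Disjoint (geodesic c a) (geodesic c d)) :
    ∃ e z, Edge.Joins e c z ∧ e ∈ geodesic c a ∧ e ∈ geodesic c d := by
  obtain ⟨e, ha, hd, u, u', hu, hcu, -⟩ := exists_first_mem_geodesic h
  obtain ⟨w, w', hw, hcw, -⟩ := exists_joins_of_mem_geodesic hd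
  have hecu : e ∉ geodesic u c := fun H => (hcu (geodesic_comm u c ▸ H)).2 hd
  have hecw : e ∉ geodesic c w := fun H => (hcw H).2 rfl
  obtain rfl : u = w := hu.eq_of_notMem_geodesic hw (by simp [mem_geodesic_iff_xor u c w, *])
  obtain rfl : c = u := by
    by_contra hne
    obtain ⟨f, -, -, hf⟩ := exists_joins_mem_geodesic hne
    exact (hcu hf).2 (hcw hf).1
  exact ⟨e, u', hu, ha, hd⟩

/-- Locally geodesic concatenations are geodesic. -/
lemma disjoint_geodesic_of_local {a b c d : FreeGroup α} (hbc : b ≠ c)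
    (hb : Disjoint (geodesic b a) (geodesic b c)) (hc : Disjoint (geodesic c b) (geodesic c d)) :
    Disjoint (geodesic c a) (geodesic c d) := by
  by_contra hcon
  obtain ⟨e, z, hj, hea, hed⟩ := exists_joins_mem_geodesic_inter hcon
  have hecb : e ∉ geodesic c b := fun H => Set.disjoint_left.1 hc H hed
  have heba : e ∈ geodesic b a := by
    rw [mem_geodesic_iff_xor b c a, geodesic_comm b c]; exact Or.inr ⟨hea, hecb⟩
  obtain ⟨u, u', hu, hbu, -⟩ := exists_joins_of_mem_geodesic heba
  have hebu : e ∉ geodesic b u := fun H => (hbu H).2 rfl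
  obtain rfl : c = u := hj.eq_of_notMem_geodesic hu (by simp [mem_geodesic_iff_xor c b u, *])
  obtain ⟨f, -, -, hf⟩ := exists_joins_mem_geodesic hbc
  exact Set.disjoint_left.1 hb (hbu hf).1 hf

omit [DecidableEq α] in
lemma exists_edge_potential (φ : Edge α → ℚ) :
    ∃ f : FreeGroup α → ℚ, ∀ e : Edge α, f e.tgt - f e.src = φ e := by
  classical
  let side (g : FreeGroup α) (e : Edge α) : ℚ := if g ∈ e.farSide then 1 else 0
  have hside {g h : FreeGroup α} {e : Edge α} (he : e ∉ geodesic g h) : side g e = side h e := by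
    simp only [side, not_not.1 he]
  have hfin (g) : (Function.support fun e => φ e * (side g e - side 1 e)).Finite :=
    (finite_geodesic g 1).subset fun e he => by_contra fun H => he (by simp [hside H])
  refine ⟨fun g => ∑ᶠ e, φ e * (side g e - side 1 e), fun e => ?_⟩
  rw [← finsum_sub_distrib (hfin _) (hfin _), finsum_eq_single _ e fun e' he' => ?_]
  · simp only [side, if_pos (tgt_mem_farSide e), if_neg (src_notMem_farSide e)]
    ring
  · rw [hside (g := e.src) (h := e.tgt) (by simpa using he'), sub_self]

end Tree

/-! ### Affine functions on a tree and the Euler characteristic -/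

section Cocycle

variable {G X M : Type*} [Group G] [MulAction G X] [AddCommGroup M]

/-- One-cocycles of `G` with values in the functions on `X`; the cocycles of the form
`z a x = f (a • x) - f x` are the coboundaries, with primitive `f`. -/
def IsCocycle (z : G → X → M) : Prop := ∀ a b x, z (a * b) x = z a (b • x) + z b x

lemma isCocycle_hom (χ : Additive G →+ M) :
    IsCocycle (X := X) fun (a : G) _ => χ (.ofMul a) := fun a b _ => by simp

lemma isCocycle_coboundary (f : X → M) : IsCocycle fun (a : G) x => f (a • x) - f x :=
  fun a b x => by simp only [mul_smul, sub_add_sub_cancel]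

lemma IsCocycle.sub {z w : G → X → M} (hz : IsCocycle z) (hw : IsCocycle w) :
    IsCocycle fun a x => z a x - w a x :=
  fun a b x => by simp only [hz a b x, hw a b x, add_sub_add_comm]

lemma IsCocycle.comp {Y : Type*} [MulAction G Y] {z : G → X → M} (hz : IsCocycle z)
    (p : Y →[G] X) : IsCocycle fun a y => z a (p y) :=
  fun a b y => by simp only [hz a b, map_smul]

lemma IsCocycle.exists_primitive {z : G → X → M} (hz : IsCocycle z)
    (hstab : ∀ x, ∀ a ∈ stabilizer G x, z a x = 0) :
    ∃ f : X → M, ∀ a x, f (a • x) = z a x + f x := by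
  let base (x : X) : X := (Quotient.mk (orbitRel G X) x).out
  have hbase (a : G) (x : X) : base (a • x) = base x :=
    congrArg Quotient.out (Quotient.sound ⟨a, rfl⟩)
  have hmem (x : X) : ∃ b : G, b • base x = x :=
    orbitRel_apply.1 ((orbitRel G X).symm (Quotient.mk_out x))
  choose b hb using hmem
  refine ⟨fun x => z (b x) (base x), fun a x => ?_⟩
  have hs : (a * b x)⁻¹ * b (a • x) ∈ stabilizer G (base x) := by
    rw [mem_stabilizer_iff, mul_smul, inv_smul_eq_iff, mul_smul, hb x, ← hbase a x, hb]
  calc z (b (a • x)) (base (a • x)) = z (a * b x * ((a * b x)⁻¹ * b (a • x))) (base x) := by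
        rw [mul_inv_cancel_left, hbase]
    _ = z (a * b x) (base x) := by rw [hz, hstab _ _ hs, hs, add_zero]
    _ = z a x + z (b x) (base x) := by rw [hz, hb]

-- The surjectivity in Shapiro's lemma, in degree one.
lemma exists_cocycle_of_hom (x₀ : X) (ρ : Additive (stabilizer G x₀) →+ M) :
    ∃ z : G → X → M, IsCocycle z ∧ (∀ s : stabilizer G x₀, z s x₀ = ρ (.ofMul s)) ∧
      ∀ x ∉ orbit G x₀, ∀ a, z a x = 0 := by
  classical
  obtain ⟨g, hg⟩ := (isCocycle_hom (X := G) ρ).exists_primitive fun x s hs => by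
    have : s = 1 := Subtype.ext (mul_eq_right.1 hs)
    simp [this]
  let z (a : G) (x : X) : M :=
    if h : x ∈ orbit G x₀ then g h.choose⁻¹ - g (a * h.choose)⁻¹ else 0
  have hz (a c : G) : z a (c • x₀) = g c⁻¹ - g (a * c)⁻¹ := by
    have h : c • x₀ ∈ orbit G x₀ := mem_orbit x₀ c
    let s : stabilizer G x₀ := ⟨h.choose⁻¹ * c, by
      rw [mem_stabilizer_iff, mul_smul, inv_smul_eq_iff]; exact h.choose_spec.symm⟩
    have hgs (d : G) : g (h.choose⁻¹ * d) = ρ (.ofMul s) + g (c⁻¹ * d) := by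
      rw [← hg]; congr 1; simp [s, Subgroup.smul_def, mul_assoc]
    have h₁ := hgs 1
    have h₂ := hgs a⁻¹
    simp only [z, dif_pos h, mul_inv_rev]
    simp only [mul_one] at h₁
    rw [h₁, h₂]
    abel
  refine ⟨z, fun a b x => ?_, fun s => ?_, fun x hx a => dif_neg hx⟩
  · by_cases hx : x ∈ orbit G x₀
    · obtain ⟨c, rfl⟩ := hx
      simp only [← mul_smul, hz, ← mul_assoc]
      abel
    · have hbx : b • x ∉ orbit G x₀ := fun h => hx (by
        rwa [← orbit_eq_iff, orbit_smul, orbit_eq_iff] at h)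
      simp [z, hx, hbx]
  · have h₁ := hz s 1
    have h₂ := hg s (s : G)⁻¹
    simp only [one_smul, inv_one, mul_one, Subgroup.smul_def, smul_eq_mul, mul_inv_cancel] at h₁ h₂
    rw [h₁, h₂]
    abel

end Cocycle

/-- A `G`-tree with vertices `X` and edges `E`. Of its being a tree we only record that it has the
rational cohomology of a point. -/
structure GTree (G X E : Type*) [Group G] [MulAction G X] [MulAction G E] where
  /-- The initial vertex of an edge. -/
  src : E →[G] X
  /-- The terminal vertex of an edge. -/
  tgt : E →[G] X
  nonempty : Nonempty X
  apply_eq_of_forall_edge (f : X → ℚ) (hf : ∀ e, f (src e) = f (tgt e)) (x y : X) : f x = f y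
  exists_potential (φ : E → ℚ) : ∃ f : X → ℚ, ∀ e, f (tgt e) - f (src e) = φ e

section AffineFunctions

variable (G X : Type*) [Group G] [MulAction G X]

/-- The functions on `X` on which `G` acts by adding constants, each together with the homomorphism
`G → ℚ` giving these constants. -/
def affineFunctions : Submodule ℚ ((Additive G →+ ℚ) × (X → ℚ)) where
  carrier := {p | ∀ (a : G) (x : X), p.2 (a • x) = p.1 (.ofMul a) + p.2 x}
  add_mem' hp hq a x := by simp [hp a x, hq a x, add_add_add_comm]
  zero_mem' _ _ := by simp
  smul_mem' c p hp a x := by simp [hp a x, mul_add]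

/-- The homomorphism `G → ℚ` attached to an affine function. -/
def linearPart : affineFunctions G X →ₗ[ℚ] (Additive G →+ ℚ) :=
  LinearMap.fst ℚ _ _ ∘ₗ (affineFunctions G X).subtype

variable {G X} in
lemma mem_range_linearPart_iff {χ : Additive G →+ ℚ} :
    χ ∈ LinearMap.range (linearPart G X) ↔ ∀ x : X, ∀ a ∈ stabilizer G x, χ (.ofMul a) = 0 := by
  constructor
  · rintro ⟨⟨⟨χ, f⟩, hf⟩, rfl⟩ x a ha
    have h := hf a x
    rw [ha] at h
    simpa [linearPart] using h
  · intro h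
    obtain ⟨f, hf⟩ := (isCocycle_hom χ).exists_primitive h
    exact ⟨⟨(χ, f), hf⟩, rfl⟩

variable {G X} in
lemma comp_mk_mem_affineFunctions (g : orbitRel.Quotient G X → ℚ) :
    ((0, fun x => g (Quotient.mk _ x)) : (Additive G →+ ℚ) × (X → ℚ)) ∈ affineFunctions G X := by
  intro a x
  have : Quotient.mk (orbitRel G X) (a • x) = Quotient.mk _ x := Quotient.sound ⟨a, rfl⟩
  simp [this]

/-- The affine functions with linear part zero are the functions on the set of orbits. -/
noncomputable def kerLinearPartEquiv :
    (orbitRel.Quotient G X → ℚ) ≃ₗ[ℚ] LinearMap.ker (linearPart G X) :=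
  LinearEquiv.ofBijective
    { toFun := fun g => ⟨⟨(0, fun x => g (Quotient.mk _ x)), comp_mk_mem_affineFunctions g⟩, rfl⟩
      map_add' := fun g h => by ext <;> simp
      map_smul' := fun c g => by ext <;> simp } <| by
    constructor
    · intro g h hgh
      ext o
      induction o using Quotient.inductionOn with | h x => ?_
      exact congrFun (congrArg (fun p => p.1.1.2) hgh) x
    · rintro ⟨⟨⟨χ, f⟩, hf⟩, hχ⟩
      obtain rfl : χ = 0 := hχ
      refine ⟨Quotient.lift f ?_, rfl⟩
      rintro _ y ⟨a, rfl⟩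
      simpa using hf a y

end AffineFunctions

namespace GTree

variable {G X E : Type*} [Group G] [MulAction G X] [MulAction G E] (T : GTree G X E)

include T

lemma exists_hom_of_cocycle {z : G → X → ℚ} (hz : IsCocycle z)
    (hedge : ∀ a e, z a (T.src e) = z a (T.tgt e)) :
    ∃ χ : Additive G →+ ℚ, ∀ a x, z a x = χ (.ofMul a) := by
  obtain ⟨x₀⟩ := T.nonempty
  have hconst (a x) : z a x = z a x₀ := T.apply_eq_of_forall_edge (z a) (hedge a) x x₀
  exact ⟨AddMonoidHom.mk' (fun a => z a.toMul x₀) fun a b => by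
    rw [toMul_add, hz, hconst], fun a x => hconst a x⟩

lemma exists_hom_extension (hfree : ∀ e : E, stabilizer G e = ⊥) (x₀ : X)
    (ρ : Additive (stabilizer G x₀) →+ ℚ) :
    ∃ χ : Additive G →+ ℚ, (∀ s : stabilizer G x₀, χ (.ofMul (s : G)) = ρ (.ofMul s)) ∧
      ∀ x ∉ orbit G x₀, ∀ s ∈ stabilizer G x, χ (.ofMul s) = 0 := by
  obtain ⟨z, hz, hzρ, hz0⟩ := exists_cocycle_of_hom x₀ ρ
  obtain ⟨g, hg⟩ := ((hz.comp T.tgt).sub (hz.comp T.src)).exists_primitive fun e a ha => by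
    obtain rfl : a = 1 := by simpa [hfree e] using ha
    have hz1 (x) : z 1 x = 0 := by simpa using hz 1 1 x
    simp [hz1]
  obtain ⟨f, hf⟩ := T.exists_potential g
  obtain ⟨χ, hχ⟩ := T.exists_hom_of_cocycle (hz.sub (isCocycle_coboundary f))
    (fun a e => by
      have h := hg a e
      rw [← hf, ← hf, map_smul, map_smul] at h
      linarith)
  have hχs {x} {s} (hs : s ∈ stabilizer G x) : χ (.ofMul s) = z s x := by
    rw [← hχ s x, hs, sub_self, sub_zero]
  exact ⟨χ, fun s => (hχs s.2).trans (hzρ s), fun x hx s hs => (hχs hs).trans (hz0 x hx s)⟩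

lemma edgeDiff_smul (p : affineFunctions G X) (a : G) (e : E) :
    p.1.2 (T.tgt (a • e)) - p.1.2 (T.src (a • e)) = p.1.2 (T.tgt e) - p.1.2 (T.src e) := by
  simp [map_smul, p.2 a]

/-- The map taking an affine function to its value at `x₀` and to its coboundary, which is constant
on the orbits of edges. -/
def evalAndCoboundary (x₀ : X) :
    affineFunctions G X →ₗ[ℚ] ℚ × (orbitRel.Quotient G E → ℚ) where
  toFun p := (p.1.2 x₀, Quotient.lift (fun e => p.1.2 (T.tgt e) - p.1.2 (T.src e)) <| by
    rintro _ e ⟨a, rfl⟩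
    exact T.edgeDiff_smul p a e)
  map_add' p q := by
    ext o
    · rfl
    · induction o using Quotient.inductionOn
      simp [add_sub_add_comm]
  map_smul' c p := by
    ext o
    · rfl
    · induction o using Quotient.inductionOn
      simp [mul_sub]

lemma evalAndCoboundary_injective (x₀ : X) : Function.Injective (T.evalAndCoboundary x₀) := by
  rw [← LinearMap.ker_eq_bot, LinearMap.ker_eq_bot']
  rintro ⟨⟨χ, f⟩, hf⟩ h
  obtain ⟨h₀, hδ⟩ := Prod.mk.inj h
  have hf0 (x) : f x = 0 := (T.apply_eq_of_forall_edge f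
    (fun e => (sub_eq_zero.1 (congrFun hδ (Quotient.mk _ e))).symm) x x₀).trans h₀
  have hχ0 (a) : χ (.ofMul a) = 0 := by simpa [hf0] using (hf a x₀).symm
  ext a
  · exact hχ0 a
  · exact hf0 a

lemma evalAndCoboundary_surjective (x₀ : X) : Function.Surjective (T.evalAndCoboundary x₀) := by
  rintro ⟨c, φ⟩
  obtain ⟨f, hf⟩ := T.exists_potential fun e => φ (Quotient.mk _ e)
  obtain ⟨χ, hχ⟩ := T.exists_hom_of_cocycle (isCocycle_coboundary f)
    (fun a e => by
      have h := hf (a • e)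
      rw [show Quotient.mk (orbitRel G E) (a • e) = Quotient.mk _ e from
        Quotient.sound ⟨a, rfl⟩, ← hf e, map_smul, map_smul] at h
      linarith)
  refine ⟨⟨(χ, fun x => f x + (c - f x₀)), fun a x => by simp [← hχ a x]; ring⟩, ?_⟩
  ext o
  · simp [evalAndCoboundary]
  · induction o using Quotient.inductionOn
    simp [evalAndCoboundary, hf]

/-- The affine functions are parametrized by a value at `x₀` and a function on the orbits of
edges. -/
noncomputable def affineFunctionsEquiv (x₀ : X) :
    affineFunctions G X ≃ₗ[ℚ] ℚ × (orbitRel.Quotient G E → ℚ) :=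
  .ofBijective (T.evalAndCoboundary x₀)
    ⟨T.evalAndCoboundary_injective x₀, T.evalAndCoboundary_surjective x₀⟩

lemma finiteDimensional_affineFunctions [Finite (orbitRel.Quotient G E)] :
    FiniteDimensional ℚ (affineFunctions G X) :=
  Module.Finite.equiv (T.affineFunctionsEquiv T.nonempty.some).symm

lemma finite_vertex_orbits [Finite (orbitRel.Quotient G E)] :
    Finite (orbitRel.Quotient G X) := by
  classical
  have := T.finiteDimensional_affineFunctions
  have := Module.Finite.equiv (kerLinearPartEquiv G X).symm
  exact (Pi.linearIndependent_single_one (orbitRel.Quotient G X) ℚ).finite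

lemma finrank_range_linearPart [Finite (orbitRel.Quotient G E)] :
    Module.finrank ℚ (LinearMap.range (linearPart G X)) + Nat.card (orbitRel.Quotient G X) =
      Nat.card (orbitRel.Quotient G E) + 1 := by
  have := T.finiteDimensional_affineFunctions
  have := T.finite_vertex_orbits
  have := Fintype.ofFinite (orbitRel.Quotient G E)
  have := Fintype.ofFinite (orbitRel.Quotient G X)
  have hker := (kerLinearPartEquiv G X).finrank_eq
  have haff := (T.affineFunctionsEquiv T.nonempty.some).finrank_eq
  rw [Module.finrank_pi] at hker
  rw [Module.finrank_prod, Module.finrank_pi, Module.finrank_self] at haff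
  rw [Nat.card_eq_fintype_card, Nat.card_eq_fintype_card, hker,
    LinearMap.finrank_range_add_finrank_ker, haff, add_comm]

end GTree

section StabilizerRestriction

variable (G X : Type*) [Group G] [MulAction G X]

/-- Restriction of homomorphisms to the stabilizers of representatives of the orbits. -/
noncomputable def stabilizerRestriction : (Additive G →+ ℚ) →ₗ[ℚ]
    ∀ o : orbitRel.Quotient G X, (Additive (stabilizer G o.out) →+ ℚ) where
  toFun χ o := χ.comp (stabilizer G o.out).subtype.toAdditive
  map_add' _ _ := rfl
  map_smul' _ _ := rfl

lemma ker_stabilizerRestriction :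
    LinearMap.ker (stabilizerRestriction G X) = LinearMap.range (linearPart G X) := by
  ext χ
  rw [mem_range_linearPart_iff, LinearMap.mem_ker]
  constructor
  · intro h x a ha
    obtain ⟨b, hb⟩ : ∃ b : G, b • (Quotient.mk (orbitRel G X) x).out = x :=
      orbitRel_apply.1 ((orbitRel G X).symm (Quotient.mk_out x))
    have hconj : b⁻¹ * a * b ∈ stabilizer G (Quotient.mk (orbitRel G X) x).out := by
      rw [mem_stabilizer_iff, mul_smul, mul_smul, hb, ha, inv_smul_eq_iff, hb]
    have h₀ : χ (.ofMul (b⁻¹ * a * b)) = 0 :=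
      DFunLike.congr_fun (congrFun h (Quotient.mk _ x)) (Additive.ofMul ⟨_, hconj⟩)
    simpa using h₀
  · intro h
    refine funext fun o => AddMonoidHom.ext fun s => ?_
    exact h _ _ s.toMul.2

end StabilizerRestriction

/-- The first rational Betti number of `G`, that is, the dimension of `Hom(G, ℚ)`. -/
noncomputable def firstBetti (G : Type*) [Group G] : ℕ∞ :=
  Cardinal.toENat (Module.rank ℚ (Additive G →+ ℚ))

lemma rank_hom_le_one_of_isCyclic (C : Type*) [Group C] [IsCyclic C] :
    Module.rank ℚ (Additive C →+ ℚ) ≤ 1 := by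
  obtain ⟨s, hs⟩ := IsCyclic.exists_generator (α := C)
  let ev : (Additive C →+ ℚ) →ₗ[ℚ] ℚ :=
    { toFun := fun χ => χ (.ofMul s), map_add' := fun _ _ => rfl, map_smul' := fun _ _ => rfl }
  have hev : Function.Injective ev := fun χ ψ h => by
    refine AddMonoidHom.ext fun a => ?_
    obtain ⟨n, hn⟩ := Subgroup.mem_zpowers_iff.1 (hs a.toMul)
    obtain rfl : a = n • .ofMul s := by rw [← ofMul_zpow, hn]; rfl
    rw [map_zsmul, map_zsmul]
    exact congrArg _ h
  simpa using LinearMap.lift_rank_le_of_injective ev hev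

namespace GTree

variable {G X E : Type*} [Group G] [MulAction G X] [MulAction G E] (T : GTree G X E)

include T

lemma stabilizerRestriction_surjective [Finite (orbitRel.Quotient G X)]
    (hfree : ∀ e : E, stabilizer G e = ⊥) :
    Function.Surjective (stabilizerRestriction G X) := by
  classical
  have := Fintype.ofFinite (orbitRel.Quotient G X)
  intro ρ
  choose χ hχ hχ0 using fun o : orbitRel.Quotient G X => T.exists_hom_extension hfree o.out (ρ o)
  refine ⟨∑ o, χ o, ?_⟩
  refine funext fun o => AddMonoidHom.ext fun s => ?_
  have hne (o') (ho' : o' ≠ o) : χ o' (.ofMul (s.toMul : G)) = 0 :=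
    hχ0 o' o.out (fun h => ho' (by
      rw [← Quotient.out_eq o, ← Quotient.out_eq o']
      exact (Quotient.sound h).symm)) _ s.toMul.2
  have hsum : stabilizerRestriction G X (∑ o, χ o) o s = ∑ o', χ o' (.ofMul (s.toMul : G)) := by
    simp [stabilizerRestriction]
  rw [hsum, Finset.sum_eq_single o (fun o' _ => hne o') (by simp)]
  exact hχ o s.toMul

lemma firstBetti_add_card [Finite (orbitRel.Quotient G E)] :
    firstBetti G + ENat.card (orbitRel.Quotient G X) =
      Cardinal.toENat (Module.rank ℚ (LinearMap.range (stabilizerRestriction G X))) +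
        (ENat.card (orbitRel.Quotient G E) + 1) := by
  have := T.finiteDimensional_affineFunctions
  have := T.finite_vertex_orbits
  have hrank := congrArg Cardinal.toENat
    (LinearMap.lift_rank_range_add_rank_ker (stabilizerRestriction G X))
  rw [ker_stabilizerRestriction, ← Module.finrank_eq_rank ℚ (LinearMap.range (linearPart G X)),
    map_add, Cardinal.toENat_lift, Cardinal.toENat_lift, Cardinal.toENat_lift,
    Cardinal.toENat_nat] at hrank
  rw [firstBetti, ← hrank, add_assoc, ENat.card_eq_coe_natCard, ENat.card_eq_coe_natCard]
  exact_mod_cast congrArg _ (congrArg Nat.cast T.finrank_range_linearPart)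

theorem firstBetti_le (hcyc : ∀ x : X, IsCyclic (stabilizer G x)) :
    firstBetti G ≤ ENat.card (orbitRel.Quotient G E) + 1 := by
  cases finite_or_infinite (orbitRel.Quotient G E) with
  | inr _ => simp
  | inl _ =>
    have := T.finite_vertex_orbits
    have hrange : Cardinal.toENat (Module.rank ℚ (LinearMap.range (stabilizerRestriction G X))) ≤
        ENat.card (orbitRel.Quotient G X) := by
      have hsum := (Submodule.rank_le (LinearMap.range (stabilizerRestriction G X))).trans_eq
        (rank_pi (R := ℚ)) |>.trans
        (Cardinal.sum_le_sum _ _ fun o => rank_hom_le_one_of_isCyclic (stabilizer G o.out))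
      simpa [ENat.card] using OrderHomClass.mono Cardinal.toENat hsum
    have h := T.firstBetti_add_card
    rw [add_comm] at h
    exact WithTop.le_of_add_le_add_left ENat.card_lt_top_of_finite.ne
      (h.trans_le (add_le_add_left hrange _))

theorem le_firstBetti [Finite (orbitRel.Quotient G E)] (hfree : ∀ e : E, stabilizer G e = ⊥)
    (hne : ∀ x : X, Nontrivial (Additive (stabilizer G x) →+ ℚ)) :
    ENat.card (orbitRel.Quotient G E) + 1 ≤ firstBetti G := by
  have := T.finite_vertex_orbits
  have hrange : ENat.card (orbitRel.Quotient G X) ≤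
      Cardinal.toENat (Module.rank ℚ (LinearMap.range (stabilizerRestriction G X))) := by
    rw [LinearMap.range_eq_top.2 (T.stabilizerRestriction_surjective hfree), rank_top, rank_pi]
    have hsum := Cardinal.sum_le_sum (fun _ : orbitRel.Quotient G X => 1) _ fun o =>
      Cardinal.one_le_iff_pos.2 (rank_pos (R := ℚ) (M := Additive (stabilizer G o.out) →+ ℚ))
    simpa [ENat.card] using OrderHomClass.mono Cardinal.toENat hsum
  have h := T.firstBetti_add_card
  rw [add_comm] at h
  exact WithTop.le_of_add_le_add_left ENat.card_lt_top_of_finite.ne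
    ((add_le_add_left hrange _).trans_eq h.symm)

end GTree

/-! ### Ranks of free groups -/

section Rank

variable {G H ι : Type*} [Group G] [Group H]

lemma grank_le_card_of_closure {s : Finset G} (hs : Subgroup.closure (s : Set G) = ⊤) :
    grank G ≤ s.card :=
  sInf_le ⟨s, hs, rfl⟩

lemma grank_le_of_surjective {f : G →* H} (hf : Function.Surjective f) : grank H ≤ grank G := by
  classical
  refine le_sInf ?_
  rintro _ ⟨s, hs, rfl⟩
  have himage : Subgroup.closure (s.image f : Set H) = ⊤ := by
    rw [Finset.coe_image, ← MonoidHom.map_closure, hs, Subgroup.map_top_of_surjective f hf]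
  exact (grank_le_card_of_closure himage).trans (Nat.cast_le.2 Finset.card_image_le)

lemma grank_congr (e : G ≃* H) : grank G = grank H :=
  (grank_le_of_surjective (f := e.symm.toMonoidHom) e.symm.surjective).antisymm
    (grank_le_of_surjective (f := e.toMonoidHom) e.surjective)

/-- Evaluation of homomorphisms to `ℚ` at a family of elements. -/
def homEval (s : ι → G) : (Additive G →+ ℚ) →ₗ[ℚ] (ι → ℚ) where
  toFun χ i := χ (.ofMul (s i))
  map_add' _ _ := rfl
  map_smul' _ _ := rfl

lemma homEval_injective {s : Set G} (hs : Subgroup.closure s = ⊤) :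
    Function.Injective (homEval (Subtype.val : s → G)) := by
  intro χ ψ h
  refine AddMonoidHom.toMultiplicativeRight.injective ?_
  exact MonoidHom.eq_of_eqOn_dense hs fun x hx => congrFun h ⟨x, hx⟩

lemma homEval_basis_surjective (b : FreeGroupBasis ι G) : Function.Surjective (homEval b) := by
  intro f
  refine ⟨(b.lift fun i => Multiplicative.ofAdd (f i)).toAdditiveLeft, ?_⟩
  ext i
  simp [homEval]

lemma firstBetti_le_grank (G : Type*) [Group G] : firstBetti G ≤ grank G := by
  refine le_sInf ?_
  rintro _ ⟨s, hs, rfl⟩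
  have h := LinearMap.lift_rank_le_of_injective _ (homEval_injective hs)
  simpa [firstBetti] using OrderHomClass.mono Cardinal.toENat h

lemma card_le_firstBetti (b : FreeGroupBasis ι G) : ENat.card ι ≤ firstBetti G := by
  have hcoe := LinearMap.rank_le_of_injective (Finsupp.lcoeFun : (ι →₀ ℚ) →ₗ[ℚ] (ι → ℚ))
    DFunLike.coe_injective
  have heval := LinearMap.lift_rank_le_of_surjective _ (homEval_basis_surjective b)
  have h := OrderHomClass.mono Cardinal.toENat ((Cardinal.lift_le.2 hcoe).trans heval)
  simpa [ENat.card, firstBetti] using h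

lemma closure_range_basis (b : FreeGroupBasis ι G) : Subgroup.closure (Set.range b) = ⊤ := by
  have hb : (b : ι → G) = b.repr.symm.toMonoidHom ∘ FreeGroup.of := rfl
  rw [hb, Set.range_comp, ← MonoidHom.map_closure, FreeGroup.closure_range_of,
    Subgroup.map_top_of_surjective _ b.repr.symm.surjective]

lemma grank_le_card (b : FreeGroupBasis ι G) : grank G ≤ ENat.card ι := by
  classical
  cases finite_or_infinite ι with
  | inr _ => simp
  | inl _ =>
    have := Fintype.ofFinite ι
    refine (grank_le_card_of_closure (s := Finset.univ.image b) ?_).trans ?_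
    · simpa using closure_range_basis b
    simpa using Finset.card_image_le (s := Finset.univ) (f := b)

theorem grank_eq_firstBetti (G : Type*) [Group G] [IsFreeGroup G] : grank G = firstBetti G :=
  ((grank_le_card (IsFreeGroup.basis G)).trans (card_le_firstBetti (IsFreeGroup.basis G))).antisymm
    (firstBetti_le_grank G)

lemma nontrivial_hom [IsFreeGroup G] [Nontrivial G] : Nontrivial (Additive G →+ ℚ) := by
  have b := IsFreeGroup.basis G
  have : Nonempty (IsFreeGroup.Generators G) := by
    by_contra h
    rw [not_nonempty_iff] at h
    exact not_subsingleton G b.repr.toEquiv.subsingleton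
  exact (homEval_basis_surjective b).nontrivial

lemma isCyclic_or_exists_disjoint_zpowers (G : Type*) [Group G] [IsFreeGroup G] :
    IsCyclic G ∨ ∃ s t : G, s ≠ 1 ∧ t ≠ 1 ∧
      Disjoint (Subgroup.zpowers s) (Subgroup.zpowers t) := by
  classical
  have b := IsFreeGroup.basis G
  rcases subsingleton_or_nontrivial (IsFreeGroup.Generators G) with hι | ⟨y, z, hyz⟩
  · left
    have : IsCyclic (FreeGroup (IsFreeGroup.Generators G)) := by
      rcases isEmpty_or_nonempty (IsFreeGroup.Generators G) with _ | ⟨⟨y⟩⟩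
      · infer_instance
      · have := uniqueOfSubsingleton y
        infer_instance
    exact isCyclic_of_surjective b.repr.symm b.repr.symm.surjective
  · right
    obtain ⟨χ, hχ⟩ := homEval_basis_surjective b (Pi.single y 1)
    have hy : χ (.ofMul (b y)) = 1 := by simpa [homEval] using congrFun hχ y
    have hz : χ (.ofMul (b z)) = 0 := by simpa [homEval, hyz.symm] using congrFun hχ z
    have hne (i) : b i ≠ 1 := fun h =>
      FreeGroup.of_ne_one i (by rw [← b.repr_apply_coe, h, map_one])
    refine ⟨b y, b z, hne y, hne z, Subgroup.disjoint_def.2 ?_⟩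
    rintro _ ⟨p, rfl⟩ ⟨q, hq⟩
    have hp : (p : ℚ) = 0 := by
      have h := congrArg (fun x => χ (.ofMul x)) hq
      simpa [hy, hz] using h.symm
    simp [Int.cast_eq_zero.1 hp]

end Rank

/-! ### Collapsing the components of the complement of a set of edges -/

lemma stabilizer_edge_eq_bot {α : Type*} {A : Subgroup (FreeGroup α)}
    {S : SubMulAction A (Edge α)} (e : S) : stabilizer A e = ⊥ := by
  rw [eq_bot_iff]
  intro a ha
  by_contra hne
  exact smul_edge_ne_self (g := a) (by simpa using hne) e.1 (congrArg Subtype.val ha)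

section Components

variable {α : Type*} [DecidableEq α]

/-- The vertices `v` and `w` are joined by a path avoiding the set of edges `S`. -/
def SameComponent (S : Set (Edge α)) (v w : FreeGroup α) : Prop := Disjoint (geodesic v w) S

namespace SameComponent

variable {S : Set (Edge α)} {u v w : FreeGroup α}

lemma refl (v : FreeGroup α) : SameComponent S v v := by simp [SameComponent]

lemma symm (h : SameComponent S v w) : SameComponent S w v := by
  rwa [SameComponent, geodesic_comm]

lemma trans (huv : SameComponent S u v) (hvw : SameComponent S v w) : SameComponent S u w :=
  (Set.disjoint_union_left.2 ⟨huv, hvw⟩).mono_left (geodesic_subset_union u v w)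

lemma mono {T : Set (Edge α)} (h : SameComponent T v w) (hST : S ⊆ T) : SameComponent S v w :=
  Disjoint.mono_right hST h

lemma mul_left {T : Set (Edge α)} {g : FreeGroup α} (h : SameComponent S v w)
    (hT : ∀ e ∈ T, g⁻¹ • e ∈ S) : SameComponent T (g * v) (g * w) :=
  Set.disjoint_left.2 fun e he heT =>
    Set.disjoint_left.1 h (mem_geodesic_mul_left.1 he) (hT e heT)

lemma of_joins {e : Edge α} (H : e.Joins v w) (he : e ∉ S) : SameComponent S v w := by
  rwa [SameComponent, H.geodesic_eq, Set.disjoint_singleton_left]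

end SameComponent

variable {A : Subgroup (FreeGroup α)} (S : SubMulAction A (Edge α))

variable {S} in
lemma SameComponent.smul {v w : FreeGroup α} (h : SameComponent (S : Set (Edge α)) v w) (a : A) :
    SameComponent (S : Set (Edge α)) (a * v) (a * w) :=
  h.mul_left fun _ => S.smul_mem a⁻¹

/-- The relation of lying in the same component of the complement of `S`. -/
def componentSetoid : Setoid (FreeGroup α) where
  r := SameComponent (S : Set (Edge α))
  iseqv := ⟨.refl, .symm, .trans⟩

/-- The components of the complement of `S` in the Cayley tree. -/
def Component : Type _ := Quotient (componentSetoid S)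

namespace Component

variable {S}

/-- The component of a vertex. -/
def mk (v : FreeGroup α) : Component S := Quotient.mk (componentSetoid S) v

lemma mk_eq_mk {v w : FreeGroup α} :
    (mk v : Component S) = mk w ↔ SameComponent (S : Set (Edge α)) v w := Quotient.eq

@[elab_as_elim] lemma ind {P : Component S → Prop} (h : ∀ v, P (mk v)) (c : Component S) : P c :=
  Quotient.inductionOn c h

instance : MulAction A (Component S) where
  smul a := Quotient.map (a * ·) fun _ _ h => h.smul a
  one_smul := by rintro ⟨v⟩; exact congrArg mk (one_mul v)
  mul_smul a b := by rintro ⟨v⟩; exact congrArg mk (mul_assoc (a : FreeGroup α) b v)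

lemma smul_mk (a : A) (v : FreeGroup α) :
    a • (mk v : Component S) = mk ((a : FreeGroup α) * v) := rfl

end Component

lemma mem_stabilizer_component_iff {a : A} {v : FreeGroup α} :
    a ∈ stabilizer A (Component.mk v : Component S) ↔
      SameComponent (S : Set (Edge α)) ((a : FreeGroup α) * v) v := by
  rw [mem_stabilizer_iff, Component.smul_mk, Component.mk_eq_mk]

/-- The tree obtained from the Cayley tree by collapsing every edge outside `S`. -/
def collapsedTree : GTree A (Component S) S where
  src := ⟨fun e => .mk e.1.src, fun _ _ => rfl⟩
  tgt := ⟨fun e => .mk e.1.tgt, fun a e => congrArg Component.mk (smul_tgt (a : FreeGroup α) e.1)⟩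
  nonempty := ⟨.mk 1⟩
  apply_eq_of_forall_edge f hf := by
    refine Component.ind fun v => Component.ind fun w => ?_
    refine apply_eq_of_geodesic (f := fun v => f (.mk v)) fun e _ => ?_
    by_cases he : e ∈ S
    · exact hf ⟨e, he⟩
    · exact congrArg f (Component.mk_eq_mk.2 (.of_joins e.joins_src_tgt he))
  exists_potential φ := by
    obtain ⟨f, hf⟩ := exists_edge_potential (Function.extend Subtype.val φ 0)
    have hfS : ∀ v w, SameComponent (S : Set (Edge α)) v w → f v = f w := fun v w h =>
      apply_eq_of_geodesic fun e he => by
        have heS : ¬∃ e' : S, e'.1 = e := fun ⟨e', h'⟩ =>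
          Set.disjoint_left.1 h he (h' ▸ e'.2)
        have h := hf e
        rw [Function.extend_apply' _ _ _ heS] at h
        exact (sub_eq_zero.1 h).symm
    exact ⟨Quotient.lift f hfS, fun e => (hf e).trans (Subtype.val_injective.extend_apply φ 0 e)⟩

end Components

lemma finite_fiber_of_stabilizer_eq_bot {G X E : Type*} [Group G] [MulAction G X] [MulAction G E]
    [Finite (orbitRel.Quotient G E)] (f : E →[G] X) {x : X} (hx : stabilizer G x = ⊥) :
    {e | f e = x}.Finite := by
  refine Set.Finite.of_injOn (f := Quotient.mk (orbitRel G E)) (Set.mapsTo_univ _ _) ?_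
    Set.finite_univ
  rintro e rfl e' he' h
  obtain ⟨a, rfl⟩ := Quotient.exact h
  have ha : a ∈ stabilizer G (f (a • e')) := by
    rw [mem_stabilizer_iff]
    nth_rw 1 [← show f e' = f (a • e') from he']
    exact (map_smul f a e').symm
  rw [hx, Subgroup.mem_bot] at ha
  simp [ha]

/-! ### Bridges with respect to an invariant order on edges -/

lemma exists_invariant_edge_order (α : Type*) :
    ∃ _ : LinearOrder (Edge α), CovariantClass (FreeGroup α) (Edge α) (· • ·) (· < ·) := by
  obtain ⟨o, ho⟩ := exists_leftInvariant_order α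
  classical
  let _ : LinearOrder α := linearOrderOfSTO WellOrderingRel
  refine ⟨LinearOrder.lift' (fun e : Edge α => toLex (e.src, e.label)) fun e e' h => ?_, ⟨?_⟩⟩
  · have := Prod.ext_iff.1 (toLex.injective h)
    exact Edge.ext this.1 this.2
  · intro g e e' h
    rcases Prod.Lex.toLex_lt_toLex.1 h with h | ⟨h, h'⟩
    · exact Prod.Lex.toLex_lt_toLex.2 (Or.inl (ho _ _ _ h))
    · exact Prod.Lex.toLex_lt_toLex.2 (Or.inr ⟨congrArg (g * ·) h, h'⟩)

section EdgeOrder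

variable {α : Type*} [LinearOrder (Edge α)]
  [CovariantClass (FreeGroup α) (Edge α) (· • ·) (· < ·)]

lemma smul_edge_lt (g : FreeGroup α) {e e' : Edge α} (h : e < e') : g • e < g • e' :=
  CovariantClass.elim g h

lemma lt_inv_smul_edge_iff {g : FreeGroup α} {e e' : Edge α} : e < g⁻¹ • e' ↔ g • e < e' :=
  ⟨fun h => by simpa using smul_edge_lt g h, fun h => by simpa using smul_edge_lt g⁻¹ h⟩

lemma le_inv_smul_edge_iff {g : FreeGroup α} {e e' : Edge α} : e ≤ g⁻¹ • e' ↔ g • e ≤ e' := by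
  rw [← not_lt, ← not_lt, ← lt_inv_smul_edge_iff (g := g⁻¹), inv_inv]

lemma smul_edge_le (g : FreeGroup α) {e e' : Edge α} (h : e ≤ e') : g • e ≤ g • e' := by
  rwa [← le_inv_smul_edge_iff, inv_smul_smul]

lemma pow_smul_edge_le {s : FreeGroup α} {μ : Edge α} (hs : s • μ ≤ μ) (n : ℕ) : s ^ n • μ ≤ μ := by
  induction n with
  | zero => simp
  | succ n ih =>
    rw [pow_succ, mul_smul]
    exact (smul_edge_le _ hs).trans ih

variable [DecidableEq α]

lemma SameComponent.mul_left_Ici {e : Edge α} {v w : FreeGroup α} (g : FreeGroup α)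
    (h : SameComponent (Set.Ici e) v w) : SameComponent (Set.Ici (g • e)) (g * v) (g * w) :=
  h.mul_left fun _ => le_inv_smul_edge_iff.2

lemma SameComponent.mul_left_Ioi {e : Edge α} {v w : FreeGroup α} (g : FreeGroup α)
    (h : SameComponent (Set.Ioi e) v w) : SameComponent (Set.Ioi (g • e)) (g * v) (g * w) :=
  h.mul_left fun _ => lt_inv_smul_edge_iff.2

lemma SameComponent.pow_mul_left_Ioi {s v : FreeGroup α} {μ : Edge α}
    (h : SameComponent (Set.Ioi μ) v (s * v)) (hs : s • μ ≤ μ) (n : ℕ) :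
    SameComponent (Set.Ioi μ) v (s ^ n * v) := by
  induction n with
  | zero => simpa using SameComponent.refl v
  | succ n ih =>
    have hstep := (h.mul_left_Ioi (s ^ n)).mono (Set.Ioi_subset_Ioi (pow_smul_edge_le hs n))
    rw [← mul_assoc, ← pow_succ] at hstep
    exact ih.trans hstep

end EdgeOrder

section Bridges

variable {α : Type*} [DecidableEq α] [LinearOrder (Edge α)]

lemma exists_max_geodesic {v w : FreeGroup α} (h : v ≠ w) :
    ∃ μ ∈ geodesic v w, SameComponent (Set.Ioi μ) v w := by
  obtain ⟨e, -, -, he⟩ := exists_joins_mem_geodesic h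
  obtain ⟨μ, hμ, hmax⟩ := Set.exists_max_image _ id (finite_geodesic v w) ⟨e, he⟩
  exact ⟨μ, hμ, Set.disjoint_left.2 fun e he => not_lt.2 (hmax e he)⟩

/-- From `u`, along edges less than `e`, one reaches two distinct vertices in the same `A`-orbit,
that is, a loop in the quotient of the Cayley tree by `A`. -/
def ReachesLoopBelow (A : Subgroup (FreeGroup α)) (e : Edge α) (u : FreeGroup α) : Prop :=
  ∃ v, ∃ s ∈ A, s ≠ 1 ∧ SameComponent (Set.Ici e) u v ∧ SameComponent (Set.Ici e) u (s * v)

namespace ReachesLoopBelow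

variable {A : Subgroup (FreeGroup α)} {e : Edge α} {u : FreeGroup α}

lemma mono {B : Subgroup (FreeGroup α)} (hAB : A ≤ B) (h : ReachesLoopBelow A e u) :
    ReachesLoopBelow B e u := by
  obtain ⟨v, s, hs, h⟩ := h
  exact ⟨v, s, hAB hs, h⟩

variable [CovariantClass (FreeGroup α) (Edge α) (· • ·) (· < ·)]

lemma smul (h : ReachesLoopBelow A e u) {a : FreeGroup α} (ha : a ∈ A) :
    ReachesLoopBelow A (a • e) (a * u) := by
  obtain ⟨v, s, hs, hs1, hv, hsv⟩ := h
  refine ⟨a * v, a * s * a⁻¹, A.mul_mem (A.mul_mem ha hs) (A.inv_mem ha), by simpa using hs1,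
    hv.mul_left_Ici a, ?_⟩
  simpa [mul_assoc] using hsv.mul_left_Ici a

lemma exists_ray (h : ReachesLoopBelow A e u) :
    ∃ v, ∃ s ∈ A, s ≠ 1 ∧ ∀ n : ℕ, SameComponent (Set.Ici e) u (s ^ n * v) := by
  obtain ⟨v, s, hs, hs1, hv, hsv⟩ := h
  obtain ⟨μ, hμ, hmax⟩ := exists_max_geodesic (v := v) (w := s * v) (by simpa using hs1)
  have hμe : Set.Ici e ⊆ Set.Ioi μ :=
    Set.Ici_subset_Ioi.2 (not_le.1 (Set.disjoint_left.1 (hv.symm.trans hsv) hμ))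
  rcases le_total (s • μ) μ with hle | hle
  · exact ⟨v, s, hs, hs1, fun n => hv.trans ((hmax.pow_mul_left_Ioi hle n).mono hμe)⟩
  · refine ⟨s * v, s⁻¹, A.inv_mem hs, inv_ne_one.2 hs1, fun n =>
      hsv.trans (SameComponent.mono (.pow_mul_left_Ioi ?_ ?_ n) hμe)⟩
    · rw [inv_mul_cancel_left]
      exact hmax.symm
    · rwa [← le_inv_smul_edge_iff, inv_inv]

lemma exists_mem_geodesic_one (h : ReachesLoopBelow A e u) (he : e ∈ geodesic u 1) :
    ∃ a ∈ A, e ∈ geodesic 1 a := by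
  by_contra! hA
  obtain ⟨v, s, hs, hs1, hray⟩ := h.exists_ray
  have hmem : ∀ n : ℕ, (s ^ n)⁻¹ • e ∈ geodesic 1 v := by
    intro n
    rw [← mem_geodesic_mul_left, mul_one]
    have huv : e ∉ geodesic u (s ^ n * v) := Set.disjoint_right.1 (hray n) Set.self_mem_Ici
    have h1s := hA _ (A.pow_mem hs n)
    rw [mem_geodesic_iff_xor u 1, mem_geodesic_iff_xor 1 (s ^ n)] at huv
    simpa [he, h1s] using huv
  refine Set.infinite_of_injective_forall_mem (fun m n hmn => ?_) hmem (finite_geodesic 1 v)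
  exact IsMulTorsionFree.pow_right_injective hs1 (inv_injective (smul_edge_cancel hmn))

end ReachesLoopBelow

variable [CovariantClass (FreeGroup α) (Edge α) (· • ·) (· < ·)]

/-- The edges from both ends of which one reaches, along smaller edges, a loop in the quotient by
`A`. -/
def bridges (A : Subgroup (FreeGroup α)) : SubMulAction A (Edge α) where
  carrier := {e | ReachesLoopBelow A e e.src ∧ ReachesLoopBelow A e e.tgt}
  smul_mem' a e he :=
    ⟨he.1.smul a.2, (smul_tgt (a : FreeGroup α) e).symm ▸ he.2.smul a.2⟩

lemma bridges_mono {A B : Subgroup (FreeGroup α)} (hAB : A ≤ B) {e : Edge α}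
    (he : e ∈ bridges A) : e ∈ bridges B :=
  ⟨he.1.mono hAB, he.2.mono hAB⟩

lemma Edge.Joins.mem_bridges {A : Subgroup (FreeGroup α)} {e : Edge α} {u u' : FreeGroup α}
    (H : e.Joins u u') (hu : ReachesLoopBelow A e u) (hu' : ReachesLoopBelow A e u') :
    e ∈ bridges A := by
  rcases H with ⟨rfl, rfl⟩ | ⟨rfl, rfl⟩
  exacts [⟨hu, hu'⟩, ⟨hu', hu⟩]

/-- The set of `A`-orbits of bridges of `A`; its cardinality will be `rank A - 1`. -/
abbrev BridgeOrbits (A : Subgroup (FreeGroup α)) : Type _ := orbitRel.Quotient A (bridges A)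

/-- The `B`-orbit of bridges containing an `A`-orbit of bridges, for `A ≤ B`. -/
def BridgeOrbits.map {A B : Subgroup (FreeGroup α)} (hAB : A ≤ B) :
    BridgeOrbits A → BridgeOrbits B :=
  Quotient.map (fun e => ⟨e.1, bridges_mono hAB e.2⟩) <| by
    rintro e e' ⟨a, rfl⟩
    exact ⟨⟨a, hAB a.2⟩, rfl⟩

lemma card_bridgeOrbits_inf_le (A B : Subgroup (FreeGroup α)) :
    ENat.card (BridgeOrbits (A ⊓ B)) ≤ ENat.card (BridgeOrbits A) * ENat.card (BridgeOrbits B) := by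
  rw [← ENat.card_prod]
  refine ENat.card_le_card_of_injective (f := fun o =>
    (o.map (inf_le_left : A ⊓ B ≤ A), o.map (inf_le_right : A ⊓ B ≤ B))) ?_
  rintro ⟨e⟩ ⟨e'⟩ h
  obtain ⟨a, ha⟩ := Quotient.exact (congrArg Prod.fst h)
  obtain ⟨b, hb⟩ := Quotient.exact (congrArg Prod.snd h)
  have hae : (a : FreeGroup α) • e'.1 = e.1 := congrArg Subtype.val ha
  have hbe : (b : FreeGroup α) • e'.1 = e.1 := congrArg Subtype.val hb
  have hab : (a : FreeGroup α) = b := smul_edge_cancel (hae.trans hbe.symm)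
  exact Quotient.sound ⟨⟨a, a.2, hab ▸ b.2⟩, Subtype.ext hae⟩

end Bridges

section Finiteness

variable {α : Type*} [DecidableEq α]

lemma geodesic_one_subset_of_closure {A : Subgroup (FreeGroup α)} {s : Set (FreeGroup α)}
    (hs : Subgroup.closure s = A) (U : SubMulAction A (Edge α)) (hU : ∀ x ∈ s, geodesic 1 x ⊆ U)
    {a : FreeGroup α} (ha : a ∈ A) : geodesic 1 a ⊆ U := by
  subst hs
  induction ha using Subgroup.closure_induction with
  | mem x hx => exact hU x hx
  | one => simp
  | mul x y hx _ ihx ihy =>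
    intro e he
    rcases geodesic_subset_union 1 x _ he with he | he
    · exact ihx he
    · nth_rw 1 [← mul_one x] at he
      simpa using U.smul_mem ⟨x, hx⟩ (ihy (mem_geodesic_mul_left.1 he))
  | inv x hx ihx =>
    intro e he
    have hxe := (smul_mem_geodesic (g := x)).2 he
    rw [mul_one, mul_inv_cancel, geodesic_comm] at hxe
    simpa [Subgroup.smul_def] using U.smul_mem (⟨x, hx⟩ : Subgroup.closure s)⁻¹ (ihx hxe)

lemma exists_finite_meeting_geodesics (A : Subgroup (FreeGroup α)) [Group.FG A] :
    ∃ T : Set (Edge α), T.Finite ∧ ∀ a ∈ A, ∀ e ∈ geodesic 1 a, ∃ b : A, b • e ∈ T := by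
  obtain ⟨s, hs⟩ := (Group.fg_iff_subgroup_fg A).1 ‹_›
  refine ⟨⋃ x ∈ s, geodesic 1 x, s.finite_toSet.biUnion fun x _ => finite_geodesic 1 x, ?_⟩
  let U : SubMulAction A (Edge α) :=
    { carrier := {e | ∃ b : A, b • e ∈ ⋃ x ∈ s, geodesic 1 x}
      smul_mem' := fun a e ⟨b, hb⟩ => ⟨b * a⁻¹, by rwa [mul_smul, inv_smul_smul]⟩ }
  refine fun a ha => geodesic_one_subset_of_closure hs U (fun x hx e he => ⟨1, ?_⟩) ha
  rw [one_smul]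
  exact Set.mem_biUnion hx he

variable [LinearOrder (Edge α)] [CovariantClass (FreeGroup α) (Edge α) (· • ·) (· < ·)]

lemma exists_mem_geodesic_one_of_mem_bridges {A : Subgroup (FreeGroup α)} {e : Edge α}
    (he : e ∈ bridges A) : ∃ a ∈ A, e ∈ geodesic 1 a := by
  by_cases h : e ∈ geodesic e.src 1
  · exact he.1.exists_mem_geodesic_one h
  · refine he.2.exists_mem_geodesic_one (by_contra fun h' => h ?_)
    exact e.joins_src_tgt.self_mem_geodesic_iff.2 h'

lemma finite_bridgeOrbits (A : Subgroup (FreeGroup α)) [Group.FG A] : Finite (BridgeOrbits A) := by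
  obtain ⟨T, hT, hAT⟩ := exists_finite_meeting_geodesics A
  have : Finite {e : bridges A // e.1 ∈ T} :=
    (hT.preimage (f := Subtype.val) Subtype.val_injective.injOn).to_subtype
  refine Finite.of_surjective (α := {e : bridges A // e.1 ∈ T}) (fun e => Quotient.mk _ e.1) ?_
  rintro ⟨e⟩
  obtain ⟨a, ha, hea⟩ := exists_mem_geodesic_one_of_mem_bridges e.2
  obtain ⟨b, hb⟩ := hAT a ha e.1 hea
  exact ⟨⟨b • e, hb⟩, Quotient.sound ⟨b, rfl⟩⟩

end Finiteness

section Boundary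

variable {α : Type*} [DecidableEq α]

/-- The edges of `S` with an end in the component of `v` in the complement of `S`. -/
def boundary (S : Set (Edge α)) (v : FreeGroup α) : Set (Edge α) :=
  {e ∈ S | SameComponent S v e.src ∨ SameComponent S v e.tgt}

lemma exists_mem_boundary {S : Set (Edge α)} {v u w : FreeGroup α} (hu : SameComponent S v u)
    (hw : ¬SameComponent S v w) : ∃ e ∈ geodesic u w, e ∈ boundary S v := by
  obtain ⟨e, he, heS, x, x', hx, hux, -⟩ :=
    exists_first_mem_geodesic fun h : SameComponent S u w => hw (hu.trans h)
  have hvx : SameComponent S v x := hu.trans (Set.disjoint_sdiff_left.mono_left hux)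
  rcases hx with ⟨rfl, -⟩ | ⟨-, rfl⟩
  exacts [⟨e, he, heS, Or.inl hvx⟩, ⟨e, he, heS, Or.inr hvx⟩]

lemma finite_boundary {A : Subgroup (FreeGroup α)} (S : SubMulAction A (Edge α))
    [Finite (orbitRel.Quotient A S)] {v : FreeGroup α}
    (hv : stabilizer A (Component.mk v : Component S) = ⊥) :
    (boundary (S : Set (Edge α)) v).Finite := by
  have hfin := (finite_fiber_of_stabilizer_eq_bot (collapsedTree S).src hv).union
    (finite_fiber_of_stabilizer_eq_bot (collapsedTree S).tgt hv)
  refine (hfin.image Subtype.val).subset ?_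
  rintro e ⟨heS, he⟩
  exact ⟨⟨e, heS⟩, he.imp (fun h => Component.mk_eq_mk.2 h.symm)
    (fun h => Component.mk_eq_mk.2 h.symm), rfl⟩

variable [LinearOrder (Edge α)] [CovariantClass (FreeGroup α) (Edge α) (· • ·) (· < ·)]

lemma exists_orbit_pair_sameComponent {A : Subgroup (FreeGroup α)} (hA : A ≠ ⊥) {v : FreeGroup α}
    (hfin : (boundary (bridges A : Set (Edge α)) v).Finite) :
    ∃ s ∈ A, s ≠ 1 ∧ ∃ w, SameComponent (bridges A : Set (Edge α)) v w ∧
      SameComponent (bridges A : Set (Edge α)) v (s * w) := by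
  rcases (boundary (bridges A : Set (Edge α)) v).eq_empty_or_nonempty with hempty | hne
  · have hall : ∀ w, SameComponent (bridges A : Set (Edge α)) v w := fun w => by
      by_contra hw
      obtain ⟨e, -, he⟩ := exists_mem_boundary (.refl v) hw
      simp [hempty] at he
    obtain ⟨s, hs, hs1⟩ := (Subgroup.bot_or_exists_ne_one A).resolve_left hA
    exact ⟨s, hs, hs1, v, hall _, hall _⟩
  · obtain ⟨e, he, hmin⟩ := Set.exists_min_image _ id hfin hne
    obtain ⟨u, hu, w, s, hs, hs1, hw, hsw⟩ : ∃ u, SameComponent (bridges A : Set (Edge α)) v u ∧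
        ReachesLoopBelow A e u := by
      rcases he with ⟨heA, he | he⟩
      exacts [⟨_, he, heA.1⟩, ⟨_, he, heA.2⟩]
    have hbelow : ∀ w, SameComponent (Set.Ici e) u w →
        SameComponent (bridges A : Set (Edge α)) v w := fun w huw => by
      by_contra hcon
      obtain ⟨e', he', he'D⟩ := exists_mem_boundary hu hcon
      exact Set.disjoint_left.1 huw he' (hmin e' he'D)
    exact ⟨s, hs, hs1, w, hbelow w hw, hbelow _ hsw⟩

lemma nontrivial_stabilizer_component {A : Subgroup (FreeGroup α)} (hA : A ≠ ⊥)
    [Finite (BridgeOrbits A)] (c : Component (bridges A)) : Nontrivial (stabilizer A c) := by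
  rw [Subgroup.nontrivial_iff_ne_bot]
  induction c using Component.ind with | h v => ?_
  intro hbot
  obtain ⟨s, hs, hs1, w, hw, hsw⟩ := exists_orbit_pair_sameComponent hA (finite_boundary _ hbot)
  have hmem : ⟨s, hs⟩ ∈ stabilizer A (Component.mk v : Component (bridges A)) :=
    (mem_stabilizer_component_iff _).2 ((hw.smul ⟨s, hs⟩).trans hsw.symm)
  rw [hbot] at hmem
  exact hs1 (congrArg Subtype.val hmem)

end Boundary

/-! ### Components of the complement of the bridges have cyclic stabilizers -/

section Translation

variable {α : Type*} [DecidableEq α]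

lemma Edge.Joins.displacement_lt {e : Edge α} {v z g : FreeGroup α} (H : e.Joins v z) (hg : g ≠ 1)
    (h : e ∈ geodesic v (g * v)) (h' : e ∈ geodesic v (g⁻¹ * v)) :
    (geodesic z (g * z)).ncard < (geodesic v (g * v)).ncard := by
  have hge : g • e ∈ geodesic (g * v) z := by
    rw [geodesic_comm, H.geodesic_eq_sdiff h]
    refine ⟨?_, smul_edge_ne_self hg e⟩
    rw [geodesic_comm]
    simpa using (smul_mem_geodesic (g := g)).2 h'
  have hz : geodesic z (g * z) = (geodesic v (g * v) \ {e}) \ {g • e} := by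
    rw [geodesic_comm, (H.smul g).geodesic_eq_sdiff hge, geodesic_comm, H.geodesic_eq_sdiff h]
  rw [hz]
  have hfin := finite_geodesic v (g * v)
  exact (Set.ncard_le_ncard Set.sdiff_subset hfin.sdiff).trans_lt
    (Set.ncard_sdiff_singleton_lt_of_mem h hfin)

lemma exists_disjoint_geodesic_inv {A : Subgroup (FreeGroup α)} {S : SubMulAction A (Edge α)}
    {c : Component S} {s : A} (hs : s ∈ stabilizer A c) (hs1 : (s : FreeGroup α) ≠ 1) :
    ∃ v, Component.mk v = c ∧
      Disjoint (geodesic v ((s : FreeGroup α)⁻¹ * v)) (geodesic v (s * v)) := by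
  obtain ⟨v, rfl, hmin⟩ := (measure fun v : FreeGroup α => (geodesic v (s * v)).ncard).wf.has_min
    {v | Component.mk v = c} (c.ind fun v => ⟨v, rfl⟩)
  refine ⟨v, rfl, by_contra fun hmeet => ?_⟩
  obtain ⟨e, z, hvz, he', he⟩ := exists_joins_mem_geodesic_inter hmeet
  have hsv : SameComponent (S : Set (Edge α)) v (s * v) :=
    ((mem_stabilizer_component_iff S).1 hs).symm
  have hz : SameComponent (S : Set (Edge α)) v z := .of_joins hvz (Set.disjoint_left.1 hsv he)
  exact hmin z (Component.mk_eq_mk.2 hz.symm) (hvz.displacement_lt hs1 he he')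

lemma exists_smul_mem_geodesic_of_mem_geodesic_pow {s v : FreeGroup α} {e : Edge α} {n : ℕ}
    (h : e ∈ geodesic v (s ^ n * v)) : ∃ j : ℕ, (s ^ j)⁻¹ • e ∈ geodesic v (s * v) := by
  induction n with
  | zero => simp at h
  | succ n ih =>
    rcases geodesic_subset_union _ (s ^ n * v) _ h with h | h
    · exact ih h
    · rw [pow_succ, mul_assoc, mem_geodesic_mul_left] at h
      exact ⟨n, h⟩

lemma disjoint_geodesic_pow {s v : FreeGroup α} (hs : s ≠ 1)
    (hd : Disjoint (geodesic v (s⁻¹ * v)) (geodesic v (s * v))) (n : ℕ) :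
    Disjoint (geodesic v (s ^ n * v)) (geodesic (s ^ n * v) (s ^ (n + 1) * v)) := by
  induction n with
  | zero => simp
  | succ n ih =>
    have hstep := disjoint_geodesic_mul_left (s ^ (n + 1)) hd
    rw [← mul_assoc, ← mul_assoc, ← pow_succ, pow_succ s n, mul_inv_cancel_right] at hstep
    rw [geodesic_comm] at ih ⊢
    rw [pow_succ s n] at ih ⊢
    exact disjoint_geodesic_of_local (by simpa using hs) ih hstep

end Translation

lemma finite_setOf_pow_smul_mem {α : Type*} {s t : FreeGroup α} (hs : s ≠ 1)
    (hst : Disjoint (Subgroup.zpowers s) (Subgroup.zpowers t)) {T : Set (Edge α)} (hT : T.Finite)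
    (e : Edge α) : {i : ℕ | ∃ j : ℕ, (t ^ j)⁻¹ • s ^ i • e ∈ T}.Finite := by
  choose! j hj using fun (i : ℕ) (hi : ∃ j : ℕ, (t ^ j)⁻¹ • s ^ i • e ∈ T) => hi
  refine .of_injOn (f := fun i => (t ^ j i)⁻¹ • s ^ i • e) (fun i hi => hj i hi) ?_ hT
  intro i _ k _ hik
  have hmul : (t ^ j i)⁻¹ * s ^ i = (t ^ j k)⁻¹ * s ^ k :=
    smul_edge_cancel (e := e) (by simpa only [mul_smul] using hik)
  have hpow : s ^ i * (s ^ k)⁻¹ = t ^ j i * (t ^ j k)⁻¹ := by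
    rw [mul_inv_eq_iff_eq_mul, mul_assoc, ← hmul, mul_inv_cancel_left]
  have hone : s ^ i * (s ^ k)⁻¹ = 1 := Subgroup.disjoint_def.1 hst
    (mul_mem (Subgroup.npow_mem_zpowers s i) (inv_mem (Subgroup.npow_mem_zpowers s k)))
    (hpow ▸ mul_mem (Subgroup.npow_mem_zpowers t _) (inv_mem (Subgroup.npow_mem_zpowers t _)))
  exact IsMulTorsionFree.pow_right_injective hs (mul_inv_eq_one.1 hone)

section Axes

variable {α : Type*} [DecidableEq α] [LinearOrder (Edge α)]

/-- The element `s` translates the ray from `v` through `s * v`, `s ^ 2 * v`, …, along which the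
greatest edge of each period decreases, starting from `μ`. -/
structure IsDescendingAxis (s v : FreeGroup α) (μ : Edge α) : Prop where
  sameComponent : SameComponent (Set.Ioi μ) v (s * v)
  smul_lt : s • μ < μ
  pow_smul_mem : ∀ i n : ℕ, i < n → s ^ i • μ ∈ geodesic v (s ^ n * v)

lemma IsDescendingAxis.ne_one {s v : FreeGroup α} {μ : Edge α} (h : IsDescendingAxis s v μ) :
    s ≠ 1 := by
  rintro rfl
  simpa using h.smul_lt

lemma isDescendingAxis_of_disjoint {s v : FreeGroup α} {μ : Edge α} (hs : s ≠ 1)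
    (hd : Disjoint (geodesic v (s⁻¹ * v)) (geodesic v (s * v))) (hμ : μ ∈ geodesic v (s * v))
    (hmax : SameComponent (Set.Ioi μ) v (s * v)) (hlt : s • μ < μ) : IsDescendingAxis s v μ := by
  refine ⟨hmax, hlt, fun i n hin => ?_⟩
  induction n with
  | zero => omega
  | succ n ih =>
    rw [mem_geodesic_iff_xor v (s ^ n * v)]
    rcases Nat.lt_succ_iff_lt_or_eq.1 hin with h | rfl
    · exact Or.inl ⟨ih h, Set.disjoint_left.1 (disjoint_geodesic_pow hs hd n) (ih h)⟩
    · have h : s ^ i • μ ∈ geodesic (s ^ i * v) (s ^ (i + 1) * v) := by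
        rw [pow_succ, mul_assoc]
        exact smul_mem_geodesic.2 hμ
      exact Or.inr ⟨h, Set.disjoint_right.1 (disjoint_geodesic_pow hs hd i) h⟩

lemma IsDescendingAxis.exists_mem_geodesic {s t v : FreeGroup α} {μ : Edge α}
    (h : IsDescendingAxis s v μ) (hst : Disjoint (Subgroup.zpowers s) (Subgroup.zpowers t))
    (w : FreeGroup α) :
    ∃ i : ℕ, ∀ n m : ℕ, i < n → s ^ i • μ ∈ geodesic (s ^ n * v) (t ^ m * w) := by
  have hfin := finite_setOf_pow_smul_mem h.ne_one hst
    ((finite_geodesic v w).union (finite_geodesic w (t * w))) μ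
  obtain ⟨i, hi⟩ := hfin.infinite_compl.nonempty
  refine ⟨i, fun n m hin => ?_⟩
  have hvw : s ^ i • μ ∉ geodesic v w := fun h => hi ⟨0, by simpa using Or.inl h⟩
  have hw : s ^ i • μ ∉ geodesic w (t ^ m * w) := fun h =>
    hi ((exists_smul_mem_geodesic_of_mem_geodesic_pow h).imp fun _ => Or.inr)
  have hv := h.pow_smul_mem i n hin
  rw [geodesic_comm] at hv
  rw [mem_geodesic_iff_xor _ v, mem_geodesic_iff_xor v w]
  tauto

variable [CovariantClass (FreeGroup α) (Edge α) (· • ·) (· < ·)]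

lemma exists_isDescendingAxis {A : Subgroup (FreeGroup α)} {S : SubMulAction A (Edge α)}
    {c : Component S} {s : stabilizer A c} (hs : s ≠ 1) :
    ∃ σ : stabilizer A c, Subgroup.zpowers σ = Subgroup.zpowers s ∧
      ∃ v μ, Component.mk v = c ∧ IsDescendingAxis (σ : A) v μ := by
  have hs1 : ((s : A) : FreeGroup α) ≠ 1 := by simpa using hs
  obtain ⟨v, hv, hd⟩ := exists_disjoint_geodesic_inv s.2 hs1
  obtain ⟨μ, hμ, hmax⟩ := exists_max_geodesic (v := v) (w := (s : A) * v) (by simpa using hs)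
  rcases (smul_edge_ne_self hs1 μ).lt_or_gt with h | h
  · exact ⟨s, rfl, v, μ, hv, isDescendingAxis_of_disjoint hs1 hd hμ hmax h⟩
  · have hlt := lt_inv_smul_edge_iff.1 ((inv_inv ((s : A) : FreeGroup α)).symm ▸ h)
    have hμ' := (smul_mem_geodesic (g := ((s : A) : FreeGroup α)⁻¹)).2 hμ
    have hmax' := (hmax.mul_left_Ioi ((s : A) : FreeGroup α)⁻¹).symm
    rw [inv_mul_cancel_left] at hμ' hmax'
    rw [geodesic_comm] at hμ'
    refine ⟨s⁻¹, Subgroup.zpowers_inv, v, ((s : A) : FreeGroup α)⁻¹ • μ, hv, ?_⟩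
    exact isDescendingAxis_of_disjoint (inv_ne_one.2 hs1) (by simpa using hd.symm) hμ' hmax'
      (smul_edge_lt _ hlt)

lemma IsDescendingAxis.reachesLoopBelow {A : Subgroup (FreeGroup α)} {s v u : FreeGroup α}
    {μ e : Edge α} (h : IsDescendingAxis s v μ) (hs : s ∈ A) {n : ℕ} (he : s ^ n • μ < e)
    (hu : SameComponent (Set.Ici e) u (s ^ n * v)) : ReachesLoopBelow A e u := by
  refine ⟨s ^ n * v, s, hs, h.ne_one, hu, hu.trans ?_⟩
  have hstep := (h.sameComponent.mul_left_Ioi (s ^ n)).mono (Set.Ici_subset_Ioi.2 he)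
  rwa [← mul_assoc, ← pow_succ, pow_succ', mul_assoc] at hstep

lemma IsDescendingAxis.le_of_mem_geodesic {A : Subgroup (FreeGroup α)} {s t v w : FreeGroup α}
    {μ ν e : Edge α} (hμ : IsDescendingAxis s v μ) (hν : IsDescendingAxis t w ν)
    (hs : s ∈ A) (ht : t ∈ A) {n m : ℕ}
    (hvw : SameComponent (bridges A : Set (Edge α)) (s ^ n * v) (t ^ m * w))
    (he : e ∈ geodesic (s ^ n * v) (t ^ m * w)) : e ≤ s ^ n • μ ∨ e ≤ t ^ m • ν := by
  by_contra! hlt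
  obtain ⟨e', he', hmax⟩ := exists_max_geodesic (v := s ^ n * v) (w := t ^ m * w)
    (fun h => by simp [h] at he)
  have hee' : e ≤ e' := not_lt.1 (Set.disjoint_left.1 hmax he)
  obtain ⟨u, u', hj, hu, hu'⟩ := exists_joins_of_mem_geodesic he'
  have hbelow : Disjoint (geodesic (s ^ n * v) (t ^ m * w) \ {e'}) (Set.Ici e') :=
    Set.disjoint_left.2 fun f hf hle =>
      Set.disjoint_left.1 hmax hf.1 (lt_of_le_of_ne hle fun h => hf.2 h.symm)
  exact Set.disjoint_left.1 hvw he' <| hj.mem_bridges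
    (hμ.reachesLoopBelow hs (hlt.1.trans_le hee') (SameComponent.symm (hbelow.mono_left hu)))
    (hν.reachesLoopBelow ht (hlt.2.trans_le hee') (hbelow.mono_left hu'))

lemma IsDescendingAxis.not_disjoint_zpowers {A : Subgroup (FreeGroup α)} {s t v w : FreeGroup α}
    {μ ν : Edge α} (hμ : IsDescendingAxis s v μ) (hν : IsDescendingAxis t w ν)
    (hs : s ∈ A) (ht : t ∈ A)
    (hvw : ∀ n m : ℕ, SameComponent (bridges A : Set (Edge α)) (s ^ n * v) (t ^ m * w)) :
    ¬Disjoint (Subgroup.zpowers s) (Subgroup.zpowers t) := by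
  intro hst
  obtain ⟨i, hi⟩ := hμ.exists_mem_geodesic hst w
  obtain ⟨j, hj⟩ := hν.exists_mem_geodesic hst.symm v
  have hi_lt : s ^ (i + 1) • μ < s ^ i • μ := by
    rw [pow_succ, mul_smul]
    exact smul_edge_lt _ hμ.smul_lt
  have hj_lt : t ^ (j + 1) • ν < t ^ j • ν := by
    rw [pow_succ, mul_smul]
    exact smul_edge_lt _ hν.smul_lt
  have hi_le := hμ.le_of_mem_geodesic hν hs ht (hvw _ _) (hi (i + 1) (j + 1) i.lt_succ_self)
  have hj_le := hμ.le_of_mem_geodesic hν hs ht (hvw _ _)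
    (geodesic_comm (t ^ (j + 1) * w) _ ▸ hj (j + 1) (i + 1) j.lt_succ_self)
  replace hi_le := hi_le.resolve_left hi_lt.not_ge
  replace hj_le := hj_le.resolve_right hj_lt.not_ge
  exact (((hi_le.trans_lt hj_lt).trans_le hj_le).trans hi_lt).false

theorem isCyclic_stabilizer_component (A : Subgroup (FreeGroup α)) (c : Component (bridges A)) :
    IsCyclic (stabilizer A c) := by
  refine (isCyclic_or_exists_disjoint_zpowers _).resolve_right ?_
  rintro ⟨s, t, hs, ht, hst⟩
  obtain ⟨σ, hσ, v, μ, hv, hμ⟩ := exists_isDescendingAxis hs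
  obtain ⟨τ, hτ, w, ν, hw, hν⟩ := exists_isDescendingAxis ht
  refine hμ.not_disjoint_zpowers hν σ.1.2 τ.1.2 (fun n m => ?_) ?_
  · refine Component.mk_eq_mk.1 ((?_ : _ = c).trans (?_ : c = _))
    · exact (congrArg (σ.1 ^ n • ·) hv).trans (pow_mem σ.2 n)
    · exact ((congrArg (τ.1 ^ m • ·) hw).trans (pow_mem τ.2 m)).symm
  · have hinj : Function.Injective (A.subtype.comp (stabilizer A c).subtype) :=
      A.subtype_injective.comp (stabilizer A c).subtype_injective
    rw [← hσ, ← hτ] at hst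
    simpa [MonoidHom.map_zpowers] using Subgroup.disjoint_map hinj hst

end Axes

/-! ### The Hanna Neumann inequality -/

section Rank

variable {α : Type*} [DecidableEq α] [LinearOrder (Edge α)]
  [CovariantClass (FreeGroup α) (Edge α) (· • ·) (· < ·)]

lemma grank_le_card_bridgeOrbits_add_one (A : Subgroup (FreeGroup α)) :
    grank A ≤ ENat.card (BridgeOrbits A) + 1 :=
  (grank_eq_firstBetti A).trans_le
    ((collapsedTree (bridges A)).firstBetti_le (isCyclic_stabilizer_component A))

lemma card_bridgeOrbits_add_one_le_grank {A : Subgroup (FreeGroup α)} (hA : A ≠ ⊥) :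
    ENat.card (BridgeOrbits A) + 1 ≤ grank A := by
  by_cases hfg : Group.FG A
  · have := finite_bridgeOrbits A
    have := nontrivial_stabilizer_component hA
    exact ((collapsedTree (bridges A)).le_firstBetti stabilizer_edge_eq_bot
      fun _ => nontrivial_hom).trans_eq (grank_eq_firstBetti A).symm
  · exact le_sInf fun _ ⟨s, hs, _⟩ => absurd ⟨s, hs⟩ fun h => hfg ⟨h⟩

end Rank

lemma grank_inf_freeGroup_le {α : Type*} (A B : Subgroup (FreeGroup α)) (hA : A ≠ ⊥) (hB : B ≠ ⊥) :
    grank ↥(A ⊓ B) - 1 ≤ (grank A - 1) * (grank B - 1) := by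
  classical
  obtain ⟨_, _⟩ := exists_invariant_edge_order α
  have card_le {C : Subgroup (FreeGroup α)} (hC : C ≠ ⊥) :
      ENat.card (BridgeOrbits C) ≤ grank C - 1 :=
    ENat.le_sub_of_add_le_right ENat.one_ne_top (card_bridgeOrbits_add_one_le_grank hC)
  calc grank ↥(A ⊓ B) - 1 ≤ ENat.card (BridgeOrbits (A ⊓ B)) :=
        tsub_le_iff_right.2 (grank_le_card_bridgeOrbits_add_one (A ⊓ B))
    _ ≤ ENat.card (BridgeOrbits A) * ENat.card (BridgeOrbits B) := card_bridgeOrbits_inf_le A B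
    _ ≤ (grank A - 1) * (grank B - 1) := mul_le_mul' (card_le hA) (card_le hB)

end HannaNeumann

theorem classical_hanna_neumann_general {F : Type*} [Group F] [IsFreeGroup F]
    (A B : Subgroup F) (hA : A ≠ ⊥) (hB : B ≠ ⊥) :
    grank ↥(A ⊓ B) - 1 ≤ (grank A - 1) * (grank B - 1) := by
  let φ := (IsFreeGroup.toFreeGroup F).toMonoidHom
  have hφ : Function.Injective φ := (IsFreeGroup.toFreeGroup F).injective
  have hrank (C : Subgroup F) : grank C = grank (C.map φ) :=
    HannaNeumann.grank_congr (C.equivMapOfInjective φ hφ)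
  have hmap {C : Subgroup F} (hC : C ≠ ⊥) : C.map φ ≠ ⊥ := by
    rwa [ne_eq, Subgroup.map_eq_bot_iff_of_injective _ hφ]
  rw [hrank A, hrank B, hrank (A ⊓ B), Subgroup.map_inf _ _ _ hφ]
  exact HannaNeumann.grank_inf_freeGroup_le _ _ (hmap hA) (hmap hB)

/-- The classical Hanna Neumann conjecture: for nontrivial finitely generated subgroups
`A, B` of a free group `F`, `rank (A ∩ B) - 1 ≤ (rank A - 1) * (rank B - 1)`. -/
theorem classical_hanna_neumann {F : Type*} [Group F] [IsFreeGroup F]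
    (A B : Subgroup F) [Group.FG A] [Group.FG B] (hA : A ≠ ⊥) (hB : B ≠ ⊥) :
    grank ↥(A ⊓ B) - 1 ≤ (grank A - 1) * (grank B - 1) :=
  classical_hanna_neumann_general A B hA hB
end

section
/- Let G be a group containing a free subgroup F of finite index, and let A and B be finitely generated free subgroups of G. Then r̄ank(A ∩ B) ≤ [G:F] · r̄ank(A) · r̄ank(B). -/
/-!
The argument is Mineyev's and Dicks's proof of the Hanna Neumann conjecture, run on a forest instead
of a tree. Let `n = [G : F]`. The Cayley graph of `G` with respect to a basis of `F` is a forest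
with `n` components, on which `G` acts freely. A left order on `F` orders its edges so that `G`
preserves the order of edges of the same component. Every finitely generated subgroup `H` of `G` has
a core: an invariant subforest with `n` components and finitely many orbits of edges.

Let `H` be infinite, and call an edge of its core a bridge if both its ends lie in infinite clusters
of smaller edges. Deleting the bridges leaves as many orbits of edges as of vertices, so by a count
of Euler characteristics there are at least `n * (rank H - 1)` orbits of bridges if `H` is free, and
at most that many in any case. An edge which is a bridge of the intersection of the cores of `A` and
`B` is a bridge of both, and since the action is free, the `A ⊓ B`-orbit of an edge is determined by
its `A`-orbit and its `B`-orbit. Hence `n * (rank (A ⊓ B) - 1)` is at most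
`n * (rank A - 1) * (n * (rank B - 1))`.
-/

open MulAction

/-! ### Acyclic graphs -/

/-- A multigraph with vertex type `V` and edge type `E`. Every edge carries an orientation, which
paths are free to ignore. -/
structure EdgeGraph (V E : Type*) where
  /-- The initial vertex of an edge. -/
  src : E → V
  /-- The terminal vertex of an edge. -/
  tgt : E → V

namespace EdgeGraph

section Paths

variable {V E : Type*} (X : EdgeGraph V E)

/-- The edge `e` joins the vertices `a` and `b`, in either direction. -/
def Joins (e : E) (a b : V) : Prop :=
  (X.src e = a ∧ X.tgt e = b) ∨ (X.src e = b ∧ X.tgt e = a)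

/-- The vertices `a` and `b` are joined by a path with all edges in `P`. -/
def Conn (P : Set E) : V → V → Prop :=
  Relation.ReflTransGen fun a b => ∃ e ∈ P, X.Joins e a b

/-- The set of vertices reachable from `v` along edges in `P`. -/
def cluster (P : Set E) (v : V) : Set V := {w | X.Conn P v w}

/-- The set of edges incident to the vertex `v`. -/
def star (v : V) : Set E := {e | ∃ w, X.Joins e v w}

/-- A graph is acyclic if every edge separates its ends. -/
def IsAcyclic : Prop := ∀ e, ¬ X.Conn {e}ᶜ (X.src e) (X.tgt e)

variable {X} {P Q : Set E} {e : E} {a b c u v w : V}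

theorem Joins.symm (h : X.Joins e a b) : X.Joins e b a := Or.symm h

theorem joins_src_tgt (e : E) : X.Joins e (X.src e) (X.tgt e) := Or.inl ⟨rfl, rfl⟩

theorem Joins.eq_or_eq (h : X.Joins e a b) (h' : X.Joins e u v) :
    (u = a ∧ v = b) ∨ (u = b ∧ v = a) := by
  rcases h with ⟨rfl, rfl⟩ | ⟨rfl, rfl⟩ <;> rcases h' with ⟨rfl, rfl⟩ | ⟨rfl, rfl⟩ <;> simp

theorem Joins.right_unique (h : X.Joins e a b) (h' : X.Joins e a c) : b = c := by
  rcases h.eq_or_eq h' with ⟨-, rfl⟩ | ⟨rfl, rfl⟩ <;> rfl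

theorem Joins.map {V' E' : Type*} {X' : EdgeGraph V' E'} {f : V → V'} {g : E → E'}
    (hs : ∀ e, X'.src (g e) = f (X.src e)) (ht : ∀ e, X'.tgt (g e) = f (X.tgt e))
    (h : X.Joins e a b) : X'.Joins (g e) (f a) (f b) := by
  rcases h with ⟨rfl, rfl⟩ | ⟨rfl, rfl⟩
  · exact Or.inl ⟨hs e, ht e⟩
  · exact Or.inr ⟨hs e, ht e⟩

namespace Conn

theorem refl (v : V) : X.Conn P v v := Relation.ReflTransGen.refl

theorem trans (h : X.Conn P a b) (h' : X.Conn P b c) : X.Conn P a c :=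
  Relation.ReflTransGen.trans h h'

theorem symm (h : X.Conn P a b) : X.Conn P b a :=
  have : Std.Symm fun a b => ∃ e ∈ P, X.Joins e a b := ⟨fun _ _ ⟨e, he, hj⟩ => ⟨e, he, hj.symm⟩⟩
  Relation.ReflTransGen.stdSymm.symm _ _ h

theorem mono (hPQ : P ⊆ Q) (h : X.Conn P a b) : X.Conn Q a b :=
  Relation.ReflTransGen.mono (fun _ _ ⟨e, he, hj⟩ => ⟨e, hPQ he, hj⟩) _ _ h

theorem of_joins (he : e ∈ P) (h : X.Joins e a b) : X.Conn P a b :=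
  Relation.ReflTransGen.single ⟨e, he, h⟩

theorem tail (h : X.Conn P a b) (he : e ∈ P) (hj : X.Joins e b c) : X.Conn P a c :=
  h.trans (of_joins he hj)

theorem conn_src (h : X.Conn P a b) (he : e ∈ P) (hj : X.Joins e b c) :
    X.Conn P a (X.src e) := by
  rcases hj with ⟨rfl, -⟩ | ⟨rfl, rfl⟩
  · exact h
  · exact h.tail he (joins_src_tgt e).symm

theorem map {V' E' : Type*} {X' : EdgeGraph V' E'} {Q : Set E'} {f : V → V'} {g : E → E'}
    (hs : ∀ e, X'.src (g e) = f (X.src e)) (ht : ∀ e, X'.tgt (g e) = f (X.tgt e))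
    (hPQ : ∀ e ∈ P, g e ∈ Q) (h : X.Conn P a b) : X'.Conn Q (f a) (f b) :=
  Relation.ReflTransGen.lift f (fun _ _ ⟨e, he, hj⟩ => ⟨g e, hPQ e he, hj.map hs ht⟩) _ _ h

theorem apply_eq {α : Type*} {f : V → α} (hf : ∀ e ∈ P, f (X.src e) = f (X.tgt e))
    (h : X.Conn P u v) : f u = f v := by
  induction h with
  | refl => rfl
  | tail _ hbc ih =>
    obtain ⟨e, he, ⟨rfl, rfl⟩ | ⟨rfl, rfl⟩⟩ := hbc
    · exact ih.trans (hf e he)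
    · exact ih.trans (hf e he).symm

theorem inter_conn (h : X.Conn P a b) : X.Conn {e ∈ P | X.Conn P a (X.src e)} a b := by
  induction h with
  | refl => exact refl a
  | tail hab hbc ih =>
    obtain ⟨e, he, hj⟩ := hbc
    exact ih.tail ⟨he, conn_src hab he hj⟩ hj

theorem eq_or_exists_max [LinearOrder E] (h : X.Conn P a b) :
    a = b ∨ ∃ y ∈ P, X.Conn P a (X.src y) ∧ X.Conn (Set.Iic y) a b := by
  induction h with
  | refl => exact Or.inl rfl
  | @tail b c hab hbc ih =>
    obtain ⟨e, he, hj⟩ := hbc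
    right
    rcases ih with rfl | ⟨y, hy, hay, hconn⟩
    · exact ⟨e, he, conn_src hab he hj, of_joins le_rfl hj⟩
    · rcases le_total e y with hey | hye
      · exact ⟨y, hy, hay, hconn.tail hey hj⟩
      · exact ⟨e, he, conn_src hab he hj,
          (hconn.mono (Set.Iic_subset_Iic.2 hye)).tail le_rfl hj⟩

/-- The two outcomes are that the path can avoid `e`, or that it can be taken to cross `e` once. -/
theorem sdiff_or_exists_joins (e : E) (h : X.Conn P a b) :
    X.Conn (P \ {e}) a b ∨
      ∃ u v, X.Joins e u v ∧ X.Conn (P \ {e}) a u ∧ X.Conn (P \ {e}) v b := by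
  induction h with
  | refl => exact Or.inl (refl a)
  | @tail b c _ hbc ih =>
    obtain ⟨x, hx, hj⟩ := hbc
    by_cases hxe : x = e
    · subst hxe
      rcases ih with hab | ⟨u, v, hj', hau, -⟩
      · exact Or.inr ⟨b, c, hj, hab, refl c⟩
      · rcases hj'.eq_or_eq hj with ⟨rfl, rfl⟩ | ⟨rfl, rfl⟩
        · exact Or.inr ⟨b, c, hj', hau, refl c⟩
        · exact Or.inl hau
    · refine ih.imp (fun hab => hab.tail ⟨hx, hxe⟩ hj) ?_
      rintro ⟨u, v, hj', hau, hvb⟩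
      exact ⟨u, v, hj', hau, hvb.tail ⟨hx, hxe⟩ hj⟩

theorem sdiff_or_sdiff (hj : X.Joins e v u) (h : X.Conn P v w) :
    X.Conn (P \ {e}) v w ∨ X.Conn (P \ {e}) u w := by
  rcases h.sdiff_or_exists_joins e with h | ⟨a, b, hj', -, hbw⟩
  · exact Or.inl h
  · rcases hj.eq_or_eq hj' with ⟨-, rfl⟩ | ⟨-, rfl⟩
    · exact Or.inr hbw
    · exact Or.inl hbw

/-- A path starting at `v` may be assumed to leave `v` once and for all along its first edge. -/
theorem eq_or_exists_joins_sdiff (h : X.Conn P v w) :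
    w = v ∨ ∃ x ∈ P, ∃ z, X.Joins x v z ∧ X.Conn (P \ {x}) z w := by
  induction h with
  | refl => exact Or.inl rfl
  | @tail b c _ hbc ih =>
    obtain ⟨y, hy, hyj⟩ := hbc
    rcases ih with rfl | ⟨x, hx, z, hxj, hconn⟩
    · exact Or.inr ⟨y, hy, c, hyj, refl c⟩
    · by_cases hyx : y = x
      · subst hyx
        rcases hxj.eq_or_eq hyj with ⟨-, rfl⟩ | ⟨-, rfl⟩
        · exact Or.inr ⟨y, hx, c, hxj, refl _⟩
        · exact Or.inl rfl
      · exact Or.inr ⟨x, hx, z, hxj, hconn.tail ⟨hy, hyx⟩ hyj⟩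

theorem exists_finite_subset (h : X.Conn P a b) : ∃ Q ⊆ P, Q.Finite ∧ X.Conn Q a b := by
  induction h with
  | refl => exact ⟨∅, Set.empty_subset _, Set.finite_empty, refl a⟩
  | tail _ hbc ih =>
    obtain ⟨e, he, hj⟩ := hbc
    obtain ⟨Q, hQP, hQ, hconn⟩ := ih
    exact ⟨insert e Q, Set.insert_subset he hQP, hQ.insert e,
      (hconn.mono (Set.subset_insert e Q)).tail (Set.mem_insert e Q) hj⟩

end Conn

theorem cluster_mono (hPQ : P ⊆ Q) : X.cluster P v ⊆ X.cluster Q v := fun _ h => Conn.mono hPQ h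

theorem cluster_subset_of_forall_joins
    (h : ∀ x ∈ Q, ∀ a b, a ∈ X.cluster P v → X.Joins x a b → x ∈ P) :
    X.cluster Q v ⊆ X.cluster P v := by
  intro w hw
  induction hw with
  | refl => exact Conn.refl v
  | tail _ hbc ih =>
    obtain ⟨x, hx, hj⟩ := hbc
    exact Conn.tail ih (h x hx _ _ ih hj) hj

theorem IsAcyclic.not_conn (hX : X.IsAcyclic) (hj : X.Joins e a b) : ¬ X.Conn {e}ᶜ a b := by
  rcases hj with ⟨rfl, rfl⟩ | ⟨rfl, rfl⟩
  · exact hX e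
  · exact fun h => hX e h.symm

theorem IsAcyclic.conn_sdiff_singleton (hX : X.IsAcyclic) (hP : X.Conn P a b)
    (he : X.Conn {e}ᶜ a b) : X.Conn (P \ {e}) a b := by
  have hsub : P \ {e} ⊆ {e}ᶜ := fun x hx => hx.2
  refine (hP.sdiff_or_exists_joins e).resolve_right ?_
  rintro ⟨u, v, hj, hau, hvb⟩
  exact hX.not_conn hj ((hau.mono hsub).symm.trans (he.trans (hvb.mono hsub).symm))

theorem IsAcyclic.conn_inter (hX : X.IsAcyclic) (hP : X.Conn P a b) (hQ : X.Conn Q a b) :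
    X.Conn (P ∩ Q) a b := by
  obtain ⟨R, hRP, hR, hconn⟩ := hP.exists_finite_subset
  have hremove : ∀ D : Set E, D.Finite → Disjoint Q D → X.Conn (R \ D) a b := by
    intro D hD
    induction D, hD using Set.Finite.induction_on with
    | empty => simpa using hconn
    | @insert e D _ _ ih =>
      intro hdisj
      obtain ⟨heQ, hDQ⟩ := Set.disjoint_insert_right.1 hdisj
      rw [← Set.union_singleton, ← Set.sdiff_sdiff]
      exact hX.conn_sdiff_singleton (ih hDQ) (hQ.mono (Set.subset_compl_singleton_iff.2 heQ))
  refine (hremove (R \ Q) hR.sdiff Set.disjoint_sdiff_right).mono ?_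
  rw [Set.sdiff_sdiff_right_self]
  exact Set.inter_subset_inter_left Q hRP

theorem exists_infinite_cluster_sdiff (hv : (X.star v).Finite) (h : (X.cluster P v).Infinite) :
    ∃ x ∈ P, ∃ z, X.Joins x v z ∧ (X.cluster (P \ {x}) z).Infinite := by
  by_contra! hno
  have hfin : ({v} ∪ ⋃ x ∈ P ∩ X.star v, ⋃ z ∈ {z | X.Joins x v z},
      X.cluster (P \ {x}) z).Finite := by
    refine (Set.finite_singleton v).union ((hv.inter_of_right P).biUnion fun x hx => ?_)
    refine Set.Finite.biUnion ?_ fun z hz => hno x hx.1 z hz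
    exact Set.Subsingleton.finite fun a ha b hb => Joins.right_unique ha hb
  refine h (hfin.subset fun w hw => ?_)
  rcases Conn.eq_or_exists_joins_sdiff hw with rfl | ⟨x, hx, z, hj, hconn⟩
  · exact Or.inl rfl
  · exact Or.inr (Set.mem_biUnion ⟨hx, z, hj⟩ (Set.mem_biUnion hj hconn))

end Paths

end EdgeGraph

/-! ### Bridges of ordered graphs -/

namespace EdgeGraph

section Order

variable {V E : Type*} [LinearOrder E] (X : EdgeGraph V E)

/-- The edges of `P` both of whose ends lie in infinite clusters of smaller edges of `P`. Their
orbits compute reduced ranks. -/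
def bridges (P : Set E) : Set E :=
  {e ∈ P | (X.cluster (P ∩ Set.Iio e) (X.src e)).Infinite ∧
    (X.cluster (P ∩ Set.Iio e) (X.tgt e)).Infinite}

/-- The end `v` of the edge `e` lies in an infinite cluster of edges other than `e` and no larger
than `f`. -/
def Escapes (e : E) (v : V) (f : E) : Prop := (X.cluster (Set.Iic f \ {e}) v).Infinite

/-- The edge `e` is not a bridge and `v` is the end of `e` that is later to escape. The level `f`
that distinguishes the two ends is required to lie in the component of `v`, because orders are only
invariant on components. -/
def IsTail (e : E) (v : V) : Prop :=
  e ∉ X.bridges Set.univ ∧ ∃ w f, X.Joins e v w ∧ X.Conn Set.univ v (X.src f) ∧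
    X.Escapes e w f ∧ ¬ X.Escapes e v f

/-- The conditions on an ordered graph under which tails match the vertices with the edges that are
not bridges. -/
structure IsTame : Prop where
  isAcyclic : X.IsAcyclic
  finite_star : ∀ v, (X.star v).Finite
  infinite_cluster_univ : ∀ v, (X.cluster Set.univ v).Infinite
  exists_infinite_cluster_Iic : ∀ {P : Set E} {v : V}, (X.cluster P v).Infinite →
    ∃ f ∈ P, X.Conn P v (X.src f) ∧ (X.cluster (Set.Iic f) v).Infinite

variable {X} {P Q L : Set E} {e e' f g : E} {u v w z : V}

theorem bridges_mono (hPQ : P ⊆ Q) : X.bridges P ⊆ X.bridges Q := fun _ he =>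
  ⟨hPQ he.1, he.2.1.mono (cluster_mono (Set.inter_subset_inter_left _ hPQ)),
    he.2.2.mono (cluster_mono (Set.inter_subset_inter_left _ hPQ))⟩

theorem mem_bridges_univ_iff (hj : X.Joins e u v) :
    e ∈ X.bridges Set.univ ↔ X.Escapes e u e ∧ X.Escapes e v e := by
  simp only [bridges, Escapes, Set.univ_inter, Set.Iic_sdiff_right, Set.sep_univ]
  rcases hj with ⟨rfl, rfl⟩ | ⟨rfl, rfl⟩
  · rfl
  · exact and_comm

theorem Escapes.mono (h : X.Escapes e v f) (hfg : f ≤ g) : X.Escapes e v g :=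
  Set.Infinite.mono (cluster_mono fun _ hx => ⟨le_trans hx.1 hfg, hx.2⟩) h

theorem escapes_or_escapes (hj : X.Joins e u v) (h : (X.cluster (Set.Iic f) v).Infinite) :
    X.Escapes e u f ∨ X.Escapes e v f := by
  refine Set.infinite_union.1 (h.mono fun z hz => ?_)
  exact (Conn.sdiff_or_sdiff hj.symm hz).symm

/-- The cluster of `w` without `e'` does not reach `e`, since that would close a cycle. -/
theorem Escapes.of_adjacent (hX : X.IsAcyclic) (hj : X.Joins e u v) (hj' : X.Joins e' u w)
    (hne : e' ≠ e) (hle : e' ≤ g) (h : X.Escapes e' w g) : X.Escapes e u g := by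
  refine Set.Infinite.mono (fun z hz => ?_) h
  have havoid : X.Conn (Set.Iic g \ {e}) w z := by
    induction hz with
    | refl => exact Conn.refl w
    | @tail a b hwa hab ih =>
      obtain ⟨x, hx, hxj⟩ := hab
      refine ih.tail ⟨hx.1, ?_⟩ hxj
      rintro rfl
      have hwa : X.Conn {e'}ᶜ w a := Conn.mono (fun y hy => hy.2) hwa
      refine hX.not_conn hj'.symm ?_
      rcases hj.eq_or_eq hxj with ⟨rfl, rfl⟩ | ⟨rfl, rfl⟩
      · exact hwa
      · exact hwa.tail (e := x) (Ne.symm hne) hxj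
  exact (Conn.of_joins (P := Set.Iic g \ {e}) ⟨hle, hne⟩ hj').trans havoid

theorem exists_mem_forall_lt_of_notMem_lowerBounds {D : Set E} (hD : D.Finite) (hL : L.Nonempty) :
    ∃ f ∈ L, ∀ x ∈ D, x ∉ lowerBounds L → f < x := by
  rcases (D \ lowerBounds L).eq_empty_or_nonempty with hempty | hne
  · exact ⟨hL.some, hL.some_mem, fun x hx hxL => (hempty.subset ⟨hx, hxL⟩).elim⟩
  · obtain ⟨y, hy, hmin⟩ := Set.exists_min_image _ id hD.sdiff hne
    obtain ⟨f, hf, hfy⟩ : ∃ f ∈ L, f < y := by simpa [lowerBounds] using hy.2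
    exact ⟨f, hf, fun x hx hxL => hfy.trans_le (hmin x ⟨hx, hxL⟩)⟩

theorem infinite_cluster_lowerBounds (hX : ∀ v, (X.star v).Finite) (hL : L.Nonempty)
    (hv : ∀ f ∈ L, X.Escapes e v f) : (X.cluster (lowerBounds L \ {e}) v).Infinite := by
  intro hfin
  obtain ⟨f, hf, hfx⟩ := exists_mem_forall_lt_of_notMem_lowerBounds
    (hfin.biUnion fun w _ => hX w) hL
  refine hv f hf (hfin.subset (cluster_subset_of_forall_joins fun x hx a b ha hj => ⟨?_, hx.2⟩))
  by_contra hxL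
  exact (hfx x (Set.mem_biUnion ha ⟨b, hj⟩) hxL).not_ge hx.1

/-- If the ends of `e` escaped at the same levels `L`, both would reach the least element of `L`
without crossing `e`. -/
theorem IsTame.exists_escapes_ne (hX : X.IsTame) (hj : X.Joins e u v) :
    ∃ f, X.Conn Set.univ v (X.src f) ∧ ¬ (X.Escapes e u f ↔ X.Escapes e v f) := by
  by_contra! htie
  set L : Set E := {f | X.Conn Set.univ v (X.src f) ∧ X.Escapes e v f}
  have hmem : ∀ {a f}, a = u ∨ a = v → X.Conn Set.univ a (X.src f) →
      (X.cluster (Set.Iic f) a).Infinite → f ∈ L := by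
    rintro a f ha haf hinf
    have hvf : X.Conn Set.univ v (X.src f) := by
      rcases ha with rfl | rfl
      · exact (Conn.of_joins (Set.mem_univ e) hj.symm).trans haf
      · exact haf
    refine ⟨hvf, ?_⟩
    rcases ha with rfl | rfl
    · exact (escapes_or_escapes hj.symm hinf).elim id (htie f hvf).1
    · exact (escapes_or_escapes hj hinf).elim (htie f hvf).1 id
  have hL : L.Nonempty := by
    obtain ⟨f, -, hvf, hinf⟩ := hX.exists_infinite_cluster_Iic (hX.infinite_cluster_univ v)
    exact ⟨f, hmem (Or.inr rfl) hvf hinf⟩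
  have hleast : ∀ a, a = u ∨ a = v → (∀ f ∈ L, X.Escapes e a f) →
      ∃ f ∈ L, f ∈ lowerBounds L ∧ X.Conn {e}ᶜ a (X.src f) := by
    intro a ha hesc
    obtain ⟨f, hf, haf, hinf⟩ :=
      hX.exists_infinite_cluster_Iic (infinite_cluster_lowerBounds hX.finite_star hL hesc)
    exact ⟨f, hmem ha (haf.mono (Set.subset_univ _)) hinf, hf.1, haf.mono fun x hx => hx.2⟩
  obtain ⟨f, hf, hfL, huf⟩ := hleast u (Or.inl rfl) fun f hf => (htie f hf.1).2 hf.2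
  obtain ⟨g, hg, hgL, hvg⟩ := hleast v (Or.inr rfl) fun f hf => hf.2
  obtain rfl : f = g := le_antisymm (hfL hg) (hgL hf)
  exact hX.isAcyclic.not_conn hj (huf.trans hvg.symm)

theorem IsTail.eq_vertex (h : X.IsTail e u) (h' : X.IsTail e v) : u = v := by
  obtain ⟨-, w, f, hj, -, hwf, huf⟩ := h
  obtain ⟨-, w', f', hj', -, hwf', hvf'⟩ := h'
  rcases hj.eq_or_eq hj' with ⟨rfl, rfl⟩ | ⟨rfl, rfl⟩
  · rfl
  · rcases le_total f f' with hff | hff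
    · exact absurd (hwf.mono hff) hvf'
    · exact absurd (hwf'.mono hff) huf

theorem IsTame.exists_isTail_of_notMem_bridges (hX : X.IsTame) (he : e ∉ X.bridges Set.univ) :
    ∃ v, X.IsTail e v := by
  have hj := X.joins_src_tgt e
  obtain ⟨f, hf, hne⟩ := hX.exists_escapes_ne hj
  by_cases hs : X.Escapes e (X.src e) f
  · exact ⟨X.tgt e, he, X.src e, f, hj.symm, hf, hs, fun ht => hne (iff_of_true hs ht)⟩
  · exact ⟨X.src e, he, X.tgt e, f, hj, (Conn.of_joins (Set.mem_univ e) hj).trans hf,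
      by_contra fun ht => hne (iff_of_false hs ht), hs⟩

theorem IsTail.not_lt (hX : X.IsAcyclic) (he : X.IsTail e u) (he' : X.IsTail e' u) :
    ¬ e' < e := by
  intro hlt
  obtain ⟨hN, v, f, hj, -, hvf, huf⟩ := he
  obtain ⟨-, w, f', hj', -, hwf', huf'⟩ := he'
  have hescape : ∀ g, e' ≤ g → X.Escapes e' w g → X.Escapes e u g := fun g =>
    Escapes.of_adjacent hX hj hj' hlt.ne
  have hescape' : ∀ g, e ≤ g → X.Escapes e v g → X.Escapes e' u g := fun g =>
    Escapes.of_adjacent hX hj' hj hlt.ne'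
  refine hN ((mem_bridges_univ_iff hj).2 ?_)
  rcases le_total f f' with hff | hff
  · have hf'e : f' < e := lt_of_not_ge fun h => huf' (hescape' f' h (hvf.mono hff))
    exact ⟨hescape e hlt.le (hwf'.mono hf'e.le), hvf.mono (hff.trans hf'e.le)⟩
  · have hfe : f < e := (lt_of_not_ge fun h => huf (hescape f h (hwf'.mono hff))).trans hlt
    exact ⟨hescape e hlt.le (hwf'.mono (hff.trans hfe.le)), hvf.mono hfe.le⟩

theorem IsTail.eq_edge (hX : X.IsAcyclic) (h : X.IsTail e v) (h' : X.IsTail e' v) : e = e' :=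
  le_antisymm (le_of_not_gt (h.not_lt hX h')) (le_of_not_gt (h'.not_lt hX h))

/-- The smallest bridge at `v` below `g` would be followed by an even smaller edge at `v`. -/
theorem exists_escapes_notMem_bridges (hv : (X.star v).Finite) (hP : P ⊆ Set.Iic g)
    (h : (X.cluster P v).Infinite) :
    ∃ x ∉ X.bridges Set.univ, ∃ z, X.Joins x v z ∧ X.Escapes x z g := by
  by_contra! hno
  have hbridge : ∀ {Q}, Q ⊆ Set.Iic g → (X.cluster Q v).Infinite →
      ∃ x ∈ Q, x ∈ X.star v ∩ X.bridges Set.univ := by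
    intro Q hQ hinf
    obtain ⟨x, hx, z, hj, hz⟩ := exists_infinite_cluster_sdiff hv hinf
    have hesc : X.Escapes x z g := hz.mono (cluster_mono (Set.sdiff_subset_sdiff_left hQ))
    exact ⟨x, hx, ⟨z, hj⟩, by_contra fun hxb => hno x hxb z hj hesc⟩
  obtain ⟨x, hx, hxs⟩ := hbridge hP h
  obtain ⟨y, ⟨⟨⟨z, hj⟩, hyb⟩, hyg⟩, hmin⟩ := Set.exists_min_image
    (X.star v ∩ X.bridges Set.univ ∩ Set.Iic g) id ((hv.inter_of_left _).inter_of_left _)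
    ⟨x, hxs, hP hx⟩
  obtain ⟨t, ht, hts⟩ := hbridge (fun s hs => le_trans hs.1 hyg)
    ((mem_bridges_univ_iff hj).1 hyb).1
  exact ht.2 (le_antisymm ht.1 (hmin t ⟨hts, le_trans ht.1 hyg⟩))

theorem IsTame.exists_isTail (hX : X.IsTame) (v : V) : ∃ e, X.IsTail e v := by
  by_contra! hno
  have hlevel : ∀ e ∈ X.star v \ X.bridges Set.univ,
      ∃ f, X.Escapes e v f ∧ ∀ w, X.Joins e v w → ¬ X.Escapes e w f := by
    rintro e ⟨⟨w, hj⟩, he⟩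
    obtain ⟨f, hf, hne⟩ := hX.exists_escapes_ne hj.symm
    have hw : ¬ X.Escapes e w f := fun hw =>
      hno e ⟨he, w, f, hj, hf, hw, fun hv => hne (iff_of_true hw hv)⟩
    refine ⟨f, by_contra fun hv => hne (iff_of_false hw hv), fun w' hj' => ?_⟩
    rwa [← hj.right_unique hj']
  obtain ⟨f, -, -, hf⟩ := hX.exists_infinite_cluster_Iic (hX.infinite_cluster_univ v)
  obtain ⟨e, he, w, hj, -⟩ :=
    exists_escapes_notMem_bridges (hX.finite_star v) subset_rfl hf
  have : Nonempty E := ⟨e⟩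
  choose! level hlevel_near hlevel_far using hlevel
  obtain ⟨y, hy, hmin⟩ := Set.exists_min_image (X.star v \ X.bridges Set.univ) level
    (hX.finite_star v).sdiff ⟨e, ⟨w, hj⟩, he⟩
  obtain ⟨x, hx, z, hj, hesc⟩ := exists_escapes_notMem_bridges (hX.finite_star v)
    (Set.sdiff_subset (t := {y})) (hlevel_near y hy)
  exact hlevel_far x ⟨⟨z, hj⟩, hx⟩ z hj (hesc.mono (hmin x ⟨⟨z, hj⟩, hx⟩))

end Order

end EdgeGraph

/-! ### Group actions on forests -/

section Orbits

variable {H M N : Type*} [Group H] [MulAction H M] [MulAction H N]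

/-- The set of `H`-orbits of the elements of `P`. -/
def orbitSet (H : Type*) {M : Type*} [Group H] [MulAction H M] (P : Set M) :
    Set (orbitRel.Quotient H M) :=
  Quotient.mk (orbitRel H M) '' P

/-- The map induced by an equivariant map on the level of orbits. -/
def orbitMap (f : M →[H] N) : orbitRel.Quotient H M → orbitRel.Quotient H N :=
  Quotient.map f fun a b ⟨h, hab⟩ => ⟨h, by rw [← hab, f.map_smul]⟩

theorem orbit_mk_eq_iff {a b : M} :
    Quotient.mk (orbitRel H M) a = Quotient.mk (orbitRel H M) b ↔ ∃ h : H, h • b = a :=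
  Quotient.eq

theorem orbit_mk_smul (h : H) (a : M) :
    Quotient.mk (orbitRel H M) (h • a) = Quotient.mk (orbitRel H M) a :=
  orbit_mk_eq_iff.2 ⟨h, rfl⟩

theorem orbitMap_injective {f : M →[H] N} (hf : Function.Injective f) :
    Function.Injective (orbitMap f) := by
  rintro ⟨a⟩ ⟨b⟩ hab
  obtain ⟨h, hh⟩ := orbit_mk_eq_iff.1 hab
  exact orbit_mk_eq_iff.2 ⟨h, hf (by rwa [f.map_smul])⟩

theorem orbitMap_image_orbitSet (f : M →[H] N) (P : Set M) :
    orbitMap f '' orbitSet H P = orbitSet H (f '' P) := by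
  simp only [orbitSet, Set.image_image]
  rfl

theorem range_orbitMap (f : M →[H] N) : Set.range (orbitMap f) = orbitSet H (Set.range f) := by
  rw [← Set.image_univ, ← Set.image_univ, ← orbitMap_image_orbitSet, orbitSet,
    Set.image_univ_of_surjective Quotient.mk_surjective]

theorem compl_range_orbitMap (f : M →[H] N) :
    (Set.range (orbitMap f))ᶜ = orbitSet H (Set.range f)ᶜ := by
  rw [range_orbitMap]
  refine Set.Subset.antisymm ?_ ?_
  · rintro ⟨b⟩ hb
    exact ⟨b, fun hbf => hb ⟨b, hbf, rfl⟩, rfl⟩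
  · rintro _ ⟨b, hb, rfl⟩ ⟨_, ⟨a, rfl⟩, hab⟩
    obtain ⟨h, rfl⟩ := orbit_mk_eq_iff.1 hab.symm
    exact hb ⟨h • a, f.map_smul h a⟩

theorem card_orbits_add_ncard_orbitSet_compl_range [Finite (orbitRel.Quotient H N)]
    {f : M →[H] N} (hf : Function.Injective f) :
    Nat.card (orbitRel.Quotient H M) + (orbitSet H (Set.range f)ᶜ).ncard =
      Nat.card (orbitRel.Quotient H N) := by
  rw [← compl_range_orbitMap, ← Set.ncard_range_of_injective (orbitMap_injective hf),
    Set.ncard_add_ncard_compl]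

theorem exists_ne_one_smul_mem_of_infinite [Finite (orbitRel.Quotient H M)] {K : Set M}
    (hK : K.Infinite) : ∃ w ∈ K, ∃ h : H, h ≠ 1 ∧ h • w ∈ K := by
  obtain ⟨a, ha, b, hb, hne, hab⟩ := hK.exists_ne_map_eq_of_mapsTo
    (f := Quotient.mk (orbitRel H M)) (t := Set.univ) (fun _ _ => Set.mem_univ _) Set.finite_univ
  obtain ⟨h, rfl⟩ := orbit_mk_eq_iff.1 hab
  refine ⟨b, hb, h, ?_, ha⟩
  rintro rfl
  exact hne (one_smul H b)

theorem finite_fiber_of_finite_orbits [IsCancelSMul H N] [Finite (orbitRel.Quotient H M)]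
    (f : M →[H] N) (b : N) : {a | f a = b}.Finite := by
  refine Set.Finite.of_finite_image (f := Quotient.mk (orbitRel H M)) (Set.toFinite _) ?_
  rintro a rfl a' haa' hmk
  obtain ⟨h, rfl⟩ := orbit_mk_eq_iff.1 hmk
  have hh : h • f a' = f a' := by rw [← f.map_smul, haa']
  rw [IsCancelSMul.eq_one_of_smul hh, one_smul]

end Orbits

/-- An action of a group `H` on a forest. The map `comp` labels the components by `ι`, and
acyclicity is expressed by the existence of a potential for every function on the edges. -/
structure ForestAction (H V E ι : Type*) [Group H] [MulAction H V] [MulAction H E]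
    [MulAction H ι] extends EdgeGraph V E where
  /-- The component of a vertex. -/
  comp : V → ι
  src_smul : ∀ (h : H) (e : E), src (h • e) = h • src e
  tgt_smul : ∀ (h : H) (e : E), tgt (h • e) = h • tgt e
  comp_smul : ∀ (h : H) (v : V), comp (h • v) = h • comp v
  comp_tgt : ∀ e, comp (tgt e) = comp (src e)
  comp_surjective : Function.Surjective comp
  conn : ∀ u v, comp u = comp v → toEdgeGraph.Conn Set.univ u v
  exists_potential : ∀ ω : E → ℚ, ∃ f : V → ℚ, ∀ e, f (tgt e) - f (src e) = ω e

namespace ForestAction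

open EdgeGraph

variable {H V E ι : Type*} [Group H] [MulAction H V] [MulAction H E] [MulAction H ι]

section Unordered

theorem isCancelSMul_edge (X : ForestAction H V E ι) [IsCancelSMul H V] : IsCancelSMul H E where
  right_cancel' g h e hgh := IsCancelSMul.right_cancel g h (X.src e) (by
    rw [← X.src_smul, hgh, X.src_smul])

variable (X : ForestAction H V E ι)

/-- The initial vertex as an equivariant map. -/
def srcHom : E →[H] V := ⟨X.src, X.src_smul⟩

/-- The terminal vertex as an equivariant map. -/
def tgtHom : E →[H] V := ⟨X.tgt, X.tgt_smul⟩

theorem isAcyclic : X.IsAcyclic := by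
  classical
  intro e h
  obtain ⟨f, hf⟩ := X.exists_potential (Pi.single e 1)
  have hends : f (X.src e) = f (X.tgt e) := h.apply_eq fun x hx => by
    have hx := hf x
    rw [Pi.single_eq_of_ne ‹x ∈ ({e}ᶜ : Set E)›, sub_eq_zero] at hx
    exact hx.symm
  simpa [hends] using hf e

theorem finite_star [IsCancelSMul H V] [Finite (orbitRel.Quotient H E)] (v : V) :
    (X.star v).Finite := by
  refine ((finite_fiber_of_finite_orbits X.srcHom v).union
    (finite_fiber_of_finite_orbits X.tgtHom v)).subset ?_
  rintro e ⟨w, ⟨h, -⟩ | ⟨-, h⟩⟩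
  · exact Or.inl h
  · exact Or.inr h

/-- A vertex of each component. -/
noncomputable def basePoint : ι → V := Function.surjInv X.comp_surjective

theorem comp_basePoint (x : ι) : X.comp (X.basePoint x) = x :=
  Function.surjInv_eq X.comp_surjective x

theorem finite_orbits_vertices (X : ForestAction H V E ι) [Finite ι]
    [Finite (orbitRel.Quotient H E)] : Finite (orbitRel.Quotient H V) := by
  refine Set.finite_univ_iff.1 (((Set.finite_range fun x => ⟦X.basePoint x⟧).union
    ((Set.finite_range (orbitMap X.srcHom)).union (Set.finite_range (orbitMap X.tgtHom)))).subset
      ?_)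
  rintro ⟨v⟩ -
  rcases (X.conn _ v (X.comp_basePoint (X.comp v))).cases_tail with
    h | ⟨w, -, e, -, ⟨-, rfl⟩ | ⟨rfl, -⟩⟩
  · exact Or.inl ⟨X.comp v, congrArg _ h.symm⟩
  · exact Or.inr (Or.inr ⟨⟦e⟧, rfl⟩)
  · exact Or.inr (Or.inl ⟨⟦e⟧, rfl⟩)

/-- As there are finitely many components, infinitely many elements of `H` preserve the one of
`v`. -/
theorem infinite_cluster_univ [IsCancelSMul H V] [Infinite H] [Finite ι] (v : V) :
    (X.cluster Set.univ v).Infinite := by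
  obtain ⟨c, hc⟩ := Finite.exists_infinite_fiber fun h : H => h⁻¹ • X.comp v
  obtain ⟨w, rfl⟩ := X.comp_surjective c
  refine ((Set.infinite_coe_iff.1 hc).image (f := fun h : H => h • w) ?_).mono ?_
  · exact fun g _ h _ hgh => IsCancelSMul.right_cancel g h w hgh
  · rintro _ ⟨h, hh, rfl⟩
    refine X.conn _ _ ?_
    rw [X.comp_smul]
    exact inv_smul_eq_iff.1 hh

variable {X} {P Q : Set E} {e : E} {u v : V}

theorem joins_smul (h : H) (hj : X.Joins e u v) : X.Joins (h • e) (h • u) (h • v) :=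
  hj.map (X.src_smul h) (X.tgt_smul h)

theorem comp_eq_of_conn (h : X.Conn P u v) : X.comp u = X.comp v :=
  h.apply_eq fun e _ => (X.comp_tgt e).symm

theorem conn_smul_of_comp_eq (h : H) (hPQ : ∀ x ∈ P, X.comp (X.src x) = X.comp u → h • x ∈ Q)
    (huv : X.Conn P u v) : X.Conn Q (h • u) (h • v) :=
  huv.inter_conn.map (X.src_smul h) (X.tgt_smul h)
    fun x hx => hPQ x hx.1 (comp_eq_of_conn hx.2).symm

theorem infinite_cluster_smul (h : H) (hPQ : ∀ x ∈ P, X.comp (X.src x) = X.comp v → h • x ∈ Q)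
    (hv : (X.cluster P v).Infinite) : (X.cluster Q (h • v)).Infinite := by
  refine (hv.image (MulAction.injective h).injOn).mono ?_
  rintro _ ⟨w, hw, rfl⟩
  exact conn_smul_of_comp_eq h hPQ hw

end Unordered

/-- The edges are ordered so that the action preserves the order of edges of the same component. -/
class IsOrdered [LinearOrder E] (X : ForestAction H V E ι) : Prop where
  smul_lt_smul : ∀ (h : H) (e f : E), X.comp (X.src e) = X.comp (X.src f) → e < f → h • e < h • f

section Ordered

variable [LinearOrder E] {X : ForestAction H V E ι} [X.IsOrdered]
  {P : Set E} {e f y : E} {u v w : V}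

theorem smul_le_smul (h : H) (hc : X.comp (X.src e) = X.comp (X.src f)) (hle : e ≤ f) :
    h • e ≤ h • f := by
  rcases hle.eq_or_lt with rfl | hlt
  · exact le_rfl
  · exact (IsOrdered.smul_lt_smul h e f hc hlt).le

/-- The translates of a path from `w` to `h • w` by powers of `h` stay below `y` and reach
infinitely many vertices. -/
theorem infinite_cluster_Iic_of_smul_lt [IsCancelSMul H V] {h : H}
    (hw : X.Conn (Set.Iic y) w (h • w)) (hc : X.comp (X.src y) = X.comp w) (hy : h • y < y) :
    (X.cluster (Set.Iic y) w).Infinite := by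
  have hhw : h • X.comp w = X.comp w := by rw [← X.comp_smul, comp_eq_of_conn hw]
  have hanti : StrictAnti fun k : ℕ => h ^ k • y := by
    refine strictAnti_nat_of_succ_lt fun k => ?_
    simp only [pow_succ, mul_smul]
    refine IsOrdered.smul_lt_smul (X := X) _ _ _ ?_ hy
    rw [X.src_smul, X.comp_smul, hc, hhw]
  have hle : ∀ k : ℕ, h ^ k • y ≤ y := fun k => by simpa using hanti.antitone (Nat.zero_le k)
  have hconn : ∀ k : ℕ, X.Conn (Set.Iic y) w (h ^ k • w) := by
    intro k
    induction k with
    | zero => simpa using Conn.refl w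
    | succ k ih =>
      rw [pow_succ, mul_smul]
      exact ih.trans (conn_smul_of_comp_eq _
        (fun x hx hxw => (smul_le_smul _ (hxw.trans hc.symm) hx).trans (hle k)) hw)
  refine Set.infinite_of_injective_forall_mem (f := fun k : ℕ => h ^ k • w) ?_ hconn
  intro j k hjk
  refine hanti.injective ?_
  simp only [IsCancelSMul.right_cancel _ _ w hjk]

theorem infinite_cluster_Iic_of_conn_smul [IsCancelSMul H V] {h : H} (hh : h ≠ 1)
    (hw : X.Conn (Set.Iic y) w (h • w)) (hc : X.comp (X.src y) = X.comp w) :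
    (X.cluster (Set.Iic y) w).Infinite := by
  have := X.isCancelSMul_edge
  rcases lt_trichotomy (h • y) y with hlt | heq | hgt
  · exact infinite_cluster_Iic_of_smul_lt hw hc hlt
  · exact absurd (IsCancelSMul.eq_one_of_smul heq) hh
  · have hchw : X.comp w = X.comp (h • w) := comp_eq_of_conn hw
    have hlt : h⁻¹ • y < y := by
      refine (IsOrdered.smul_lt_smul (X := X) h⁻¹ _ _ ?_ hgt).trans_eq (inv_smul_smul h y)
      rw [X.src_smul, X.comp_smul, hc, ← X.comp_smul, ← hchw]
    refine Set.Infinite.mono (fun z hz => hw.trans hz)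
      (infinite_cluster_Iic_of_smul_lt (w := h • w) ?_ (hc.trans hchw) hlt)
    rw [inv_smul_smul]
    exact hw.symm

theorem exists_infinite_cluster_Iic [IsCancelSMul H V] [Finite (orbitRel.Quotient H V)]
    (hP : (X.cluster P v).Infinite) :
    ∃ f ∈ P, X.Conn P v (X.src f) ∧ (X.cluster (Set.Iic f) v).Infinite := by
  obtain ⟨w, hw, h, hh, hhw⟩ := exists_ne_one_smul_mem_of_infinite (H := H) hP
  have hne : w ≠ h • w := fun heq => hh (IsCancelSMul.eq_one_of_smul heq.symm)
  obtain ⟨y, hy, hwy, hconn⟩ :=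
    (Conn.trans (Conn.symm hw) hhw).eq_or_exists_max.resolve_left hne
  have hinf : (X.cluster (Set.Iic y) w).Infinite :=
    infinite_cluster_Iic_of_conn_smul hh hconn (comp_eq_of_conn hwy).symm
  have hvy : X.Conn P v (X.src y) := Conn.trans hw hwy
  rcases Conn.eq_or_exists_max hw with rfl | ⟨y', hy', hvy', hconn'⟩
  · exact ⟨y, hy, hvy, hinf⟩
  · rcases le_total y y' with hle | hle
    · exact ⟨y', hy', hvy', hinf.mono fun z hz =>
        hconn'.trans (Conn.mono (Set.Iic_subset_Iic.2 hle) hz)⟩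
    · exact ⟨y, hy, hvy, hinf.mono fun z hz =>
        (hconn'.mono (Set.Iic_subset_Iic.2 hle)).trans hz⟩

variable (X) in
theorem isTame [IsCancelSMul H V] [Infinite H] [Finite ι] [Finite (orbitRel.Quotient H E)] :
    X.IsTame where
  isAcyclic := X.isAcyclic
  finite_star := X.finite_star
  infinite_cluster_univ := X.infinite_cluster_univ
  exists_infinite_cluster_Iic :=
    have := X.finite_orbits_vertices
    exists_infinite_cluster_Iic

theorem escapes_smul (h : H) (hf : X.comp (X.src f) = X.comp v) (hv : X.Escapes e v f) :
    X.Escapes (h • e) (h • v) (h • f) :=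
  infinite_cluster_smul h (fun _ hx hc => ⟨smul_le_smul h (hc.trans hf.symm) hx.1,
    fun heq => hx.2 (MulAction.injective h heq)⟩) hv

theorem smul_mem_bridges (h : H) (he : e ∈ X.bridges Set.univ) :
    h • e ∈ X.bridges Set.univ := by
  have hj : X.Joins e _ _ := X.joins_src_tgt e
  rw [mem_bridges_univ_iff hj] at he
  exact (mem_bridges_univ_iff (joins_smul h hj)).2
    ⟨escapes_smul h rfl he.1, escapes_smul h (X.comp_tgt e).symm he.2⟩

theorem isTail_smul (h : H) (he : X.IsTail e v) : X.IsTail (h • e) (h • v) := by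
  obtain ⟨hb, w, f, hj, hvf, hwf, hnot⟩ := he
  have hfv : X.comp (X.src f) = X.comp v := (comp_eq_of_conn hvf).symm
  have hvw : X.comp v = X.comp w := comp_eq_of_conn (Conn.of_joins (Set.mem_univ e) hj)
  refine ⟨fun hh => hb ?_, h • w, h • f, joins_smul h hj, X.conn _ _ ?_,
    escapes_smul h (hfv.trans hvw) hwf, fun hh => hnot ?_⟩
  · simpa using smul_mem_bridges h⁻¹ hh
  · rw [X.src_smul, X.comp_smul, X.comp_smul, hfv]
  · simpa using escapes_smul h⁻¹ (by rw [X.src_smul, X.comp_smul, X.comp_smul, hfv]) hh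

variable (X) in
/-- Sending a vertex to the edge of which it is the tail is injective and misses only bridges. -/
theorem card_orbits_vertices_add [IsCancelSMul H V] [Infinite H] [Finite ι]
    [Finite (orbitRel.Quotient H E)] :
    Nat.card (orbitRel.Quotient H V) + (orbitSet H (X.bridges Set.univ)).ncard =
      Nat.card (orbitRel.Quotient H E) := by
  have hX := X.isTame
  choose t ht using hX.exists_isTail
  let τ : V →[H] E := ⟨t, fun h v => (ht _).eq_edge X.isAcyclic (isTail_smul h (ht v))⟩
  have hτ : Function.Injective τ := fun v w (hvw : t v = t w) =>
    (ht v).eq_vertex (hvw ▸ ht w)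
  have hrange : (Set.range τ)ᶜ = X.bridges Set.univ := by
    ext e
    refine ⟨fun he => by_contra fun heb => he ?_, ?_⟩
    · obtain ⟨v, hv⟩ := hX.exists_isTail_of_notMem_bridges heb
      exact ⟨v, (ht v).eq_edge X.isAcyclic hv⟩
    · rintro he ⟨v, rfl⟩
      exact (ht v).1 he
  rw [← hrange, card_orbits_add_ncard_orbitSet_compl_range hτ]

end Ordered

end ForestAction

/-! ### Counting orbits by linear algebra -/

section LinearAlgebra

open Module

theorem finrank_map_add_finrank_inf_ker {K U W : Type*} [DivisionRing K] [AddCommGroup U]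
    [Module K U] [AddCommGroup W] [Module K W] (S : Submodule K U) [FiniteDimensional K S]
    (f : U →ₗ[K] W) : finrank K (S.map f) + finrank K ↥(S ⊓ LinearMap.ker f) = finrank K S := by
  rw [← (f.domRestrict S).finrank_range_add_finrank_ker, LinearMap.range_domRestrict,
    LinearMap.ker_domRestrict, ← Submodule.map_comap_subtype,
    Submodule.finrank_map_subtype_eq]

theorem mem_range_funLeft_iff {M Q : Type*} {π : M → Q} {f : M → ℚ} :
    f ∈ LinearMap.range (LinearMap.funLeft ℚ ℚ π) ↔ Function.FactorsThrough f π := by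
  rw [Function.factorsThrough_iff]
  exact ⟨fun ⟨g, hg⟩ => ⟨g, hg.symm⟩, fun ⟨g, hg⟩ => ⟨g, hg.symm⟩⟩

theorem finrank_range_funLeft {M Q : Type*} [Finite Q] {π : M → Q} (hπ : Function.Surjective π) :
    finrank ℚ (LinearMap.range (LinearMap.funLeft ℚ ℚ π)) = Nat.card Q := by
  have := Fintype.ofFinite Q
  rw [LinearMap.finrank_range_of_inj (LinearMap.funLeft_injective_of_surjective ℚ ℚ π hπ),
    finrank_fintype_fun_eq_card, Nat.card_eq_fintype_card]

end LinearAlgebra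

section InvariantFunctions

variable {H M B : Type*} [Group H] [MulAction H M]

/-- The space of rational functions that are constant on orbits, encoded as the image of the
functions on the orbit space. -/
def invariantFunctions (H M : Type*) [Group H] [MulAction H M] : Submodule ℚ (M → ℚ) :=
  LinearMap.range (LinearMap.funLeft ℚ ℚ (Quotient.mk (orbitRel H M)))

instance [Finite (orbitRel.Quotient H M)] : FiniteDimensional ℚ (invariantFunctions H M) :=
  inferInstanceAs (FiniteDimensional ℚ
    (LinearMap.range (LinearMap.funLeft ℚ ℚ (Quotient.mk (orbitRel H M)))))

theorem finrank_invariantFunctions [Finite (orbitRel.Quotient H M)] :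
    Module.finrank ℚ (invariantFunctions H M) = Nat.card (orbitRel.Quotient H M) :=
  finrank_range_funLeft Quotient.mk_surjective

theorem mem_invariantFunctions_iff {f : M → ℚ} :
    f ∈ invariantFunctions H M ↔ ∀ (h : H) (a : M), f (h • a) = f a := by
  refine mem_range_funLeft_iff.trans ⟨fun hf h a => hf (orbit_mk_smul h a), fun hf a b hab => ?_⟩
  obtain ⟨h, rfl⟩ := orbit_mk_eq_iff.1 hab
  exact hf h b

theorem mem_invariantFunctions_of_closure_eq_top {b : B → H}
    (hb : Subgroup.closure (Set.range b) = ⊤) {f : M → ℚ} (hf : ∀ i a, f (b i • a) = f a) :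
    f ∈ invariantFunctions H M := by
  refine mem_invariantFunctions_iff.2 fun h => ?_
  induction hb.ge (Subgroup.mem_top h) using Subgroup.closure_induction with
  | mem x hx =>
    obtain ⟨i, rfl⟩ := hx
    exact hf i
  | one => simp
  | mul x y _ _ hx hy => intro a; rw [mul_smul, hx, hy]
  | inv x _ hx => intro a; rw [← hx, smul_inv_smul]

end InvariantFunctions

section FreeGroups

variable {H V B : Type*} [Group H] [MulAction H V]

theorem closure_range_freeGroupBasis (b : FreeGroupBasis B H) :
    Subgroup.closure (Set.range b) = ⊤ := by
  have hrange : Set.range b = b.repr.symm '' Set.range FreeGroup.of := by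
    rw [← Set.range_comp]
    rfl
  have hmap := MonoidHom.map_closure (b.repr.symm : FreeGroup B →* H) (Set.range FreeGroup.of)
  rw [FreeGroup.closure_range_of, ← MonoidHom.range_eq_map] at hmap
  rw [hrange]
  exact hmap.symm.trans (MonoidHom.range_eq_top.2 b.repr.symm.surjective)

theorem exists_forall_map_smul_eq_mul (H V : Type*) [Group H] [MulAction H V] [IsCancelSMul H V] :
    ∃ t : V → H, ∀ (h : H) (v : V), t (h • v) = h * t v := by
  choose t ht using fun v : V =>
    orbit_mk_eq_iff.1 (Quotient.out_eq (Quotient.mk (orbitRel H V) v)).symm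
  refine ⟨t, fun h v => IsCancelSMul.right_cancel _ _ (Quotient.mk (orbitRel H V) v).out ?_⟩
  rw [mul_smul, ht v]
  simpa only [orbit_mk_smul] using ht (h • v)

/-- The generators act on `V × ℚ` by `(v, q) ↦ (b i • v, q + φ i v)`; since the group is free, this
extends to an action, and `f` is read off the orbits of a transversal. -/
theorem exists_forall_basis_smul_eq_add [IsCancelSMul H V] (b : FreeGroupBasis B H)
    (φ : B → V → ℚ) : ∃ f : V → ℚ, ∀ i v, f (b i • v) = f v + φ i v := by
  let Φ : H →* Equiv.Perm (V × ℚ) := b.lift fun i =>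
    { toFun p := (b i • p.1, p.2 + φ i p.1)
      invFun p := ((b i)⁻¹ • p.1, p.2 - φ i ((b i)⁻¹ • p.1))
      left_inv p := by simp
      right_inv p := by simp }
  have hΦ : ∀ i p, Φ (b i) p = (b i • p.1, p.2 + φ i p.1) := fun i p => by simp [Φ]
  have hfst : ∀ h p, (Φ h p).1 = h • p.1 := by
    intro h
    induction (closure_range_freeGroupBasis b).ge (Subgroup.mem_top h)
      using Subgroup.closure_induction with
    | mem x hx =>
      obtain ⟨i, rfl⟩ := hx
      exact fun p => by rw [hΦ]
    | one => simp
    | mul x y _ _ hx hy => intro p; rw [map_mul, Equiv.Perm.mul_apply, hx, hy, mul_smul]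
    | inv x _ hx => intro p; rw [eq_inv_smul_iff, ← hx, map_inv, ← Equiv.Perm.mul_apply]; simp
  obtain ⟨t, ht⟩ := exists_forall_map_smul_eq_mul H V
  refine ⟨fun v => (Φ (t v) ((t v)⁻¹ • v, 0)).2, fun i v => ?_⟩
  simp only [ht, mul_inv_rev, mul_smul, inv_smul_smul, map_mul, Equiv.Perm.mul_apply, hΦ, hfst,
    smul_inv_smul]

end FreeGroups

namespace ForestAction

open Module

variable {H V E ι B : Type*} [Group H] [MulAction H V] [MulAction H E] [MulAction H ι]

section EulerCharacteristic

variable (X : ForestAction H V E ι)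

/-- The coboundary operator, sending a function on the vertices to its increments along the
edges. -/
def coboundary : (V → ℚ) →ₗ[ℚ] E → ℚ :=
  LinearMap.funLeft ℚ ℚ X.tgt - LinearMap.funLeft ℚ ℚ X.src

/-- The space of functions on the vertices with invariant coboundary. Computing its dimension in two
ways yields the Euler characteristic. -/
def potentials : Submodule ℚ (V → ℚ) := (invariantFunctions H E).comap X.coboundary

/-- The increments of a function along the group elements `b i`, measured at one vertex of each
component. -/
noncomputable def period (b : B → H) : (V → ℚ) →ₗ[ℚ] B × ι → ℚ :=
  LinearMap.funLeft ℚ ℚ (fun q => b q.1 • X.basePoint q.2) -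
    LinearMap.funLeft ℚ ℚ fun q => X.basePoint q.2

variable {X}

theorem mem_potentials_iff {f : V → ℚ} : f ∈ X.potentials ↔ ∀ (h : H) (e : E),
    f (X.tgt (h • e)) - f (X.src (h • e)) = f (X.tgt e) - f (X.src e) :=
  mem_invariantFunctions_iff

theorem ker_coboundary :
    LinearMap.ker X.coboundary = LinearMap.range (LinearMap.funLeft ℚ ℚ X.comp) := by
  ext f
  rw [mem_range_funLeft_iff, LinearMap.mem_ker]
  refine ⟨fun hf u v huv => (X.conn u v huv).apply_eq fun e _ => ?_, fun hf => funext fun e => ?_⟩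
  · exact (sub_eq_zero.1 (congrFun hf e)).symm
  · exact sub_eq_zero.2 (hf (X.comp_tgt e))

theorem map_coboundary_potentials : X.potentials.map X.coboundary = invariantFunctions H E :=
  Submodule.map_comap_eq_of_surjective
    (fun ω => (X.exists_potential ω).imp fun _ hf => funext hf) _

theorem potentials_inf_ker_coboundary :
    X.potentials ⊓ LinearMap.ker X.coboundary =
      LinearMap.range (LinearMap.funLeft ℚ ℚ X.comp) := by
  rw [potentials, inf_eq_right.2 (LinearMap.ker_le_comap _), ker_coboundary]

instance [Finite (orbitRel.Quotient H E)] [Finite ι] : FiniteDimensional ℚ X.potentials := by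
  refine Module.Finite.of_fg (Submodule.fg_of_fg_map_of_fg_inf_ker X.coboundary ?_ ?_)
  · rw [map_coboundary_potentials]
    exact Module.Finite.iff_fg.1 inferInstance
  · rw [potentials_inf_ker_coboundary]
    exact Module.Finite.iff_fg.1 inferInstance

theorem finrank_potentials [Finite (orbitRel.Quotient H E)] [Finite ι] :
    finrank ℚ X.potentials = Nat.card (orbitRel.Quotient H E) + Nat.card ι := by
  rw [← finrank_map_add_finrank_inf_ker _ X.coboundary, map_coboundary_potentials,
    potentials_inf_ker_coboundary, finrank_invariantFunctions,
    finrank_range_funLeft X.comp_surjective]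

theorem apply_smul_sub_eq_of_mem_potentials {f : V → ℚ} (hf : f ∈ X.potentials) (h : H) {u v : V}
    (huv : X.comp u = X.comp v) : f (h • u) - f u = f (h • v) - f v := by
  refine (X.conn u v huv).apply_eq (f := fun w => f (h • w) - f w) fun e _ => ?_
  have := mem_potentials_iff.1 hf h e
  rw [X.src_smul, X.tgt_smul] at this
  linarith

theorem potentials_inf_ker_period {b : B → H} (hb : Subgroup.closure (Set.range b) = ⊤) :
    X.potentials ⊓ LinearMap.ker (X.period b) = invariantFunctions H V := by
  ext f
  refine ⟨fun ⟨hf, hker⟩ => mem_invariantFunctions_of_closure_eq_top hb fun i v => ?_,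
    fun hf => ?_⟩
  · rw [← sub_eq_zero, ← apply_smul_sub_eq_of_mem_potentials hf (b i)
      (X.comp_basePoint (X.comp v))]
    exact congrFun hker (i, X.comp v)
  · rw [mem_invariantFunctions_iff] at hf
    refine ⟨mem_potentials_iff.2 fun h e => ?_, funext fun q => sub_eq_zero.2 (hf _ _)⟩
    rw [X.src_smul, X.tgt_smul, hf, hf]

theorem map_period_potentials [IsCancelSMul H V] (b : FreeGroupBasis B H) :
    X.potentials.map (X.period b) = ⊤ := by
  refine eq_top_iff.2 fun φ _ => ?_
  obtain ⟨f, hf⟩ := exists_forall_basis_smul_eq_add b fun i v => φ (i, X.comp v)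
  refine ⟨f, mem_invariantFunctions_of_closure_eq_top (closure_range_freeGroupBasis b)
    fun i e => ?_, funext fun q => ?_⟩
  · change f (X.tgt (b i • e)) - f (X.src (b i • e)) = f (X.tgt e) - f (X.src e)
    rw [X.src_smul, X.tgt_smul, hf, hf, X.comp_tgt]
    ring
  · change f (b q.1 • _) - f _ = φ q
    rw [hf, add_sub_cancel_left, X.comp_basePoint]

theorem finrank_map_period_add (X : ForestAction H V E ι) [Finite (orbitRel.Quotient H E)]
    [Finite ι] {b : B → H} (hb : Subgroup.closure (Set.range b) = ⊤) :
    finrank ℚ (X.potentials.map (X.period b)) + Nat.card (orbitRel.Quotient H V) =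
      Nat.card (orbitRel.Quotient H E) + Nat.card ι := by
  have := X.finite_orbits_vertices
  rw [← finrank_potentials (X := X), ← finrank_map_add_finrank_inf_ker _ (X.period b),
    potentials_inf_ker_period hb, finrank_invariantFunctions]

theorem card_orbits_edges_add_le (X : ForestAction H V E ι) [Finite (orbitRel.Quotient H E)]
    [Finite ι] [Finite B] {b : B → H} (hb : Subgroup.closure (Set.range b) = ⊤) :
    Nat.card (orbitRel.Quotient H E) + Nat.card ι ≤
      Nat.card B * Nat.card ι + Nat.card (orbitRel.Quotient H V) := by
  have := Fintype.ofFinite (B × ι)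
  rw [← X.finrank_map_period_add hb, ← Nat.card_prod, Nat.card_eq_fintype_card (α := B × ι),
    ← finrank_fintype_fun_eq_card ℚ]
  gcongr
  exact Submodule.finrank_le _

theorem finite_of_freeGroupBasis (X : ForestAction H V E ι) [IsCancelSMul H V]
    [Finite (orbitRel.Quotient H E)] [Finite ι] [Nonempty ι] (b : FreeGroupBasis B H) :
    Finite B := by
  have : Module.Finite ℚ (B × ι → ℚ) := by
    rw [Module.finite_def, ← map_period_potentials (X := X) b]
    exact (Module.Finite.iff_fg.1 inferInstance).map _
  have : Module.Finite ℚ (B × ι →₀ ℚ) :=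
    Module.Finite.of_injective Finsupp.lcoeFun DFunLike.coe_injective
  have : Finite (B × ι) := by simpa [not_subsingleton ℚ] using this
  exact Finite.of_surjective (Prod.fst : B × ι → B) Prod.fst_surjective

theorem card_orbits_edges_add (X : ForestAction H V E ι) [IsCancelSMul H V]
    [Finite (orbitRel.Quotient H E)] [Finite ι] [Finite B] (b : FreeGroupBasis B H) :
    Nat.card (orbitRel.Quotient H E) + Nat.card ι =
      Nat.card B * Nat.card ι + Nat.card (orbitRel.Quotient H V) := by
  have := Fintype.ofFinite (B × ι)
  rw [← X.finrank_map_period_add (closure_range_freeGroupBasis b), map_period_potentials,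
    finrank_top, finrank_fintype_fun_eq_card, ← Nat.card_eq_fintype_card, Nat.card_prod]

end EulerCharacteristic

end ForestAction

section Rank

variable {H B : Type*} [Group H]

theorem grank_le_card [Finite B] {b : B → H} (hb : Subgroup.closure (Set.range b) = ⊤) :
    grank H ≤ Nat.card B := by
  classical
  have := Fintype.ofFinite B
  calc grank H ≤ (Finset.univ.image b).card := sInf_le ⟨Finset.univ.image b, by simpa using hb, rfl⟩
    _ ≤ Nat.card B := by
      rw [Nat.card_eq_fintype_card]
      exact_mod_cast Finset.card_image_le

theorem exists_finset_closure_eq_top_grank_eq (H : Type*) [Group H] [Group.FG H] :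
    ∃ s : Finset H, Subgroup.closure (s : Set H) = ⊤ ∧ grank H = s.card := by
  obtain ⟨s, hs⟩ := Group.FG.out (G := H)
  exact csInf_mem (s := {n : ℕ∞ | ∃ s : Finset H, Subgroup.closure (s : Set H) = ⊤ ∧ n = s.card})
    ⟨s.card, s, hs, rfl⟩

end Rank

namespace ForestAction

open EdgeGraph

variable {H V E ι : Type*} [Group H] [MulAction H V] [MulAction H E] [MulAction H ι]
  [LinearOrder E] (X : ForestAction H V E ι) [X.IsOrdered] [IsCancelSMul H V] [Infinite H]
  [Finite ι] [Finite (orbitRel.Quotient H E)]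

theorem ncard_bridges_add_card_le [Group.FG H] :
    (((orbitSet H (X.bridges Set.univ)).ncard + Nat.card ι : ℕ) : ℕ∞) ≤ grank H * Nat.card ι := by
  obtain ⟨s, hs, hrank⟩ := exists_finset_closure_eq_top_grank_eq H
  have hle := X.card_orbits_edges_add_le (b := ((↑) : s → H)) (by simpa using hs)
  rw [← X.card_orbits_vertices_add, Nat.card_eq_fintype_card (α := s), Fintype.card_coe] at hle
  rw [hrank]
  norm_cast
  omega

theorem grank_mul_card_le [IsFreeGroup H] [Nonempty ι] :
    grank H * Nat.card ι ≤ ((orbitSet H (X.bridges Set.univ)).ncard + Nat.card ι : ℕ) := by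
  have hfin := X.finite_of_freeGroupBasis (IsFreeGroup.basis H)
  have heq := X.card_orbits_edges_add (IsFreeGroup.basis H)
  rw [← X.card_orbits_vertices_add] at heq
  calc grank H * Nat.card ι ≤ Nat.card (IsFreeGroup.Generators H) * Nat.card ι := by
        gcongr
        exact grank_le_card (closure_range_freeGroupBasis (IsFreeGroup.basis H))
    _ = _ := by
        norm_cast
        omega

end ForestAction

/-! ### Orders on free groups -/

section LeftOrders

theorem exists_linearOrder_of_add_le {G : Type*} [Group G] (ω : G → ℤ)
    (hmul : ∀ x y, ω x + ω y ≤ ω (x * y) + 1) (hinv : ∀ x, ω x⁻¹ = -ω x)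
    (hne : ∀ x, x ≠ 1 → ω x ≠ 0) :
    ∃ _ : LinearOrder G, ∀ a b c : G, b < c → a * b < a * c := by
  classical
  have hone : ω 1 = 0 := by
    have := hinv 1
    rw [inv_one] at this
    omega
  let r : G → G → Prop := fun x y => 0 < ω (x⁻¹ * y)
  have hr : IsStrictTotalOrder G r :=
    { irrefl := fun x => by simp [r, hone]
      trans := fun x y z hxy hyz => by
        have := hmul (x⁻¹ * y) (y⁻¹ * z)
        rw [mul_assoc, mul_inv_cancel_left] at this
        simp only [r] at *
        omega
      trichotomous := fun x y hxy hyx => by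
        by_contra hxy'
        have hswap := hinv (x⁻¹ * y)
        have := hne _ (mt inv_mul_eq_one.1 hxy')
        rw [mul_inv_rev, inv_inv] at hswap
        simp only [r] at *
        omega }
  refine ⟨linearOrderOfSTO r, fun a b c hbc => ?_⟩
  change 0 < ω ((a * b)⁻¹ * (a * c))
  rwa [mul_inv_rev, mul_assoc, inv_mul_cancel_left]

/-- The sign of the comparison of `a` with `b`, positive if `a` is the smaller one. -/
def turn {C : Type*} [LinearOrder C] (a b : C) : ℤ := if a < b then 1 else if b < a then -1 else 0

section Turn

variable {C : Type*} [LinearOrder C]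

theorem turn_swap (a b : C) : turn b a = -turn a b := by
  rcases lt_trichotomy a b with h | rfl | h
  · simp [turn, h, h.not_gt]
  · simp [turn]
  · simp [turn, h, h.not_gt]

theorem odd_turn {a b : C} (h : a ≠ b) : Odd (turn a b) := by
  rcases h.lt_or_gt with h | h <;> simp [turn, h, h.not_gt]

theorem turn_add_turn_le (a b c : C) : turn a b + turn b c ≤ turn a c + 1 := by
  simp only [turn]
  split_ifs <;> first | omega | order

end Turn

open FreeGroup

theorem exists_prefix_eq_append {α : Type*} (L M : List α) :
    ∃ p a b, L = p ++ a ∧ M = p ++ b ∧ ∀ x ∈ a.head?, x ∉ b.head? := by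
  induction L generalizing M with
  | nil => exact ⟨[], [], M, rfl, rfl, by simp⟩
  | cons x L ih =>
    by_cases hx : x ∈ M.head?
    · obtain ⟨M, rfl⟩ := List.head?_eq_some_iff.1 hx
      obtain ⟨p, a, b, rfl, rfl, h⟩ := ih M
      exact ⟨x :: p, a, b, rfl, rfl, h⟩
    · exact ⟨[], x :: L, M, rfl, rfl, by simpa using hx⟩

theorem isReduced_invRev_append {S : Type*} {a b : List (S × Bool)} (ha : IsReduced (invRev a))
    (hb : IsReduced b) (hab : ∀ x ∈ a.head?, x ∉ b.head?) : IsReduced (invRev a ++ b) := by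
  refine List.isChain_append.2 ⟨ha, hb, fun x hx y hy hxy => ?_⟩
  cases a with
  | nil => simp [invRev] at hx
  | cons z a =>
    obtain rfl : (z.1, !z.2) = x := by simpa [invRev] using hx
    by_contra hne
    obtain rfl : z = y := Prod.ext hxy (by simpa using hne)
    exact hab z rfl hy

theorem exists_toWord_mul_eq {S : Type*} [DecidableEq S] (x y : FreeGroup S) : ∃ p a b,
    x.toWord = invRev a ++ p ∧ y.toWord = invRev p ++ b ∧ (x * y).toWord = invRev a ++ b := by
  obtain ⟨p, a, b, hx, hy, hab⟩ := exists_prefix_eq_append (invRev x.toWord) y.toWord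
  have hx : x.toWord = invRev a ++ invRev p := by rw [← invRev_append, ← hx, invRev_invRev]
  refine ⟨invRev p, a, b, hx, by rw [hy, invRev_invRev], ?_⟩
  have hred : IsReduced (invRev a ++ b) := isReduced_invRev_append
    ((hx ▸ isReduced_toWord).infix (List.prefix_append _ _).isInfix)
    ((hy ▸ isReduced_toWord).infix (List.suffix_append _ _).isInfix) hab
  rw [← hred.reduce_eq, ← toWord_mk]
  congr 1
  rw [← mk_toWord (x := x), ← mk_toWord (x := y), hx, hy]
  simp only [← mul_mk, ← inv_mk, mul_assoc, inv_mul_cancel_left]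

variable {S : Type*} [LinearOrder (Option (S × Bool))]

/-- The weight of the path of the Cayley tree spelled by a word, without the turn at its first
vertex. Each letter contributes its sign, and each vertex contributes the turn from the letter
leading back to the letter leading on, where `none` stands for the absence of a letter. -/
def tailWeight : List (S × Bool) → ℤ
  | [] => 0
  | x :: L => cond x.2 1 (-1) + turn (some (x.1, !x.2)) L.head? + tailWeight L

/-- The weight of the path spelled by a word; see `tailWeight`. -/
def weight (L : List (S × Bool)) : ℤ := turn none L.head? + tailWeight L

theorem weight_invRev_append (L M : List (S × Bool)) :
    weight (invRev L ++ M) = -tailWeight L + turn L.head? M.head? + tailWeight M := by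
  induction L generalizing M with
  | nil => simp [weight, tailWeight]
  | cons x L ih =>
    rw [invRev_cons, List.append_assoc, ih, turn_swap]
    rcases x with ⟨s, _ | _⟩ <;> simp [invRev, tailWeight] <;> ring

theorem weight_invRev (L : List (S × Bool)) : weight (invRev L) = -weight L := by
  rw [← List.append_nil (invRev L), weight_invRev_append, weight, List.head?_nil,
    turn_swap none L.head?, tailWeight]
  ring

theorem even_tailWeight_of_isReduced {L : List (S × Bool)} (hL : IsReduced L) :
    Even (tailWeight L) := by
  induction L with
  | nil => simp [tailWeight]
  | cons x L ih =>
    refine Even.add (Odd.add_odd (by cases x.2 <;> simp) (odd_turn fun h => ?_))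
      (ih (hL.infix (List.suffix_cons _ _).isInfix))
    cases L with
    | nil => simp at h
    | cons y L =>
      obtain rfl : (x.1, !x.2) = y := by simpa using h
      simpa using (isReduced_cons_cons.1 hL).1 rfl

theorem weight_ne_zero_of_isReduced {L : List (S × Bool)} (hL : IsReduced L) (hne : L ≠ []) :
    weight L ≠ 0 := by
  have hodd : Odd (weight L) := (odd_turn (by simpa [eq_comm] using hne)).add_even
    (even_tailWeight_of_isReduced hL)
  rintro h
  simp [h] at hodd

/-- The three paths between three vertices of the Cayley tree form a tripod, so that their signed
weights cancel except at its center. -/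
theorem exists_linearOrder_freeGroup (S : Type*) :
    ∃ _ : LinearOrder (FreeGroup S), ∀ a b c : FreeGroup S, b < c → a * b < a * c := by
  classical
  let _ : LinearOrder (Option (S × Bool)) := linearOrderOfSTO WellOrderingRel
  refine exists_linearOrder_of_add_le (fun x => weight x.toWord) (fun x y => ?_)
    (fun x => by rw [toWord_inv, weight_invRev])
    fun x hx => weight_ne_zero_of_isReduced isReduced_toWord (mt toWord_eq_nil_iff.1 hx)
  obtain ⟨p, a, b, hx, hy, hxy⟩ := exists_toWord_mul_eq x y
  rw [hx, hy, hxy, weight_invRev_append, weight_invRev_append, weight_invRev_append]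
  linarith [turn_add_turn_le a.head? p.head? b.head?]

end LeftOrders

/-! ### The Cayley forest -/

section CayleyForest

variable {G S : Type*} [Group G] {F : Subgroup G}

/-- The edges of the Cayley graph of `G` with generators indexed by `S`: the edge `⟨g, s⟩` starts
at `g` and is labelled by `s`. -/
@[ext]
structure CayleyEdge (G S : Type*) where
  /-- The initial vertex. -/
  start : G
  /-- The index of the generator. -/
  label : S

instance : MulAction G (CayleyEdge G S) where
  smul g e := ⟨g * e.start, e.label⟩
  one_smul e := CayleyEdge.ext (one_mul e.start) rfl
  mul_smul g h e := CayleyEdge.ext (mul_assoc g h e.start) rfl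

/-- The Cayley graph of `G` with respect to elements `s i`, with an edge from `g` to `g * s i` for
all `g` and `i`. -/
def cayleyGraph (s : S → G) : EdgeGraph G (CayleyEdge G S) where
  src e := e.start
  tgt e := e.start * s e.label

open EdgeGraph in
theorem conn_cayleyGraph {s : S → G} {w : G} (hw : w ∈ Subgroup.closure (Set.range s)) (u : G) :
    (cayleyGraph s).Conn Set.univ u (u * w) := by
  induction hw using Subgroup.closure_induction generalizing u with
  | mem x hx =>
    obtain ⟨i, rfl⟩ := hx
    exact Conn.of_joins (Set.mem_univ _) ((cayleyGraph s).joins_src_tgt ⟨u, i⟩)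
  | one => simpa using Conn.refl u
  | mul x y _ _ hx hy => simpa [mul_assoc] using (hx u).trans (hy (u * x))
  | inv x _ hx => simpa using (hx (u * x⁻¹)).symm

/-- Inversion turns right multiplication by the basis into the free action of `F` on `G`. -/
theorem exists_cayleyGraph_potential (b : FreeGroupBasis S F) (ω : CayleyEdge G S → ℚ) :
    ∃ f : G → ℚ, ∀ e : CayleyEdge G S, f (e.start * b e.label) - f e.start = ω e := by
  obtain ⟨f, hf⟩ := exists_forall_basis_smul_eq_add b fun i (v : G) => -ω ⟨(b i • v)⁻¹, i⟩
  refine ⟨fun g => f g⁻¹, fun e => ?_⟩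
  have hfe := hf e.label (e.start * b e.label)⁻¹
  have hsmul : b e.label • (e.start * (b e.label : G))⁻¹ = e.start⁻¹ := by
    rw [Subgroup.smul_def, smul_eq_mul]
    group
  rw [hsmul, inv_inv] at hfe
  linarith

/-- Identify every coset of `F` with `F` by a representative, and compare edges of the same coset
first by their initial vertices. -/
theorem exists_linearOrder_cayleyEdge (S : Type*) [LinearOrder F]
    (hF : ∀ a b c : F, b < c → a * b < a * c) :
    ∃ _ : LinearOrder (CayleyEdge G S), ∀ (h : G) (e f : CayleyEdge G S),
      (e.start : G ⧸ F) = f.start → e < f → h • e < h • f := by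
  classical
  let _ : LinearOrder (G ⧸ F) := linearOrderOfSTO WellOrderingRel
  let _ : LinearOrder S := linearOrderOfSTO WellOrderingRel
  have hrep : ∀ g : G, (g : G ⧸ F).out⁻¹ * g ∈ F := fun g =>
    QuotientGroup.eq.1 (Quotient.out_eq (g : G ⧸ F))
  let p : G → F := fun g => ⟨(g : G ⧸ F).out⁻¹ * g, hrep g⟩
  let key : CayleyEdge G S → (G ⧸ F) ×ₗ (F ×ₗ S) := fun e =>
    toLex (e.start, toLex (p e.start, e.label))
  have hkey : Function.Injective key := by
    intro e f h
    simp only [key, EmbeddingLike.apply_eq_iff_eq, Prod.mk.injEq, p, Subtype.mk.injEq] at h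
    obtain ⟨hcoset, hstart, hlabel⟩ := h
    rw [hcoset] at hstart
    exact CayleyEdge.ext (mul_left_cancel hstart) hlabel
  refine ⟨LinearOrder.lift' key hkey, fun h e f hef hlt => ?_⟩
  have hhef : ((h * e.start : G) : G ⧸ F) = ((h * f.start : G) : G ⧸ F) :=
    congrArg (fun q : G ⧸ F => h • q) hef
  obtain ⟨a, hae, haf⟩ : ∃ a : F, p (h * e.start) = a * p e.start ∧
      p (h * f.start) = a * p f.start := by
    refine ⟨p (h * e.start) * (p e.start)⁻¹, by simp, Subtype.ext ?_⟩
    simp only [p, Subgroup.coe_mul, Subgroup.coe_inv, hhef, hef]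
    group
  change key e < key f at hlt
  change key ⟨h * e.start, e.label⟩ < key ⟨h * f.start, f.label⟩
  simp only [key, Prod.Lex.toLex_lt_toLex, hef, hhef, hae, haf, lt_irrefl, true_and, false_or,
    mul_right_inj] at hlt ⊢
  exact hlt.imp_left (hF _ _ _)

/-- The Cayley graph of `G` with respect to a basis of `F`, a disjoint union of copies of the Cayley
tree of `F` indexed by the cosets of `F`. -/
def cayleyForest (b : FreeGroupBasis S F) : ForestAction G G (CayleyEdge G S) (G ⧸ F) where
  toEdgeGraph := cayleyGraph fun i => (b i : G)
  comp g := g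
  src_smul _ _ := rfl
  tgt_smul h e := mul_assoc h e.start _
  comp_smul _ _ := rfl
  comp_tgt e := QuotientGroup.mk_mul_of_mem e.start (b e.label).2
  comp_surjective := QuotientGroup.mk_surjective
  conn u v huv := by
    have hclosure : Subgroup.closure (Set.range fun i => (b i : G)) = F := by
      have := congrArg (Subgroup.map F.subtype) (closure_range_freeGroupBasis b)
      rwa [MonoidHom.map_closure, ← Set.range_comp, ← MonoidHom.range_eq_map,
        Subgroup.range_subtype] at this
    have hconn := conn_cayleyGraph (hclosure.ge (QuotientGroup.eq.1 huv)) u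
    rwa [mul_inv_cancel_left] at hconn
  exists_potential := exists_cayleyGraph_potential b

theorem exists_linearOrder_cayleyForest_isOrdered (b : FreeGroupBasis S F) :
    ∃ _ : LinearOrder (CayleyEdge G S), (cayleyForest b).IsOrdered := by
  obtain ⟨_, hS⟩ := exists_linearOrder_freeGroup S
  let _ : LinearOrder F := LinearOrder.lift' b.repr b.repr.injective
  have hF : ∀ x y z : F, y < z → x * y < x * z := fun x y z hyz => by
    change b.repr (x * y) < b.repr (x * z)
    rw [map_mul, map_mul]
    exact hS _ _ _ hyz
  obtain ⟨o, ho⟩ := exists_linearOrder_cayleyEdge S hF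
  exact ⟨o, ⟨ho⟩⟩

end CayleyForest

/-! ### Cores of subgroups -/

section SubgroupOrbits

variable {G H M : Type*} [Group G] [Group H] [MulAction G M] [MulAction H M]

theorem finite_orbits_of_finite_orbitSet (p : SubMulAction H M)
    (hp : (orbitSet H (p : Set M)).Finite) : Finite (orbitRel.Quotient H p) := by
  refine (Set.finite_range_iff (orbitMap_injective (f := p.subtype) Subtype.val_injective)).1 ?_
  rw [range_orbitMap]
  exact hp.subset (Set.image_mono (Subtype.range_val (s := (p : Set M))).le)

/-- The pair of orbits, under two subgroups, that contain an orbit under their intersection. -/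
def orbitPair (A B : Subgroup G) (M : Type*) [MulAction G M] :
    orbitRel.Quotient ↥(A ⊓ B) M → orbitRel.Quotient A M × orbitRel.Quotient B M :=
  Quotient.lift (fun a => (Quotient.mk (orbitRel A M) a, Quotient.mk (orbitRel B M) a)) (by
    rintro a b ⟨h, hh⟩
    exact Prod.ext (orbit_mk_eq_iff.2 ⟨⟨h, h.2.1⟩, hh⟩) (orbit_mk_eq_iff.2 ⟨⟨h, h.2.2⟩, hh⟩))

theorem orbitPair_injective [IsCancelSMul G M] (A B : Subgroup G) :
    Function.Injective (orbitPair A B M) := by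
  rintro ⟨x⟩ ⟨y⟩ hxy
  obtain ⟨a, ha⟩ := orbit_mk_eq_iff.1 (congrArg Prod.fst hxy)
  obtain ⟨b, hb⟩ := orbit_mk_eq_iff.1 (congrArg Prod.snd hxy)
  have hab : (a : G) = b := IsCancelSMul.right_cancel _ _ y (ha.trans hb.symm)
  exact orbit_mk_eq_iff.2 ⟨⟨a, a.2, hab ▸ b.2⟩, ha⟩

theorem mapsTo_orbitPair (A B : Subgroup G) {P Q R : Set M} (hR : R ⊆ P ∩ Q) :
    Set.MapsTo (orbitPair A B M) (orbitSet ↥(A ⊓ B) R) (orbitSet A P ×ˢ orbitSet B Q) := by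
  rintro _ ⟨a, ha, rfl⟩
  exact ⟨⟨a, (hR ha).1, rfl⟩, ⟨a, (hR ha).2, rfl⟩⟩

end SubgroupOrbits

namespace ForestAction

open EdgeGraph

variable {G V E ι : Type*} [Group G] [MulAction G V] [MulAction G E] [MulAction G ι]

/-- The set of edges `P` spans, in every component, a tree containing the base point, the union of
these trees is `H`-invariant, and the quotient by `H` is finite. -/
structure IsCore (X : ForestAction G V E ι) (H : Subgroup G) (P : Set E) : Prop where
  smul_mem : ∀ h ∈ H, ∀ e ∈ P, h • e ∈ P
  conn_smul_basePoint : ∀ h ∈ H, ∀ x, X.Conn P (X.basePoint (h • x)) (h • X.basePoint x)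
  conn_src : ∀ e ∈ P, X.Conn P (X.basePoint (X.comp (X.src e))) (X.src e)
  finite : (orbitSet H P).Finite

variable {X : ForestAction G V E ι} {H A B : Subgroup G} {P Q : Set E} {u v : V}

namespace IsCore

/-- The edges of a core as an invariant set. -/
def edges (hP : X.IsCore H P) : SubMulAction H E where
  carrier := P
  smul_mem' h _ he := hP.smul_mem h h.2 _ he

/-- The vertices of a core as an invariant set. -/
def vertices (hP : X.IsCore H P) : SubMulAction H V where
  carrier := {v | X.Conn P (X.basePoint (X.comp v)) v}
  smul_mem' h v hv := by
    change X.Conn P (X.basePoint (X.comp ((h : G) • v))) ((h : G) • v)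
    rw [X.comp_smul]
    exact (hP.conn_smul_basePoint h h.2 _).trans
      (conn_smul_of_comp_eq _ (fun e he _ => hP.smul_mem h h.2 e he) hv)

theorem mem_vertices_of_conn (hP : X.IsCore H P) (hu : u ∈ hP.vertices) (h : X.Conn P u v) :
    v ∈ hP.vertices := by
  change X.Conn P (X.basePoint (X.comp v)) v
  rw [← comp_eq_of_conn h]
  exact Conn.trans hu h

/-- The graph spanned by a core. -/
def graph (hP : X.IsCore H P) : EdgeGraph hP.vertices hP.edges where
  src e := ⟨X.src e, hP.conn_src e e.2⟩
  tgt e := ⟨X.tgt e, hP.mem_vertices_of_conn (hP.conn_src e e.2)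
    (Conn.of_joins e.2 (X.joins_src_tgt e))⟩

theorem conn_graph (hP : X.IsCore H P) (u : hP.vertices) (h : X.Conn (P ∩ Q) u v) :
    ∃ hv : v ∈ hP.vertices, hP.graph.Conn (Subtype.val ⁻¹' Q) u ⟨v, hv⟩ := by
  induction h with
  | refl => exact ⟨u.2, Conn.refl _⟩
  | tail _ hbc ih =>
    obtain ⟨e, he, hj⟩ := hbc
    obtain ⟨hb, hub⟩ := ih
    refine ⟨hP.mem_vertices_of_conn hb (Conn.of_joins he.1 hj),
      hub.tail (e := ⟨e, he.1⟩) he.2 ?_⟩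
    rcases hj with ⟨rfl, rfl⟩ | ⟨rfl, rfl⟩
    · exact Or.inl ⟨rfl, rfl⟩
    · exact Or.inr ⟨rfl, rfl⟩

theorem image_cluster_graph (hP : X.IsCore H P) (Q : Set E) (v : hP.vertices) :
    Subtype.val '' hP.graph.cluster (Subtype.val ⁻¹' Q) v = X.cluster (P ∩ Q) v := by
  refine Set.Subset.antisymm ?_ fun w hw => ?_
  · rintro _ ⟨w, hw, rfl⟩
    exact Conn.map (X := hP.graph) (P := Subtype.val ⁻¹' Q) (f := Subtype.val) (g := Subtype.val)
      (fun _ => rfl) (fun _ => rfl) (fun e he => ⟨e.2, he⟩) hw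
  · obtain ⟨hw', hconn⟩ := hP.conn_graph v hw
    exact ⟨⟨w, hw'⟩, hconn, rfl⟩

/-- The action on the forest spanned by a core. -/
def forest (hP : X.IsCore H P) : ForestAction H hP.vertices hP.edges ι where
  toEdgeGraph := hP.graph
  comp v := X.comp v
  src_smul h e := Subtype.ext (X.src_smul h e)
  tgt_smul h e := Subtype.ext (X.tgt_smul h e)
  comp_smul h v := X.comp_smul h v
  comp_tgt e := X.comp_tgt e
  comp_surjective x := ⟨⟨X.basePoint x, by
    change X.Conn P (X.basePoint (X.comp (X.basePoint x))) (X.basePoint x)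
    rw [X.comp_basePoint]
    exact Conn.refl _⟩, X.comp_basePoint x⟩
  conn u v huv := by
    have hu : X.Conn P (X.basePoint (X.comp u)) u := u.2
    have hv : X.Conn P (X.basePoint (X.comp v)) v := v.2
    rw [← huv] at hv
    have huv : X.Conn (P ∩ Set.univ) u v := by
      rw [Set.inter_univ]
      exact hu.symm.trans hv
    exact (hP.conn_graph u huv).2
  exists_potential ω := by
    obtain ⟨f, hf⟩ := X.exists_potential (Function.extend Subtype.val ω 0)
    exact ⟨fun v => f v, fun e => (hf e).trans (Subtype.val_injective.extend_apply ω 0 e)⟩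

instance (hP : X.IsCore H P) [IsCancelSMul G V] : IsCancelSMul H hP.vertices where
  right_cancel' g h v hgh :=
    Subtype.ext (IsCancelSMul.right_cancel (g : G) h (v : V) (congrArg Subtype.val hgh))

theorem inter [IsCancelSMul G V] (hP : X.IsCore A P) (hQ : X.IsCore B Q) :
    X.IsCore (A ⊓ B) (P ∩ Q) where
  smul_mem h hh e he := ⟨hP.smul_mem h hh.1 e he.1, hQ.smul_mem h hh.2 e he.2⟩
  conn_smul_basePoint h hh x :=
    X.isAcyclic.conn_inter (hP.conn_smul_basePoint h hh.1 x) (hQ.conn_smul_basePoint h hh.2 x)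
  conn_src e he := X.isAcyclic.conn_inter (hP.conn_src e he.1) (hQ.conn_src e he.2)
  finite :=
    have := X.isCancelSMul_edge
    .of_injOn (mapsTo_orbitPair A B subset_rfl) (orbitPair_injective A B).injOn
      (hP.finite.prod hQ.finite)

section Ordered

variable [LinearOrder E]

instance [X.IsOrdered] (hP : X.IsCore H P) : hP.forest.IsOrdered where
  smul_lt_smul h e f hef hlt := IsOrdered.smul_lt_smul (X := X) (h : G) (e : E) (f : E) hef hlt

theorem image_bridges_forest (hP : X.IsCore H P) :
    Subtype.val '' hP.forest.bridges Set.univ = X.bridges P := by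
  have hcluster : ∀ (e : hP.edges) (v : hP.vertices),
      (hP.graph.cluster (Set.univ ∩ Set.Iio e) v).Infinite ↔
        (X.cluster (P ∩ Set.Iio (e : E)) v).Infinite := fun e v => by
    rw [← hP.image_cluster_graph, Set.infinite_image_iff Subtype.val_injective.injOn,
      Set.univ_inter]
    rfl
  ext e
  refine ⟨?_, fun ⟨he, hs, ht⟩ => ?_⟩
  · rintro ⟨e, ⟨-, hs, ht⟩, rfl⟩
    exact ⟨e.2, (hcluster e _).1 hs, (hcluster e _).1 ht⟩
  · exact ⟨⟨e, he⟩, ⟨Set.mem_univ _, (hcluster ⟨e, he⟩ (hP.graph.src ⟨e, he⟩)).2 hs,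
      (hcluster ⟨e, he⟩ (hP.graph.tgt ⟨e, he⟩)).2 ht⟩, rfl⟩

theorem ncard_orbitSet_bridges_forest (hP : X.IsCore H P) :
    (orbitSet H (hP.forest.bridges Set.univ)).ncard = (orbitSet H (X.bridges P)).ncard := by
  rw [← hP.image_bridges_forest, ← Set.ncard_image_of_injective _
    (orbitMap_injective (f := hP.edges.subtype) Subtype.val_injective), orbitMap_image_orbitSet]
  rfl

section Counting

variable [X.IsOrdered] [IsCancelSMul G V] [Infinite H] [Finite ι]

theorem ncard_bridges_add_card_le [Group.FG H] (hP : X.IsCore H P) :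
    (((orbitSet H (X.bridges P)).ncard + Nat.card ι : ℕ) : ℕ∞) ≤ grank H * Nat.card ι := by
  have := finite_orbits_of_finite_orbitSet hP.edges hP.finite
  rw [← hP.ncard_orbitSet_bridges_forest]
  exact hP.forest.ncard_bridges_add_card_le

theorem grank_mul_card_le [IsFreeGroup H] [Nonempty ι] (hP : X.IsCore H P) :
    grank H * Nat.card ι ≤ ((orbitSet H (X.bridges P)).ncard + Nat.card ι : ℕ) := by
  have := finite_orbits_of_finite_orbitSet hP.edges hP.finite
  rw [← hP.ncard_orbitSet_bridges_forest]
  exact hP.forest.grank_mul_card_le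

end Counting

theorem ncard_bridges_inter_le [IsCancelSMul G V] (hP : X.IsCore A P) (hQ : X.IsCore B Q) :
    (orbitSet ↥(A ⊓ B) (X.bridges (P ∩ Q))).ncard ≤
      (orbitSet A (X.bridges P)).ncard * (orbitSet B (X.bridges Q)).ncard := by
  have := X.isCancelSMul_edge
  have hsub : X.bridges (P ∩ Q) ⊆ X.bridges P ∩ X.bridges Q := Set.subset_inter
    (bridges_mono Set.inter_subset_left) (bridges_mono Set.inter_subset_right)
  rw [← Set.ncard_prod]
  exact Set.ncard_le_ncard_of_injOn _ (mapsTo_orbitPair A B hsub) (orbitPair_injective A B).injOn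
    ((hP.finite.subset (Set.image_mono fun _ he => he.1)).prod
      (hQ.finite.subset (Set.image_mono fun _ he => he.1)))

end Ordered

end IsCore

theorem conn_smul_basePoint_of_mem_closure {T : Set G}
    (hP : ∀ h ∈ Subgroup.closure T, ∀ e ∈ P, h • e ∈ P)
    (hT : ∀ t ∈ T, ∀ x, X.Conn P (X.basePoint (t • x)) (t • X.basePoint x)) {h : G}
    (hh : h ∈ Subgroup.closure T) (x : ι) :
    X.Conn P (X.basePoint (h • x)) (h • X.basePoint x) := by
  induction hh using Subgroup.closure_induction generalizing x with
  | mem t ht => exact hT t ht x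
  | one => simpa using Conn.refl _
  | mul a b ha _ hca hcb =>
    rw [mul_smul, mul_smul]
    exact (hca (b • x)).trans (conn_smul_of_comp_eq a (fun e he _ => hP a ha e he) (hcb x))
  | inv a ha hca =>
    have := conn_smul_of_comp_eq a⁻¹ (fun e he _ => hP a⁻¹ (inv_mem ha) e he) (hca (a⁻¹ • x))
    simpa using this.symm

open Pointwise in
theorem exists_finite_orbitSet_conn_smul_basePoint (X : ForestAction G V E ι) [Finite ι]
    (hH : H.FG) :
    ∃ P : Set E, (∀ h ∈ H, ∀ e ∈ P, h • e ∈ P) ∧ (orbitSet H P).Finite ∧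
      ∀ h ∈ H, ∀ x, X.Conn P (X.basePoint (h • x)) (h • X.basePoint x) := by
  obtain ⟨T, rfl⟩ := hH
  have hpath : ∀ (t : G) (x : ι),
      ∃ Q : Set E, Q.Finite ∧ X.Conn Q (X.basePoint (t • x)) (t • X.basePoint x) := by
    intro t x
    obtain ⟨Q, -, hQ⟩ := (X.conn (X.basePoint (t • x)) (t • X.basePoint x) (by
      rw [X.comp_smul, X.comp_basePoint, X.comp_basePoint])).exists_finite_subset
    exact ⟨Q, hQ⟩
  choose Q hQ hconn using hpath
  set H := Subgroup.closure (T : Set G)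
  set D : Set E := ⋃ t ∈ T, ⋃ x, Q t x
  have hD : D.Finite := T.finite_toSet.biUnion fun t _ => Set.finite_iUnion (hQ t)
  have hinv : ∀ h ∈ H, ∀ e ∈ (H : Set G) • D, h • e ∈ (H : Set G) • D := by
    rintro h hh _ ⟨g, hg, e, he, rfl⟩
    exact ⟨h * g, H.mul_mem hh hg, e, he, mul_smul h g e⟩
  refine ⟨(H : Set G) • D, hinv, (hD.image (Quotient.mk (orbitRel H E))).subset ?_,
    fun h hh x => conn_smul_basePoint_of_mem_closure hinv (fun t ht x => ?_) hh x⟩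
  · rintro _ ⟨_, ⟨h, hh, e, he, rfl⟩, rfl⟩
    exact ⟨e, he, (orbit_mk_smul (⟨h, hh⟩ : H) e).symm⟩
  · exact (hconn t x).mono fun e he =>
      ⟨1, H.one_mem, e, Set.mem_biUnion ht (Set.mem_iUnion.2 ⟨x, he⟩), one_smul G e⟩

theorem exists_isCore (X : ForestAction G V E ι) [Finite ι] (hH : H.FG) : ∃ P, X.IsCore H P := by
  obtain ⟨P, hinv, hfin, hbase⟩ := X.exists_finite_orbitSet_conn_smul_basePoint hH
  let core : Set E := {e ∈ P | X.Conn P (X.basePoint (X.comp (X.src e))) (X.src e)}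
  have hcore : ∀ {x v}, X.Conn P (X.basePoint x) v → X.Conn core (X.basePoint x) v := by
    refine fun {x v} h => h.inter_conn.mono fun e he => ⟨he.1, ?_⟩
    rw [← comp_eq_of_conn he.2, X.comp_basePoint]
    exact he.2
  refine ⟨core, ?_, fun h hh x => hcore (hbase h hh x), fun e he => hcore he.2,
    hfin.subset (Set.image_mono fun e he => he.1)⟩
  rintro h hh e ⟨he, hconn⟩
  refine ⟨hinv h hh e he, ?_⟩
  rw [X.src_smul, X.comp_smul]
  exact (hbase h hh _).trans (conn_smul_of_comp_eq h (fun e he _ => hinv h hh e he) hconn)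

end ForestAction

/-! ### The bound on ranks -/

theorem infinite_of_isFreeGroup (H : Type*) [Group H] [IsFreeGroup H] [Nontrivial H] :
    Infinite H := by
  have : Nonempty (IsFreeGroup.Generators H) := by
    by_contra hempty
    rw [not_nonempty_iff] at hempty
    exact not_subsingleton H (IsFreeGroup.basis H).repr.toEquiv.subsingleton
  exact Infinite.of_injective _ (IsFreeGroup.basis H).repr.symm.injective

theorem grank_eq_zero_of_subsingleton (H : Type*) [Group H] [Subsingleton H] : grank H = 0 :=
  nonpos_iff_eq_zero.1 (sInf_le ⟨∅, Subsingleton.elim _ _, by simp⟩)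

theorem le_tsub_one_mul_of_add_le_mul {d : ℕ∞} {n w : ℕ} (h : ((w + n : ℕ) : ℕ∞) ≤ d * n) :
    (w : ℕ∞) ≤ (d - 1) * n := by
  refine (ENat.add_le_add_iff_right (ENat.natCast_ne_top n)).1 ?_
  calc (w : ℕ∞) + n = (w + n : ℕ) := by push_cast; rfl
    _ ≤ d * n := h
    _ ≤ (d - 1 + 1) * n := mul_le_mul_left le_tsub_add _
    _ = (d - 1) * n + n := by rw [add_mul, one_mul]

theorem tsub_one_mul_le_of_mul_le_add {d : ℕ∞} {n w : ℕ} (h : d * n ≤ (w + n : ℕ)) :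
    (d - 1) * n ≤ w := by
  rcases le_total d 1 with hd | hd
  · simp [tsub_eq_zero_of_le hd]
  · refine (ENat.add_le_add_iff_right (ENat.natCast_ne_top n)).1 ?_
    calc (d - 1) * n + n = (d - 1 + 1) * n := by rw [add_mul, one_mul]
      _ = d * n := by rw [tsub_add_cancel_of_le hd]
      _ ≤ (w + n : ℕ) := h
      _ = w + n := by push_cast; rfl

theorem tsub_one_le_mul_of_mul_le {a b c : ℕ∞} {n x y z : ℕ} (hn : n ≠ 0)
    (ha : ((x + n : ℕ) : ℕ∞) ≤ a * n) (hb : ((y + n : ℕ) : ℕ∞) ≤ b * n)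
    (hc : c * n ≤ (z + n : ℕ)) (hz : z ≤ x * y) :
    c - 1 ≤ n * (a - 1) * (b - 1) := by
  refine (ENat.mul_le_mul_right_iff (by exact_mod_cast hn) (ENat.natCast_ne_top n)).1 ?_
  calc (c - 1) * n ≤ z := tsub_one_mul_le_of_mul_le_add hc
    _ ≤ x * y := by exact_mod_cast hz
    _ ≤ (a - 1) * n * ((b - 1) * n) :=
      mul_le_mul' (le_tsub_one_mul_of_add_le_mul ha) (le_tsub_one_mul_of_add_le_mul hb)
    _ = n * (a - 1) * (b - 1) * n := by ring

open ForestAction in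
theorem virtually_free_hanna_neumann_free_subgroups_general
    {G : Type*} [Group G] (F : Subgroup G) [IsFreeGroup F] [F.FiniteIndex]
    (A B : Subgroup G) [IsFreeGroup ↥(A ⊓ B)] [Group.FG A] [Group.FG B] :
    grank ↥(A ⊓ B) - 1 ≤ (F.index : ℕ∞) * (grank A - 1) * (grank B - 1) := by
  cases subsingleton_or_nontrivial ↥(A ⊓ B) with
  | inl h => simp [grank_eq_zero_of_subsingleton]
  | inr h =>
    have : Infinite ↥(A ⊓ B) := infinite_of_isFreeGroup _
    have : Infinite A :=
      Infinite.of_injective _ (Subgroup.inclusion_injective (inf_le_left : A ⊓ B ≤ A))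
    have : Infinite B :=
      Infinite.of_injective _ (Subgroup.inclusion_injective (inf_le_right : A ⊓ B ≤ B))
    let X := cayleyForest (IsFreeGroup.basis F)
    obtain ⟨_, _⟩ := exists_linearOrder_cayleyForest_isOrdered (IsFreeGroup.basis F)
    obtain ⟨P, hP⟩ := X.exists_isCore ((Group.fg_iff_subgroup_fg A).1 ‹_›)
    obtain ⟨Q, hQ⟩ := X.exists_isCore ((Group.fg_iff_subgroup_fg B).1 ‹_›)
    exact tsub_one_le_mul_of_mul_le Subgroup.FiniteIndex.index_ne_zero
      hP.ncard_bridges_add_card_le hQ.ncard_bridges_add_card_le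
      (hP.inter hQ).grank_mul_card_le (hP.ncard_bridges_inter_le hQ)

/-- If `G` contains a free subgroup `F` of finite index, and `A, B` are finitely generated
free subgroups of `G`, then `r̄ank(A ∩ B) ≤ [G:F] ⬝ r̄ank(A) ⬝ r̄ank(B)`, where
`r̄ank(H) = max (0, rank H - 1)`. -/
theorem virtually_free_hanna_neumann_free_subgroups
    {G : Type*} [Group G] (F : Subgroup G) [IsFreeGroup F] [F.FiniteIndex]
    (A B : Subgroup G) [IsFreeGroup A] [IsFreeGroup B] [Group.FG A] [Group.FG B] :
    grank ↥(A ⊓ B) - 1 ≤ (F.index : ℕ∞) * (grank A - 1) * (grank B - 1) := by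
  have : IsFreeGroup ↥(A ⊓ B) :=
    IsFreeGroup.ofMulEquiv (Subgroup.subgroupOfEquivOfLe (inf_le_left : A ⊓ B ≤ A))
  exact virtually_free_hanna_neumann_free_subgroups_general F A B
end
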